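/- arXiv:1202.0874 — 3 statements merged into one kernel-verified Lean document; each statement's English description precedes it below -/
import Mathlib

section
/- Let p, q, a, b, c be positive integers and let s be a complex number with Re(s) > 1. Then S_{PU(4)}(p,q,a,b,c,s) = (1/4)(J₀ − J₁ + J₂ − J₃), where: J₀ := 2(−1)^p Σ_{j=0}^{⌊p/2⌋} ζ(2j) Σ_{ω=0}^{p−2j} C(ω+a−1,ω) C(p+c−2j−ω−1,c−1) T(q+a+ω,s,p+b+c−2j−ω;1,1) + 2(−1)^{p+a} Σ_{j=0}^{⌊c/2⌋} ζ(2j) Σ_{ω=0}^{c−2j} C(ω+a−1,ω) C(p+c−2j−ω−1,p−1) T(q,s+a+ω,p+b+c−2j−ω;1,1) + 2(−1)^p Σ_{j=0}^{⌊a/2⌋} ζ(2j) Σ_{ω=0}^{p−1} C(ω+a−2j,ω) C(p+c−2−ω,c−1) T(q+a−2j+ω+1,s,p+b+c−1−ω;1,1) + 2(−1)^{p+a} Σ_{j=0}^{⌊a/2⌋} ζ(2j) Σ_{ω=0}^{c−1} C(ω+a−2j,ω) C(p+c−2−ω,p−1) T(q,s+a−2j+ω+1,p+b+c−1−ω;1,1);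 J₂ := the same expression as J₀ with every ζ(2j) replaced by φ(2j) and the sign arguments of T in the four successive terms replaced by (1,−1), (−1,1), (−1,−1), (−1,−1); J₁ := (−1)^p Σ_{j=0}^{p} (−1)^j Λ(j;−i) Σ_{ω=0}^{p−j} C(ω+a−1,ω) C(p+c−j−ω−1,c−1) T(q+a+ω,s,p+b+c−j−ω;−1,i) + (−1)^{p+a} Σ_{j=0}^{c} Λ(j;−i) Σ_{ω=0}^{c−j} C(ω+a−1,ω) C(p+c−j−ω−1,p−1) T(q,s+a+ω,p+b+c−j−ω;−i,−1) + (−1)^p Σ_{j=0}^{a} Λ(j;−i) Σ_{ω=0}^{p−1} C(ω+a−j,ω) C(p+c−2−ω,c−1) T(q+a−j+ω+1,s,p+b+c−1−ω;−i,i) + (−1)^{p+a} Σ_{j=0}^{a} (−1)^j Λ(j;−i) Σ_{ω=0}^{c−1} C(ω+a−j,ω) C(p+c−2−ω,p−1) T(q,s+a−j+ω+1,p+b+c−1−ω;−i,i); and J₃ := the same expression as J₁ with every Λ(j;−i) replaced by Λ(j;i) and the sign arguments of T in the four successive terms replaced by (−1,−i), (i,−1), (i,−i), (i,−i). Here C(n,k)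 denotes the binomial coefficient. -/
open Complex Finset

/-- `φ(s) = (2^{1-s} - 1) ζ(s)` (with the convention `φ(1) = -log 2`). -/
noncomputable def phi (s : ℂ) : ℂ :=
  if s = 1 then -(Real.log 2 : ℂ) else ((2 : ℂ) ^ ((1 : ℂ) - s) - 1) * riemannZeta s

/-- The primitive Dirichlet character of conductor 4 with values in `ℂ`. -/
noncomputable def chi4 : DirichletCharacter ℂ 4 := ZMod.χ₄.ringHomComp (Int.castRingHom ℂ)

/-- `L(s,χ₄)`, equal to `Σ_{m ≥ 0} (-1)^m (2m+1)^{-s}` at the relevant arguments. -/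
noncomputable def Lchi4 (s : ℂ) : ℂ := DirichletCharacter.LFunction chi4 s

/-- `Λ(ξ;i)`. -/
noncomputable def LamI (ξ : ℕ) : ℂ :=
  if Even ξ then (2 : ℂ) ^ ((1 : ℤ) - ξ) * ((2 : ℂ) ^ ((1 : ℤ) - ξ) - 1) * riemannZeta ξ
  else 2 * Complex.I * Lchi4 ξ

/-- `Λ(ξ;-i)`. -/
noncomputable def LamNegI (ξ : ℕ) : ℂ :=
  if Even ξ then (2 : ℂ) ^ ((1 : ℤ) - ξ) * ((2 : ℂ) ^ ((1 : ℤ) - ξ) - 1) * riemannZeta ξ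
  else -(2 * Complex.I * Lchi4 ξ)

/-- `T(p,s,q;x,y) = Σ_{l ≠ 0, m ≥ 1, l+m ≠ 0} x^l y^m / (l^p m^s (l+m)^q)`. -/
noncomputable def T (p : ℕ) (s : ℂ) (q : ℕ) (x y : ℂ) : ℂ :=
  ∑' lm : ℤ × ℕ,
    if lm.1 ≠ 0 ∧ lm.1 + ((lm.2 : ℤ) + 1) ≠ 0 then
      x ^ lm.1 * y ^ (lm.2 + 1) /
        ((lm.1 : ℂ) ^ p * (((lm.2 + 1 : ℕ) : ℂ)) ^ s *
          (((lm.1 + (lm.2 : ℤ) + 1 : ℤ) : ℂ)) ^ q)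
    else 0

/-- Generic triple zeta-sum of type `A₃` with a weight `w` on `(l,m,n)`. -/
noncomputable def Z3 (w : ℕ → ℕ → ℕ → ℂ) (s₁ s₂ s₃ s₄ s₅ s₆ : ℂ) : ℂ :=
  ∑' t : ℕ × ℕ × ℕ,
    w (t.1 + 1) (t.2.1 + 1) (t.2.2 + 1) /
      ((((t.1 + 1 : ℕ) : ℂ)) ^ s₁ * (((t.2.1 + 1 : ℕ) : ℂ)) ^ s₂ *
        (((t.2.2 + 1 : ℕ) : ℂ)) ^ s₃ * (((t.1 + 1 + (t.2.1 + 1) : ℕ) : ℂ)) ^ s₄ *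
        (((t.2.1 + 1 + (t.2.2 + 1) : ℕ) : ℂ)) ^ s₅ *
        (((t.1 + 1 + (t.2.1 + 1) + (t.2.2 + 1) : ℕ) : ℂ)) ^ s₆)

/-- `ζ₃(s₁,…,s₆,0;PU(4))`: the sum is restricted to `l + 2m + 3n ≡ 2 (mod 4)`. -/
noncomputable def ZPU4 : ℂ → ℂ → ℂ → ℂ → ℂ → ℂ → ℂ :=
  Z3 (fun l m n => if (l + 2 * m + 3 * n) % 4 = 2 then 1 else 0)

/-- The twelve-term alternating combination `S` built from a six-variable zeta `Z`. -/
noncomputable def Scomb (Z : ℂ → ℂ → ℂ → ℂ → ℂ → ℂ → ℂ) (p q a b c : ℕ) (s : ℂ) : ℂ :=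
  Z p q s a b c + (-1 : ℂ) ^ p * Z p a s q c b + (-1 : ℂ) ^ (p + a) * Z q a c p s b +
    (-1 : ℂ) ^ (p + a + c) * Z q s c b a p + (-1 : ℂ) ^ q * Z a q b p s c +
    (-1 : ℂ) ^ (q + b) * Z a s b c q p + (-1 : ℂ) ^ (q + a) * Z a p b q c s +
    (-1 : ℂ) ^ (q + a + b) * Z a c b s p q + (-1 : ℂ) ^ (q + a + b + c) * Z s c p a b q +
    (-1 : ℂ) ^ (p + q + a) * Z q p c a b s + (-1 : ℂ) ^ (p + q + a + c) * Z q b c s p a +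
    (-1 : ℂ) ^ (p + q + a + b + c) * Z s b p q c a

/-- The right-hand side `J₀` (from the functional relation for `ζ₃(·;A₃)`). -/
noncomputable def J0 (p q a b c : ℕ) (s : ℂ) : ℂ :=
  2 * (-1 : ℂ) ^ p * ∑ j ∈ range (p / 2 + 1), riemannZeta (2 * j) *
      ∑ ω ∈ range (p - 2 * j + 1),
        (Nat.choose (ω + a - 1) ω : ℂ) * (Nat.choose (p + c - 2 * j - ω - 1) (c - 1) : ℂ) *
          T (q + a + ω) s (p + b + c - 2 * j - ω) 1 1 +
  2 * (-1 : ℂ) ^ (p + a) * ∑ j ∈ range (c / 2 + 1), riemannZeta (2 * j) *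
      ∑ ω ∈ range (c - 2 * j + 1),
        (Nat.choose (ω + a - 1) ω : ℂ) * (Nat.choose (p + c - 2 * j - ω - 1) (p - 1) : ℂ) *
          T q (s + a + ω) (p + b + c - 2 * j - ω) 1 1 +
  2 * (-1 : ℂ) ^ p * ∑ j ∈ range (a / 2 + 1), riemannZeta (2 * j) *
      ∑ ω ∈ range p,
        (Nat.choose (ω + a - 2 * j) ω : ℂ) * (Nat.choose (p + c - 2 - ω) (c - 1) : ℂ) *
          T (q + a - 2 * j + ω + 1) s (p + b + c - 1 - ω) 1 1 +
  2 * (-1 : ℂ) ^ (p + a) * ∑ j ∈ range (a / 2 + 1), riemannZeta (2 * j) *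
      ∑ ω ∈ range c,
        (Nat.choose (ω + a - 2 * j) ω : ℂ) * (Nat.choose (p + c - 2 - ω) (p - 1) : ℂ) *
          T q (s + ((a - 2 * j : ℕ) : ℂ) + ω + 1) (p + b + c - 1 - ω) 1 1

/-- The right-hand side `J₂` (from the functional relation for `ζ₃(·,λ₂∨;SU(4))`). -/
noncomputable def J2 (p q a b c : ℕ) (s : ℂ) : ℂ :=
  2 * (-1 : ℂ) ^ p * ∑ j ∈ range (p / 2 + 1), phi (2 * j) *
      ∑ ω ∈ range (p - 2 * j + 1),
        (Nat.choose (ω + a - 1) ω : ℂ) * (Nat.choose (p + c - 2 * j - ω - 1) (c - 1) : ℂ) *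
          T (q + a + ω) s (p + b + c - 2 * j - ω) 1 (-1) +
  2 * (-1 : ℂ) ^ (p + a) * ∑ j ∈ range (c / 2 + 1), phi (2 * j) *
      ∑ ω ∈ range (c - 2 * j + 1),
        (Nat.choose (ω + a - 1) ω : ℂ) * (Nat.choose (p + c - 2 * j - ω - 1) (p - 1) : ℂ) *
          T q (s + a + ω) (p + b + c - 2 * j - ω) (-1) 1 +
  2 * (-1 : ℂ) ^ p * ∑ j ∈ range (a / 2 + 1), phi (2 * j) *
      ∑ ω ∈ range p,
        (Nat.choose (ω + a - 2 * j) ω : ℂ) * (Nat.choose (p + c - 2 - ω) (c - 1) : ℂ) *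
          T (q + a - 2 * j + ω + 1) s (p + b + c - 1 - ω) (-1) (-1) +
  2 * (-1 : ℂ) ^ (p + a) * ∑ j ∈ range (a / 2 + 1), phi (2 * j) *
      ∑ ω ∈ range c,
        (Nat.choose (ω + a - 2 * j) ω : ℂ) * (Nat.choose (p + c - 2 - ω) (p - 1) : ℂ) *
          T q (s + ((a - 2 * j : ℕ) : ℂ) + ω + 1) (p + b + c - 1 - ω) (-1) (-1)

/-- The right-hand side `J₁` (from the functional relation for `ζ₃(·,λ₁∨;SU(4))`). -/
noncomputable def J1 (p q a b c : ℕ) (s : ℂ) : ℂ :=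
  (-1 : ℂ) ^ p * ∑ j ∈ range (p + 1), (-1 : ℂ) ^ j * LamNegI j *
      ∑ ω ∈ range (p - j + 1),
        (Nat.choose (ω + a - 1) ω : ℂ) * (Nat.choose (p + c - j - ω - 1) (c - 1) : ℂ) *
          T (q + a + ω) s (p + b + c - j - ω) (-1) Complex.I +
  (-1 : ℂ) ^ (p + a) * ∑ j ∈ range (c + 1), LamNegI j *
      ∑ ω ∈ range (c - j + 1),
        (Nat.choose (ω + a - 1) ω : ℂ) * (Nat.choose (p + c - j - ω - 1) (p - 1) : ℂ) *
          T q (s + a + ω) (p + b + c - j - ω) (-Complex.I) (-1) +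
  (-1 : ℂ) ^ p * ∑ j ∈ range (a + 1), LamNegI j *
      ∑ ω ∈ range p,
        (Nat.choose (ω + a - j) ω : ℂ) * (Nat.choose (p + c - 2 - ω) (c - 1) : ℂ) *
          T (q + a - j + ω + 1) s (p + b + c - 1 - ω) (-Complex.I) Complex.I +
  (-1 : ℂ) ^ (p + a) * ∑ j ∈ range (a + 1), (-1 : ℂ) ^ j * LamNegI j *
      ∑ ω ∈ range c,
        (Nat.choose (ω + a - j) ω : ℂ) * (Nat.choose (p + c - 2 - ω) (p - 1) : ℂ) *
          T q (s + ((a - j : ℕ) : ℂ) + ω + 1) (p + b + c - 1 - ω) (-Complex.I) Complex.I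

/-- The right-hand side `J₃` (from the functional relation for `ζ₃(·,λ₃∨;SU(4))`). -/
noncomputable def J3 (p q a b c : ℕ) (s : ℂ) : ℂ :=
  (-1 : ℂ) ^ p * ∑ j ∈ range (p + 1), (-1 : ℂ) ^ j * LamI j *
      ∑ ω ∈ range (p - j + 1),
        (Nat.choose (ω + a - 1) ω : ℂ) * (Nat.choose (p + c - j - ω - 1) (c - 1) : ℂ) *
          T (q + a + ω) s (p + b + c - j - ω) (-1) (-Complex.I) +
  (-1 : ℂ) ^ (p + a) * ∑ j ∈ range (c + 1), LamI j *
      ∑ ω ∈ range (c - j + 1),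
        (Nat.choose (ω + a - 1) ω : ℂ) * (Nat.choose (p + c - j - ω - 1) (p - 1) : ℂ) *
          T q (s + a + ω) (p + b + c - j - ω) Complex.I (-1) +
  (-1 : ℂ) ^ p * ∑ j ∈ range (a + 1), LamI j *
      ∑ ω ∈ range p,
        (Nat.choose (ω + a - j) ω : ℂ) * (Nat.choose (p + c - 2 - ω) (c - 1) : ℂ) *
          T (q + a - j + ω + 1) s (p + b + c - 1 - ω) Complex.I (-Complex.I) +
  (-1 : ℂ) ^ (p + a) * ∑ j ∈ range (a + 1), (-1 : ℂ) ^ j * LamI j *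
      ∑ ω ∈ range c,
        (Nat.choose (ω + a - j) ω : ℂ) * (Nat.choose (p + c - 2 - ω) (p - 1) : ℂ) *
          T q (s + ((a - j : ℕ) : ℂ) + ω + 1) (p + b + c - 1 - ω) Complex.I (-Complex.I)

open Complex Finset

/-- Power series expansion of `(t + d)^(-a)` at `t = 0`. -/
noncomputable def GS (d : ℂ) (a : ℕ) : PowerSeries ℂ :=
  PowerSeries.mk fun k => (-1 : ℂ) ^ k * (Nat.choose (k + a - 1) k : ℂ) * (d⁻¹) ^ (a + k)

lemma GS_zero (d : ℂ) : GS d 0 = 1 := by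
  ext k
  rcases k with _ | k
  · simp [GS]
  · simp [GS, PowerSeries.coeff_one]

lemma GS_succ {d : ℂ} (hd : d ≠ 0) (a : ℕ) :
    (PowerSeries.C d + PowerSeries.X) * GS d (a + 1) = GS d a := by
  ext k
  rw [add_mul, map_add, PowerSeries.coeff_C_mul]
  rcases k with _ | k
  · simp [GS, pow_succ]
    field_simp
  · rw [PowerSeries.coeff_succ_X_mul]
    simp only [GS, PowerSeries.coeff_mk]
    have h : Nat.choose (k + 1 + (a + 1) - 1) (k + 1) = Nat.choose (k + a) k + Nat.choose (k + a) (k + 1) := by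
      rw [show k + 1 + (a + 1) - 1 = (k + a) + 1 by omega, Nat.choose_succ_succ]
    rw [h, show k + (a + 1) - 1 = k + a by omega, show k + 1 + a - 1 = k + a by omega]
    push_cast
    rw [show a + 1 + (k + 1) = (a + k) + 1 + 1 by omega, show a + 1 + k = a + k + 1 by omega,
      show a + (k + 1) = a + k + 1 by omega, pow_succ (d⁻¹) (a + k + 1), pow_succ (-1 : ℂ) k]
    field_simp
    ring

/-- two-pole recurrence -/
lemma GS_rec {d e : ℂ} (hd : d ≠ 0) (he : e ≠ 0) (a c : ℕ) :
    PowerSeries.C (e - d) * (GS d (a + 1) * GS e (c + 1)) = GS d (a + 1) * GS e c - GS d a * GS e (c + 1) := by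
  rw [← GS_succ hd a, ← GS_succ he c, map_sub]
  ring

lemma coeff_rec_self (L H : PowerSeries ℂ) {d : ℂ} (hd : d ≠ 0) (p a : ℕ) :
    d * PowerSeries.coeff (p + 1) (L * GS d (a + 1) * H) =
      PowerSeries.coeff (p + 1) (L * GS d a * H) - PowerSeries.coeff p (L * GS d (a + 1) * H) := by
  rw [← GS_succ hd a, ← PowerSeries.coeff_C_mul, ← PowerSeries.coeff_succ_X_mul p, ← map_sub]
  congr 1
  ring

lemma coeff_rec_pair (L : PowerSeries ℂ) {d e : ℂ} (hd : d ≠ 0) (he : e ≠ 0) (n a c : ℕ) :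
    (e - d) * PowerSeries.coeff n (L * GS d (a + 1) * GS e (c + 1)) =
      PowerSeries.coeff n (L * GS d (a + 1) * GS e c) - PowerSeries.coeff n (L * GS d a * GS e (c + 1)) := by
  rw [← PowerSeries.coeff_C_mul, ← map_sub]
  congr 1
  linear_combination L * GS_rec hd he a c

/-- The contribution of the pole `r₁`. -/
noncomputable def polePart (x : ℂ) (L : PowerSeries ℂ) (r₁ r₂ r₃ : ℤ) (e₁ e₂ e₃ : ℕ) : ℂ :=
  x ^ r₁ * PowerSeries.coeff e₁ (L * GS ((r₁ - r₂ : ℤ) : ℂ) e₂ * GS ((r₁ - r₃ : ℤ) : ℂ) e₃)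

noncomputable def Phi3 (x : ℂ) (L : PowerSeries ℂ) (r₁ r₂ r₃ : ℤ) (e₁ e₂ e₃ : ℕ) : ℂ :=
  polePart x L r₁ r₂ r₃ e₁ e₂ e₃ + polePart x L r₂ r₁ r₃ e₂ e₁ e₃ + polePart x L r₃ r₁ r₂ e₃ e₁ e₂

lemma Phi3_swap12 (x : ℂ) (L : PowerSeries ℂ) (r₁ r₂ r₃ : ℤ) (e₁ e₂ e₃ : ℕ) :
    Phi3 x L r₁ r₂ r₃ e₁ e₂ e₃ = Phi3 x L r₂ r₁ r₃ e₂ e₁ e₃ := by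
  unfold Phi3 polePart
  rw [mul_right_comm L (GS ((r₃ - r₁ : ℤ) : ℂ) e₁)]
  ring

lemma Phi3_swap23 (x : ℂ) (L : PowerSeries ℂ) (r₁ r₂ r₃ : ℤ) (e₁ e₂ e₃ : ℕ) :
    Phi3 x L r₁ r₂ r₃ e₁ e₂ e₃ = Phi3 x L r₁ r₃ r₂ e₁ e₃ e₂ := by
  unfold Phi3 polePart
  rw [mul_right_comm L (GS ((r₁ - r₂ : ℤ) : ℂ) e₂)]
  ring

lemma Phi3_rec (x : ℂ) (L : PowerSeries ℂ) (r₁ r₂ r₃ : ℤ) (h12 : r₁ ≠ r₂) (h13 : r₁ ≠ r₃)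
    (h23 : r₂ ≠ r₃) (e₁ e₂ e₃ : ℕ) :
    ((r₁ - r₂ : ℤ) : ℂ) * Phi3 x L r₁ r₂ r₃ (e₁ + 1) (e₂ + 1) e₃ =
      Phi3 x L r₁ r₂ r₃ (e₁ + 1) e₂ e₃ - Phi3 x L r₁ r₂ r₃ e₁ (e₂ + 1) e₃ := by
  have hne : ∀ {a b : ℤ}, a ≠ b → ((a - b : ℤ) : ℂ) ≠ 0 := fun h => by
    exact_mod_cast sub_ne_zero.mpr h
  have A := coeff_rec_self L (GS ((r₁ - r₃ : ℤ) : ℂ) e₃) (hne h12) e₁ e₂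
  have B := coeff_rec_self L (GS ((r₂ - r₃ : ℤ) : ℂ) e₃) (hne h12.symm) e₂ e₁
  have C := coeff_rec_pair L (hne h13.symm) (hne h23.symm) e₃ e₁ e₂
  have e : (((r₃ - r₂ : ℤ) : ℂ) - ((r₃ - r₁ : ℤ) : ℂ)) = ((r₁ - r₂ : ℤ) : ℂ) := by push_cast; ring
  rw [e] at C
  have e' : ((r₂ - r₁ : ℤ) : ℂ) = - ((r₁ - r₂ : ℤ) : ℂ) := by push_cast; ring
  rw [e'] at B
  unfold Phi3 polePart
  rw [e']
  linear_combination x ^ r₁ * A - x ^ r₂ * B + x ^ r₃ * C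

open Filter Topology

/-- truncated index set -/
noncomputable def idx (N : ℕ) (r₁ r₂ r₃ : ℤ) : Finset ℤ :=
  (Icc (-(N : ℤ)) N).filter fun l => l ≠ r₁ ∧ l ≠ r₂ ∧ l ≠ r₃

lemma idx_swap12 (N : ℕ) (r₁ r₂ r₃ : ℤ) : idx N r₁ r₂ r₃ = idx N r₂ r₁ r₃ := by
  ext l; simp only [idx, mem_filter]; tauto

lemma idx_swap23 (N : ℕ) (r₁ r₂ r₃ : ℤ) : idx N r₁ r₂ r₃ = idx N r₁ r₃ r₂ := by
  ext l; simp only [idx, mem_filter]; tauto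

def PFClaim (x : ℂ) (L : PowerSeries ℂ) (r₁ r₂ r₃ : ℤ) (e₁ e₂ e₃ : ℕ) : Prop :=
  Tendsto (fun N : ℕ => ∑ l ∈ idx N r₁ r₂ r₃,
    x ^ l / (((l - r₁ : ℤ) : ℂ) ^ e₁ * ((l - r₂ : ℤ) : ℂ) ^ e₂ * ((l - r₃ : ℤ) : ℂ) ^ e₃)) atTop
    (𝓝 (Phi3 x L r₁ r₂ r₃ e₁ e₂ e₃))

lemma PFClaim_swap12 {x : ℂ} {L : PowerSeries ℂ} {r₁ r₂ r₃ : ℤ} {e₁ e₂ e₃ : ℕ}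
    (h : PFClaim x L r₁ r₂ r₃ e₁ e₂ e₃) : PFClaim x L r₂ r₁ r₃ e₂ e₁ e₃ := by
  unfold PFClaim at *
  rw [Phi3_swap12]
  refine h.congr fun N => ?_
  rw [idx_swap12]
  exact Finset.sum_congr rfl fun l _ => by ring

lemma PFClaim_swap23 {x : ℂ} {L : PowerSeries ℂ} {r₁ r₂ r₃ : ℤ} {e₁ e₂ e₃ : ℕ}
    (h : PFClaim x L r₁ r₂ r₃ e₁ e₂ e₃) : PFClaim x L r₁ r₃ r₂ e₁ e₃ e₂ := by
  unfold PFClaim at *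
  rw [Phi3_swap23]
  refine h.congr fun N => ?_
  rw [idx_swap23]
  exact Finset.sum_congr rfl fun l _ => by ring

lemma PFClaim_rec {x : ℂ} {L : PowerSeries ℂ} {r₁ r₂ r₃ : ℤ} (h12 : r₁ ≠ r₂) (h13 : r₁ ≠ r₃)
    (h23 : r₂ ≠ r₃) {e₁ e₂ e₃ : ℕ}
    (hA : PFClaim x L r₁ r₂ r₃ (e₁ + 1) e₂ e₃) (hB : PFClaim x L r₁ r₂ r₃ e₁ (e₂ + 1) e₃) :
    PFClaim x L r₁ r₂ r₃ (e₁ + 1) (e₂ + 1) e₃ := by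
  unfold PFClaim at *
  have hne : ((r₁ - r₂ : ℤ) : ℂ) ≠ 0 := by exact_mod_cast sub_ne_zero.mpr h12
  have h := (hA.sub hB).const_mul (((r₁ - r₂ : ℤ) : ℂ)⁻¹)
  rw [← Phi3_rec x L r₁ r₂ r₃ h12 h13 h23, inv_mul_cancel_left₀ hne] at h
  refine h.congr fun N => ?_
  rw [← Finset.sum_sub_distrib, Finset.mul_sum]
  refine Finset.sum_congr rfl fun l hl => ?_
  simp only [idx, mem_filter] at hl
  have h1 : ((l - r₁ : ℤ) : ℂ) ≠ 0 := by exact_mod_cast sub_ne_zero.mpr hl.2.1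
  have h2 : ((l - r₂ : ℤ) : ℂ) ≠ 0 := by exact_mod_cast sub_ne_zero.mpr hl.2.2.1
  have h3 : ((l - r₃ : ℤ) : ℂ) ≠ 0 := by exact_mod_cast sub_ne_zero.mpr hl.2.2.2
  have e : ((r₁ - r₂ : ℤ) : ℂ) = ((l - r₂ : ℤ) : ℂ) - ((l - r₁ : ℤ) : ℂ) := by push_cast; ring
  rw [e] at hne ⊢
  generalize ((l - r₁ : ℤ) : ℂ) = u at *
  generalize ((l - r₂ : ℤ) : ℂ) = v at *
  generalize ((l - r₃ : ℤ) : ℂ) = w at *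
  rw [pow_succ, pow_succ]
  field_simp

/-- symmetric partial sums -/
noncomputable def symS (f : ℤ → ℂ) (N : ℕ) : ℂ := ∑ l ∈ Icc (-(N : ℤ)) N, f l

lemma symS_succ (f : ℤ → ℂ) (N : ℕ) :
    symS f (N + 1) = symS f N + f (N + 1) + f (-(N + 1)) := by
  unfold symS
  have h : Icc (-((N + 1 : ℕ) : ℤ)) ((N + 1 : ℕ) : ℤ) =
      insert ((N : ℤ) + 1) (insert (-((N : ℤ) + 1)) (Icc (-(N : ℤ)) N)) := by
    ext l; simp only [mem_Icc, mem_insert]; push_cast; omega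
  rw [h, Finset.sum_insert, Finset.sum_insert]
  · ring
  · simp only [mem_Icc]; omega
  · simp only [mem_insert, mem_Icc]; omega

lemma symS_zero (f : ℤ → ℂ) : symS f 0 = f 0 := by
  simp [symS]

lemma symS_shift_one (f : ℤ → ℂ) (N : ℕ) :
    symS (fun l => f (l + 1)) N = symS f N + (f (N + 1) - f (-N)) := by
  induction N with
  | zero => simp [symS_zero]
  | succ N ih =>
    rw [symS_succ, symS_succ, ih]
    push_cast
    rw [show -((N : ℤ) + 1) + 1 = -N by ring]
    ring

lemma tendsto_ends {f : ℤ → ℂ} (hf : Tendsto f cofinite (𝓝 0)) :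
    Tendsto (fun N : ℕ => f (N + 1) - f (-N)) atTop (𝓝 0) := by
  have h1 : Tendsto (fun N : ℕ => f (N + 1)) atTop (𝓝 0) := by
    refine hf.comp ?_
    rw [← Nat.cofinite_eq_atTop]
    exact Function.Injective.tendsto_cofinite fun a b h => by simpa using h
  have h2 : Tendsto (fun N : ℕ => f (-N)) atTop (𝓝 0) := by
    refine hf.comp ?_
    rw [← Nat.cofinite_eq_atTop]
    exact Function.Injective.tendsto_cofinite fun a b h => by simpa using h
  simpa using h1.sub h2

lemma tendsto_shift_cofinite {f : ℤ → ℂ} (hf : Tendsto f cofinite (𝓝 0)) (r : ℤ) :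
    Tendsto (fun l => f (l + r)) cofinite (𝓝 0) :=
  hf.comp (Function.Injective.tendsto_cofinite fun a b h => by simpa using h)

lemma symS_shift {f : ℤ → ℂ} (hf : Tendsto f cofinite (𝓝 0)) {A : ℂ}
    (hA : Tendsto (symS f) atTop (𝓝 A)) (r : ℤ) :
    Tendsto (symS (fun l => f (l + r))) atTop (𝓝 A) := by
  induction r using Int.induction_on with
  | zero => simpa using hA
  | succ i ih =>
    have h := ih.add (tendsto_ends (tendsto_shift_cofinite hf i))
    rw [add_zero] at h
    refine h.congr fun N => ?_
    rw [← symS_shift_one (fun l => f (l + i))]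
    congr 1; ext l; congr 1; ring
  | pred i ih =>
    have h := ih.sub (tendsto_ends (tendsto_shift_cofinite hf (-i - 1)))
    rw [sub_zero] at h
    refine h.congr fun N => ?_
    have := symS_shift_one (fun l => f (l + (-i - 1))) N
    rw [show (fun l : ℤ => f (l + 1 + (-i - 1))) = fun l => f (l + -i) by
      ext l; congr 1; ring] at this
    rw [this]; ring

/-- `Λ` is the sequence of symmetric sums attached to `x`. -/
structure GoodLam (x : ℂ) (Λ : ℕ → ℂ) : Prop where
  norm_eq : ‖x‖ = 1
  zero : Λ 0 = -1
  lim : ∀ j, 1 ≤ j → Tendsto (symS fun l => x ^ l / (l : ℂ) ^ j) atTop (𝓝 (Λ j))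

lemma tendsto_term_cofinite {x : ℂ} (hx : ‖x‖ = 1) {j : ℕ} (hj : 1 ≤ j) :
    Tendsto (fun l : ℤ => x ^ l / (l : ℂ) ^ j) cofinite (𝓝 0) := by
  rw [tendsto_zero_iff_norm_tendsto_zero]
  have h1 : Tendsto (fun l : ℤ => ‖(l : ℝ)‖⁻¹) cofinite (𝓝 0) := by
    have h := (tendsto_norm_cocompact_atTop (E := ℝ)).comp Int.tendsto_coe_cofinite
    exact tendsto_inv_atTop_zero.comp h
  refine squeeze_zero (fun _ => norm_nonneg _) (fun l => ?_) h1
  rw [norm_div, norm_zpow, hx, one_zpow, norm_pow, one_div]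
  rcases eq_or_ne l 0 with rfl | hl
  · simp [show j ≠ 0 by omega]
  · have h : (1 : ℝ) ≤ |(l : ℝ)| := by exact_mod_cast Int.one_le_abs hl
    rw [Complex.norm_intCast, Real.norm_eq_abs]
    exact inv_anti₀ (by linarith) (le_self_pow₀ h (by omega))

lemma GS_coeff_zero (d : ℂ) (a : ℕ) : PowerSeries.coeff 0 (GS d a) = (d⁻¹) ^ a := by
  simp [GS]

lemma PFClaim_base {x : ℂ} {Λ : ℕ → ℂ} (hΛ : GoodLam x Λ) {r₁ r₂ r₃ : ℤ} (h12 : r₁ ≠ r₂)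
    (h13 : r₁ ≠ r₃) (h23 : r₂ ≠ r₃) {e : ℕ} (he : 1 ≤ e) :
    PFClaim x (PowerSeries.mk Λ) r₁ r₂ r₃ e 0 0 := by
  unfold PFClaim
  have hx0 : x ≠ 0 := by
    rintro rfl
    simpa using hΛ.norm_eq
  have h := ((symS_shift (tendsto_term_cofinite hΛ.norm_eq he) (hΛ.lim e he) (-r₁)).const_mul
    (x ^ r₁)).sub_const (x ^ r₂ / ((r₂ - r₁ : ℤ) : ℂ) ^ e + x ^ r₃ / ((r₃ - r₁ : ℤ) : ℂ) ^ e)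
  have hv : Phi3 x (PowerSeries.mk Λ) r₁ r₂ r₃ e 0 0 = x ^ r₁ * Λ e -
      (x ^ r₂ / ((r₂ - r₁ : ℤ) : ℂ) ^ e + x ^ r₃ / ((r₃ - r₁ : ℤ) : ℂ) ^ e) := by
    unfold Phi3 polePart
    simp only [GS_zero, mul_one, PowerSeries.coeff_mk]
    simp only [PowerSeries.coeff_mul, Finset.Nat.antidiagonal_zero, sum_singleton,
      GS_coeff_zero, PowerSeries.coeff_mk, hΛ.zero, div_eq_mul_inv, inv_pow]
    ring
  rw [hv]
  refine h.congr' ?_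
  filter_upwards [eventually_ge_atTop (r₁.natAbs + r₂.natAbs + r₃.natAbs)] with N hN
  have hset : Icc (-(N : ℤ)) N = insert r₁ (insert r₂ (insert r₃ (idx N r₁ r₂ r₃))) := by
    ext l; simp only [idx, mem_Icc, mem_insert, mem_filter]; omega
  unfold symS
  rw [hset, Finset.sum_insert, Finset.sum_insert, Finset.sum_insert]
  · simp only [mul_add, Finset.mul_sum]
    have key : ∀ l : ℤ, x ^ r₁ * (x ^ (l + -r₁) / ((l + -r₁ : ℤ) : ℂ) ^ e) = x ^ l / ((l - r₁ : ℤ) : ℂ) ^ e := by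
      intro l
      rw [← mul_div_assoc, ← zpow_add₀ hx0]
      congr 2
      ring
    simp only [key, pow_zero, mul_one]
    simp [show e ≠ 0 by omega]
  all_goals simp only [idx, mem_insert, mem_filter]; omega

theorem PFClaim_all {x : ℂ} {Λ : ℕ → ℂ} (hΛ : GoodLam x Λ) (n : ℕ) :
    ∀ (r₁ r₂ r₃ : ℤ) (_ : r₁ ≠ r₂) (_ : r₁ ≠ r₃) (_ : r₂ ≠ r₃) (e₁ e₂ e₃ : ℕ),
      e₁ + e₂ + e₃ = n + 1 → PFClaim x (PowerSeries.mk Λ) r₁ r₂ r₃ e₁ e₂ e₃ := by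
  induction n with
  | zero =>
    intro r₁ r₂ r₃ h12 h13 h23 e₁ e₂ e₃ he
    rcases e₁ with _ | e₁
    · rcases e₂ with _ | e₂
      · obtain rfl : e₃ = 1 := by omega
        exact PFClaim_swap23 (PFClaim_swap12 (PFClaim_base hΛ h13.symm h23.symm h12 le_rfl))
      · obtain rfl : e₂ = 0 := by omega
        obtain rfl : e₃ = 0 := by omega
        exact PFClaim_swap12 (PFClaim_base hΛ h12.symm h23 h13 le_rfl)
    · obtain rfl : e₁ = 0 := by omega
      obtain rfl : e₂ = 0 := by omega
      obtain rfl : e₃ = 0 := by omega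
      exact PFClaim_base hΛ h12 h13 h23 le_rfl
  | succ n ih =>
    intro r₁ r₂ r₃ h12 h13 h23 e₁ e₂ e₃ he
    rcases e₁ with _ | e₁
    · rcases e₂ with _ | e₂
      · exact PFClaim_swap23 (PFClaim_swap12 (PFClaim_base hΛ h13.symm h23.symm h12 (by omega)))
      · rcases e₃ with _ | e₃
        · exact PFClaim_swap12 (PFClaim_base hΛ h12.symm h23 h13 (by omega))
        · refine PFClaim_swap12 (PFClaim_swap23 ?_)
          exact PFClaim_rec h23 h12.symm h13.symm (ih _ _ _ h23 h12.symm h13.symm _ _ _ (by omega))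
            (ih _ _ _ h23 h12.symm h13.symm _ _ _ (by omega))
    · rcases e₂ with _ | e₂
      · rcases e₃ with _ | e₃
        · exact PFClaim_base hΛ h12 h13 h23 (by omega)
        · refine PFClaim_swap23 ?_
          exact PFClaim_rec h13 h12 h23.symm (ih _ _ _ h13 h12 h23.symm _ _ _ (by omega))
            (ih _ _ _ h13 h12 h23.symm _ _ _ (by omega))
      · exact PFClaim_rec h12 h13 h23 (ih _ _ _ h12 h13 h23 _ _ _ (by omega))
            (ih _ _ _ h12 h13 h23 _ _ _ (by omega))

lemma coeff_mk_mul (k : ℕ → ℂ) (H : PowerSeries ℂ) (p : ℕ) :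
    PowerSeries.coeff p (PowerSeries.mk k * H) =
      ∑ j ∈ range (p + 1), k j * PowerSeries.coeff (p - j) H := by
  rw [PowerSeries.coeff_mul, Finset.Nat.sum_antidiagonal_eq_sum_range_succ
    (fun i j => PowerSeries.coeff i (PowerSeries.mk k) * PowerSeries.coeff j H)]
  simp only [PowerSeries.coeff_mk]

/-- Two-pole partial fractions, coefficientwise. -/
lemma GS_pf_aux {u w : ℂ} (hu : u ≠ 0) (hw : w ≠ 0) (huw : w - u ≠ 0) (N : ℕ)
    (k₁ k₂ : ℕ → ℂ) (h1 : ∀ i, k₁ (i + 1) = PowerSeries.coeff N (GS u (i + 1)))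
    (h2 : ∀ i, k₂ (i + 1) = PowerSeries.coeff N (GS w (i + 1))) (h10 : k₁ 0 = 0) (h20 : k₂ 0 = 0)
    (n : ℕ) :
    ∀ p c : ℕ, p + c = n + 1 → PowerSeries.coeff N (GS u p * GS w c) =
      PowerSeries.coeff p (PowerSeries.mk k₁ * GS (w - u) c) +
      PowerSeries.coeff c (PowerSeries.mk k₂ * GS (u - w) p) := by
  have hwu : u - w ≠ 0 := by rw [← neg_sub]; exact neg_ne_zero.mpr huw
  have hb1 : ∀ p, PowerSeries.coeff N (GS u (p + 1) * GS w 0) =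
      PowerSeries.coeff (p + 1) (PowerSeries.mk k₁ * GS (w - u) 0) +
      PowerSeries.coeff 0 (PowerSeries.mk k₂ * GS (u - w) (p + 1)) := by
    intro p
    rw [coeff_mk_mul k₂]
    simp [GS_zero, h1, h20]
  have hb2 : ∀ c, PowerSeries.coeff N (GS u 0 * GS w (c + 1)) =
      PowerSeries.coeff 0 (PowerSeries.mk k₁ * GS (w - u) (c + 1)) +
      PowerSeries.coeff (c + 1) (PowerSeries.mk k₂ * GS (u - w) 0) := by
    intro p
    rw [coeff_mk_mul k₁]
    simp [GS_zero, h2, h10]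
  induction n with
  | zero =>
    intro p c h
    rcases p with _ | p
    · obtain rfl : c = 1 := by omega
      exact hb2 0
    · obtain rfl : p = 0 := by omega
      obtain rfl : c = 0 := by omega
      exact hb1 0
  | succ n ih =>
    intro p c h
    rcases p with _ | p
    · rcases c with _ | c
      · omega
      · exact hb2 c
    · rcases c with _ | c
      · exact hb1 p
      · apply mul_left_cancel₀ huw
        have A := coeff_rec_pair 1 hu hw N p c
        have B := coeff_rec_self (PowerSeries.mk k₁) 1 huw p c
        have C := coeff_rec_self (PowerSeries.mk k₂) 1 hwu c p
        simp only [one_mul, mul_one] at A B C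
        have I1 := ih (p + 1) c (by omega)
        have I2 := ih p (c + 1) (by omega)
        linear_combination A + I1 - I2 - B + C

lemma GS_pf {u w : ℂ} (hu : u ≠ 0) (hw : w ≠ 0) (huw : w - u ≠ 0) (N : ℕ)
    (p c : ℕ) (hp : 0 < p) : PowerSeries.coeff N (GS u p * GS w c) =
      (∑ ω ∈ range p, PowerSeries.coeff N (GS u (ω + 1)) *
        PowerSeries.coeff (p - (ω + 1)) (GS (w - u) c)) +
      ∑ ω ∈ range c, PowerSeries.coeff N (GS w (ω + 1)) *
        PowerSeries.coeff (c - (ω + 1)) (GS (u - w) p) := by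
  rw [GS_pf_aux hu hw huw N (fun i => if i = 0 then 0 else PowerSeries.coeff N (GS u i))
    (fun i => if i = 0 then 0 else PowerSeries.coeff N (GS w i)) (by simp) (by simp) (by simp)
    (by simp) (p + c - 1) p c (by omega), coeff_mk_mul, coeff_mk_mul, Finset.sum_range_succ',
    Finset.sum_range_succ' _ c]
  simp

open Complex Finset Filter Topology

lemma chi4_odd (i : ℕ) : chi4 ((2 * i + 1 : ℕ) : ZMod 4) = (-1) ^ i := by
  have h : ZMod.χ₄ ((2 * i + 1 : ℕ) : ZMod 4) = (-1) ^ i := by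
    rw [ZMod.χ₄_eq_neg_one_pow (by omega)]
    congr 1; omega
  rw [chi4, MulChar.ringHomComp_apply, h]
  simp

lemma chi4_even (i : ℕ) : chi4 ((2 * i : ℕ) : ZMod 4) = 0 := by
  have h : ZMod.χ₄ ((2 * i : ℕ) : ZMod 4) = 0 := by
    rw [ZMod.χ₄_nat_eq_if_mod_four]; simp
  rw [chi4, MulChar.ringHomComp_apply, h]
  simp

lemma chi4_ne_one : chi4 ≠ 1 := by
  intro h
  have h3 := chi4_odd 1
  rw [h, MulChar.one_apply] at h3
  · norm_num at h3
  · exact ⟨⟨3, 3, by decide, by decide⟩, by simp⟩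

lemma hasSum_Lchi4 {s : ℂ} (hs : 1 < s.re) :
    HasSum (fun i : ℕ => (-1 : ℂ) ^ i / ((2 * i + 1 : ℕ) : ℂ) ^ s) (Lchi4 s) := by
  have h := (DirichletCharacter.LSeriesSummable_of_one_lt_re chi4 hs).hasSum
  have h2 : ∑' n, LSeries.term (fun n => chi4 n) s n = Lchi4 s := by
    rw [Lchi4, DirichletCharacter.LFunction_eq_LSeries _ hs]; rfl
  rw [h2] at h
  have hinj : Function.Injective (fun i : ℕ => 2 * i + 1) := fun a b h => by
    simpa using h
  have h3 := (hinj.hasSum_iff (f := LSeries.term (fun n => chi4 n) s) (a := Lchi4 s) ?_).mpr h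
  · refine h3.congr_fun ?_ |> id
    intro i
    simp only [Function.comp_apply]
    rw [LSeries.term_of_ne_zero (by omega), chi4_odd]
  · intro n hn
    rcases Nat.even_or_odd' n with ⟨k, rfl | rfl⟩
    · rcases Nat.eq_zero_or_pos k with rfl | hk
      · simp
      · rw [LSeries.term_of_ne_zero (by omega), chi4_even]; simp
    · exact absurd ⟨k, rfl⟩ hn

/-- paired terms of the alternating series -/
noncomputable def pairT (σ : ℝ) (k : ℕ) : ℝ := (4 * (k : ℝ) + 1) ^ (-σ) - (4 * (k : ℝ) + 3) ^ (-σ)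

lemma pairT_bound {σ : ℝ} (h1 : 1 ≤ σ) (h2 : σ ≤ 2) (k : ℕ) :
    ‖pairT σ k‖ ≤ 4 * (1 / ((k + 1 : ℕ) : ℝ) ^ 2) := by
  have hk : (0 : ℝ) ≤ k := Nat.cast_nonneg k
  set A : ℝ := 4 * (k : ℝ) + 1 with hA
  set B : ℝ := 4 * (k : ℝ) + 3 with hB
  have hA0 : 1 ≤ A := by linarith
  have hB0 : 1 ≤ B := by linarith
  have hr : A / B ≤ 1 := by rw [div_le_one (by linarith)]; linarith
  have hr0 : 0 < A / B := by positivity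
  have e : pairT σ k = A ^ (-σ) * (1 - (A / B) ^ σ) := by
    rw [pairT, ← hA, ← hB, Real.div_rpow (by linarith) (by linarith), Real.rpow_neg (by linarith),
      Real.rpow_neg (by linarith)]
    have : A ^ σ ≠ 0 := (Real.rpow_pos_of_pos (by linarith) _).ne'
    have : B ^ σ ≠ 0 := (Real.rpow_pos_of_pos (by linarith) _).ne'
    field_simp
  have b1 : A ^ (-σ) ≤ A⁻¹ := by
    rw [← Real.rpow_neg_one]
    exact Real.rpow_le_rpow_of_exponent_le hA0 (by linarith)
  have b2 : (A / B) ^ (2 : ℝ) ≤ (A / B) ^ σ := Real.rpow_le_rpow_of_exponent_ge hr0 hr h2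
  have b3 : (A / B) ^ σ ≤ 1 := Real.rpow_le_one hr0.le hr (by linarith)
  rw [e, Real.norm_eq_abs, abs_of_nonneg (mul_nonneg (Real.rpow_nonneg (by linarith) _) (by linarith))]
  have b4 : 1 - (A / B) ^ σ ≤ 4 * B⁻¹ := by
    have : (A / B) ^ (2 : ℝ) = (A / B) ^ 2 := by exact_mod_cast Real.rpow_natCast (A / B) 2
    rw [this] at b2
    have h3 : 1 - A / B = 2 * B⁻¹ := by
      field_simp; rw [hA, hB]; ring
    nlinarith
  calc A ^ (-σ) * (1 - (A / B) ^ σ) ≤ A⁻¹ * (4 * B⁻¹) :=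
        mul_le_mul b1 b4 (by linarith) (by positivity)
    _ = 4 * (1 / (A * B)) := by field_simp
    _ ≤ _ := by
        gcongr
        push_cast
        nlinarith

lemma summable_bound : Summable fun k : ℕ => (4 : ℝ) * (1 / ((k + 1 : ℕ) : ℝ) ^ 2) :=
  ((summable_nat_add_iff 1).mpr (Real.summable_one_div_nat_pow.mpr one_lt_two)).mul_left 4

lemma tsum_pairT_one : ∑' k, pairT 1 k = Real.pi / 4 := by
  have hs : Summable (pairT 1) := Summable.of_norm_bounded summable_bound
    fun k => pairT_bound le_rfl one_le_two k
  have h1 := hs.hasSum.tendsto_sum_nat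
  have h2 := Real.tendsto_sum_pi_div_four.comp (tendsto_id.const_mul_atTop' (r := 2) (by norm_num))
  refine tendsto_nhds_unique h1 (h2.congr fun K => ?_)
  simp only [Function.comp_apply, id]
  induction K with
  | zero => simp
  | succ K ih =>
    rw [Finset.sum_range_succ, ← ih, show 2 * (K + 1) = 2 * K + 1 + 1 by ring,
      Finset.sum_range_succ, Finset.sum_range_succ, pairT, Real.rpow_neg_one, Real.rpow_neg_one]
    rw [pow_succ, pow_mul]
    push_cast
    norm_num
    rw [show (2 * (2 * (K : ℝ)) + 1) = 4 * K + 1 by ring,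
      show (2 * (2 * (K : ℝ) + 1) + 1) = 4 * K + 3 by ring]
    ring

lemma Lchi4_eq_pair {σ : ℝ} (h : 1 < σ) : Lchi4 σ = ((∑' k, pairT σ k : ℝ) : ℂ) := by
  have hs := hasSum_Lchi4 (s := (σ : ℂ)) (by simpa using h)
  set f := fun i : ℕ => (-1 : ℂ) ^ i / ((2 * i + 1 : ℕ) : ℂ) ^ (σ : ℂ) with hf
  have s1 : Summable fun k => f (2 * k) := hs.summable.comp_injective fun a b h => by simpa using h
  have s2 : Summable fun k => f (2 * k + 1) := hs.summable.comp_injective fun a b h => by simpa using h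
  rw [← hs.tsum_eq, ← tsum_even_add_odd s1 s2, ← s1.tsum_add s2, Complex.ofReal_tsum]
  congr 1
  ext k
  have c1 : ((2 * (2 * k) + 1 : ℕ) : ℂ) ^ (σ : ℂ) = (((4 * (k : ℝ) + 1) ^ σ : ℝ) : ℂ) := by
    rw [Complex.ofReal_cpow (by positivity)]; push_cast; ring_nf
  have c2 : ((2 * (2 * k + 1) + 1 : ℕ) : ℂ) ^ (σ : ℂ) = (((4 * (k : ℝ) + 3) ^ σ : ℝ) : ℂ) := by
    rw [Complex.ofReal_cpow (by positivity)]; push_cast; ring_nf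
  simp only [hf]
  rw [c1, c2, pairT, Real.rpow_neg (by positivity), Real.rpow_neg (by positivity), pow_succ, pow_mul]
  push_cast
  norm_num
  rw [div_eq_mul_inv]
  ring

lemma Lchi4_one : Lchi4 1 = ((Real.pi / 4 : ℝ) : ℂ) := by
  have hc : Tendsto (fun σ : ℝ => Lchi4 σ) (𝓝[>] 1) (𝓝 (Lchi4 1)) := by
    have h1 : Continuous fun σ : ℝ => Lchi4 σ :=
      (DirichletCharacter.differentiable_LFunction chi4_ne_one).continuous.comp continuous_ofReal
    have := (h1.tendsto 1).mono_left (nhdsWithin_le_nhds (s := Set.Ioi 1))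
    simpa using this
  have hd : Tendsto (fun σ : ℝ => ∑' k, pairT σ k) (𝓝[>] 1) (𝓝 (∑' k, pairT 1 k)) := by
    refine tendsto_tsum_of_dominated_convergence summable_bound ?_ ?_
    · intro k
      have : Continuous fun σ : ℝ => pairT σ k := by
        unfold pairT
        refine Continuous.sub ?_ ?_ <;>
        · refine Continuous.rpow continuous_const continuous_neg fun _ => Or.inl ?_
          positivity
      exact (this.tendsto 1).mono_left nhdsWithin_le_nhds
    · filter_upwards [Ioc_mem_nhdsGT (show (1 : ℝ) < 2 by norm_num)] with σ hσ k
      exact pairT_bound hσ.1.le hσ.2 k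
  rw [tsum_pairT_one] at hd
  refine tendsto_nhds_unique hc (((Complex.continuous_ofReal.tendsto _).comp hd).congr' ?_)
  filter_upwards [self_mem_nhdsWithin] with σ hσ
  exact (Lchi4_eq_pair hσ).symm

lemma tendsto_Lchi4 {j : ℕ} (hj : 1 ≤ j) :
    Tendsto (fun K : ℕ => ∑ i ∈ range K, (-1 : ℂ) ^ i / (2 * (i : ℂ) + 1) ^ j) atTop (𝓝 (Lchi4 j)) := by
  rcases eq_or_lt_of_le hj with rfl | hj
  · have h := (Complex.continuous_ofReal.tendsto _).comp Real.tendsto_sum_pi_div_four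
    rw [← Lchi4_one] at h
    rw [Nat.cast_one]
    refine h.congr fun K => ?_
    simp
  · have h := (hasSum_Lchi4 (s := (j : ℂ)) (by simpa using hj)).tendsto_sum_nat
    refine h.congr fun K => Finset.sum_congr rfl fun i _ => ?_
    rw [Complex.cpow_natCast]
    push_cast
    rfl

lemma hasSum_zeta {j : ℕ} (hj : 2 ≤ j) :
    HasSum (fun k : ℕ => 1 / ((k : ℂ) + 1) ^ j) (riemannZeta j) := by
  have h1 : 1 < (j : ℂ).re := by simpa using (show 1 < j by omega)
  rw [zeta_eq_tsum_one_div_nat_add_one_cpow h1]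
  simp only [Complex.cpow_natCast]
  refine Summable.hasSum ?_
  have := (summable_nat_add_iff 1).mpr (Complex.summable_one_div_nat_cpow.mpr h1)
  refine this.congr fun k => ?_
  simp

lemma hasSum_phi {j : ℕ} (hj : 2 ≤ j) :
    HasSum (fun k : ℕ => (-1 : ℂ) ^ (k + 1) / ((k : ℂ) + 1) ^ j)
      ((2 * (2 ^ j)⁻¹ - 1) * riemannZeta j) := by
  have hz := hasSum_zeta hj
  have he : HasSum (fun k : ℕ => if Even k then (0 : ℂ) else 1 / ((k : ℂ) + 1) ^ j)
      (0 + (2 ^ j)⁻¹ * riemannZeta j) := by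
    apply HasSum.even_add_odd
    · simp [hasSum_zero]
    · refine (hz.mul_left ((2 ^ j : ℂ)⁻¹)).congr_fun ?_ |> id
      intro k
      rw [if_neg (by simp)]
      push_cast
      rw [show (2 * (k : ℂ) + 1 + 1) = 2 * (k + 1) by ring, mul_pow, one_div, mul_inv, one_div]
  have h := (he.mul_left 2).sub hz
  convert! h using 1
  · ext k
    by_cases hk : Even k
    · rw [if_pos hk, pow_succ, hk.neg_one_pow]; ring
    · rw [if_neg hk, pow_succ, (Nat.not_even_iff_odd.mp hk).neg_one_pow]; ring
  · ring

lemma symS_eq (f : ℤ → ℂ) (h0 : f 0 = 0) (N : ℕ) :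
    symS f N = ∑ k ∈ range N, (f (k + 1) + f (-(k + 1))) := by
  induction N with
  | zero => simp [symS_zero, h0]
  | succ N ih => rw [symS_succ, ih, Finset.sum_range_succ]; ring

lemma symS_term_eq (x : ℂ) {j : ℕ} (hj : 1 ≤ j) (N : ℕ) :
    symS (fun l => x ^ l / (l : ℂ) ^ j) N =
      ∑ k ∈ range N, (x ^ (k + 1) + (-1) ^ j * (x⁻¹) ^ (k + 1)) / ((k : ℂ) + 1) ^ j := by
  rw [symS_eq _ (by simp [show j ≠ 0 by omega])]
  refine Finset.sum_congr rfl fun k _ => ?_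
  rw [zpow_neg, ← inv_zpow]
  have h1 : ∀ y : ℂ, y ^ ((k : ℤ) + 1) = y ^ (k + 1) := fun y => by
    exact_mod_cast zpow_natCast y (k + 1)
  rw [h1, h1]
  push_cast
  rw [neg_pow ((k : ℂ) + 1), add_div]
  congr 1
  rcases Nat.even_or_odd j with h | h
  · rw [h.neg_one_pow]; simp
  · rw [h.neg_one_pow]; simp [div_neg, neg_div]

noncomputable def LamOne (j : ℕ) : ℂ := if Even j then 2 * riemannZeta j else 0
noncomputable def LamNegOne (j : ℕ) : ℂ := if Even j then 2 * phi j else 0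

lemma phi_nat {j : ℕ} (hj : j ≠ 1) : phi j = (2 * (2 ^ j)⁻¹ - 1) * riemannZeta j := by
  rw [phi, if_neg (by exact_mod_cast hj), Complex.cpow_sub _ _ two_ne_zero, Complex.cpow_natCast,
    Complex.cpow_one, div_eq_mul_inv]

lemma goodLam_one : GoodLam 1 LamOne := by
  refine ⟨by simp, by simp [LamOne, riemannZeta_zero]; norm_num, fun j hj => ?_⟩
  by_cases h : Even j
  · have h2 : 2 ≤ j := by rcases h with ⟨k, rfl⟩; omega
    rw [LamOne, if_pos h]
    refine ((hasSum_zeta h2).mul_left 2).tendsto_sum_nat.congr fun N => ?_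
    rw [symS_term_eq _ hj]
    refine Finset.sum_congr rfl fun k _ => ?_
    rw [h.neg_one_pow]; simp; ring
  · rw [LamOne, if_neg h]
    refine tendsto_const_nhds.congr fun N => ?_
    rw [symS_term_eq _ hj]
    rw [(Nat.not_even_iff_odd.mp h).neg_one_pow]
    simp

lemma goodLam_neg_one : GoodLam (-1) LamNegOne := by
  refine ⟨by simp, ?_, fun j hj => ?_⟩
  · rw [LamNegOne, if_pos (by simp), phi_nat (by simp)]
    simp [riemannZeta_zero]; norm_num
  by_cases h : Even j
  · have h2 : 2 ≤ j := by rcases h with ⟨k, rfl⟩; omega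
    rw [LamNegOne, if_pos h, phi_nat (by omega)]
    refine ((hasSum_phi h2).mul_left 2).tendsto_sum_nat.congr fun N => ?_
    rw [symS_term_eq _ hj]
    refine Finset.sum_congr rfl fun k _ => ?_
    rw [h.neg_one_pow, inv_neg, inv_one]; ring
  · rw [LamNegOne, if_neg h]
    refine tendsto_const_nhds.congr fun N => ?_
    rw [symS_term_eq _ hj]
    rw [(Nat.not_even_iff_odd.mp h).neg_one_pow]
    simp

lemma sum_even_only (h : ℕ → ℂ) (h0 : ∀ i, h (2 * i + 1) = 0) (N : ℕ) :
    ∑ k ∈ range N, h k = ∑ i ∈ range ((N + 1) / 2), h (2 * i) := by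
  induction N with
  | zero => simp
  | succ N ih =>
    rw [Finset.sum_range_succ, ih]
    rcases Nat.even_or_odd' N with ⟨k, rfl | rfl⟩
    · rw [show (2 * k + 1 + 1) / 2 = k + 1 by omega, show (2 * k + 1) / 2 = k by omega,
        Finset.sum_range_succ]
    · rw [show (2 * k + 1 + 1 + 1) / 2 = k + 1 by omega, show (2 * k + 1 + 1) / 2 = k + 1 by omega,
        h0, add_zero]

lemma LamI_even {j : ℕ} (h : Even j) :
    LamI j = 2 * (2 ^ j)⁻¹ * ((2 * (2 ^ j)⁻¹ - 1) * riemannZeta j) := by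
  rw [LamI, if_pos h, zpow_sub₀ two_ne_zero, zpow_natCast, zpow_one, div_eq_mul_inv]
  ring

lemma goodLam_I : GoodLam Complex.I LamI := by
  refine ⟨by simp, ?_, fun j hj => ?_⟩
  · rw [LamI_even (by simp)]; simp [riemannZeta_zero]; norm_num
  by_cases h : Even j
  · have h2 : 2 ≤ j := by rcases h with ⟨k, rfl⟩; omega
    have hs : HasSum (fun k : ℕ => (Complex.I ^ (k + 1) + (-1) ^ j * (Complex.I⁻¹) ^ (k + 1)) /
        ((k : ℂ) + 1) ^ j) (0 + 2 * (2 ^ j)⁻¹ * ((2 * (2 ^ j)⁻¹ - 1) * riemannZeta j)) := by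
      apply HasSum.even_add_odd
      · refine hasSum_zero.congr_fun ?_ |> id
        intro k
        rw [h.neg_one_pow, pow_succ, pow_succ, pow_mul, pow_mul, Complex.inv_I, neg_sq]
        ring
      · refine ((hasSum_phi h2).mul_left (2 * (2 ^ j : ℂ)⁻¹)).congr_fun ?_ |> id
        intro k
        rw [h.neg_one_pow, show 2 * k + 1 + 1 = 2 * (k + 1) by ring, pow_mul, pow_mul,
          Complex.inv_I, neg_sq, Complex.I_sq]
        push_cast
        rw [show (2 * (k : ℂ) + 1 + 1) = 2 * (k + 1) by ring, mul_pow, div_eq_mul_inv, mul_inv]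
        ring
    rw [LamI_even h, ← zero_add (2 * (2 ^ j : ℂ)⁻¹ * _)]
    refine hs.tendsto_sum_nat.congr fun N => ?_
    rw [symS_term_eq _ hj]
  · rw [LamI, if_neg h]
    have hlim : Tendsto (fun N : ℕ => (N + 1) / 2) atTop atTop :=
      tendsto_atTop_atTop.mpr fun b => ⟨2 * b, fun a ha => by omega⟩
    refine (((tendsto_Lchi4 hj).comp hlim).const_mul (2 * Complex.I)).congr fun N => ?_
    rw [symS_term_eq _ hj, (Nat.not_even_iff_odd.mp h).neg_one_pow, sum_even_only]
    · rw [Function.comp_apply, Finset.mul_sum]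
      refine Finset.sum_congr rfl fun i _ => ?_
      rw [Complex.inv_I, pow_succ, pow_succ, pow_mul, pow_mul, neg_sq, Complex.I_sq]
      push_cast
      ring
    · intro i
      rw [show 2 * i + 1 + 1 = 2 * (i + 1) by ring, pow_mul, pow_mul, Complex.inv_I, neg_sq]
      ring

lemma LamNegI_eq (j : ℕ) : LamNegI j = (-1) ^ j * LamI j := by
  unfold LamNegI LamI
  by_cases h : Even j
  · rw [if_pos h, if_pos h, h.neg_one_pow, one_mul]
  · rw [if_neg h, if_neg h, (Nat.not_even_iff_odd.mp h).neg_one_pow]; ring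

lemma goodLam_neg_I : GoodLam (-Complex.I) LamNegI := by
  refine ⟨by simp, ?_, fun j hj => ?_⟩
  · rw [LamNegI_eq, goodLam_I.zero]; simp
  rw [LamNegI_eq]
  refine ((goodLam_I.lim j hj).const_mul ((-1) ^ j)).congr fun N => ?_
  rw [symS_term_eq _ hj, symS_term_eq _ hj, Finset.mul_sum]
  refine Finset.sum_congr rfl fun k _ => ?_
  rw [inv_neg, Complex.inv_I, neg_neg]
  have : ((-1 : ℂ) ^ j) * (-1) ^ j = 1 := by rw [← mul_pow]; simp
  linear_combination (-Complex.I) ^ (k + 1) / ((k : ℂ) + 1) ^ j * this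

open Complex Finset Filter Topology

/-- auxiliary summable majorants -/
noncomputable def hh (k : ℤ) : ℝ := 1 / (k : ℝ) ^ 2

lemma hh_nonneg (k : ℤ) : 0 ≤ hh k := by unfold hh; positivity

lemma summable_hh : Summable hh := Real.summable_one_div_int_pow.mpr one_lt_two

noncomputable def nn (σ : ℝ) (n : ℕ) : ℝ := 1 / ((n + 1 : ℕ) : ℝ) ^ σ

lemma nn_nonneg (σ : ℝ) (k : ℕ) : 0 ≤ nn σ k := by unfold nn; positivity

lemma summable_nn {σ : ℝ} (h : 1 < σ) : Summable (nn σ) :=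
  (summable_nat_add_iff 1).mpr (Real.summable_one_div_nat_rpow.mpr h)

noncomputable def bd2 (σ : ℝ) (t : ℤ × ℕ) : ℝ := (hh t.1 + hh (t.1 + (t.2 : ℤ) + 1)) * nn σ t.2

lemma bd2_nonneg (σ : ℝ) (t : ℤ × ℕ) : 0 ≤ bd2 σ t :=
  mul_nonneg (add_nonneg (hh_nonneg _) (hh_nonneg _)) (nn_nonneg _ _)

lemma summable_bd2 {σ : ℝ} (h : 1 < σ) : Summable (bd2 σ) := by
  have h1 : Summable fun t : ℤ × ℕ => hh t.1 * nn σ t.2 :=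
    summable_hh.mul_of_nonneg (summable_nn h) hh_nonneg (nn_nonneg σ)
  have hinj : Function.Injective fun t : ℤ × ℕ => ((t.1 + (t.2 : ℤ) + 1, t.2) : ℤ × ℕ) := by
    rintro ⟨a, b⟩ ⟨c, d⟩ h
    simp only [Prod.mk.injEq] at h ⊢
    omega
  refine (h1.add (h1.comp_injective hinj)).congr fun t => ?_
  simp only [bd2, Function.comp_apply]
  ring

noncomputable def bd3 (σ : ℝ) (t : (ℤ × ℕ) × ℤ) : ℝ := bd2 σ t.1 * (hh t.2 + hh (t.2 + t.1.1))

lemma summable_bd3 {σ : ℝ} (h : 1 < σ) : Summable (bd3 σ) := by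
  have h1 : Summable fun t : (ℤ × ℕ) × ℤ => bd2 σ t.1 * hh t.2 :=
    (summable_bd2 h).mul_of_nonneg summable_hh (bd2_nonneg σ) hh_nonneg
  have hinj : Function.Injective fun t : (ℤ × ℕ) × ℤ => ((t.1, t.2 + t.1.1) : (ℤ × ℕ) × ℤ) := by
    rintro ⟨⟨a, b⟩, e⟩ ⟨⟨c, d⟩, f⟩ h
    simp only [Prod.mk.injEq] at h ⊢
    omega
  refine (h1.add (h1.comp_injective hinj)).congr fun t => ?_
  simp only [bd3, Function.comp_apply]
  ring

lemma norm_inv_pow_le_one (k : ℤ) {p : ℕ} (hp : 0 < p) : ‖((k : ℂ) ^ p)⁻¹‖ ≤ 1 := by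
  rcases eq_or_ne k 0 with rfl | hk
  · simp [hp.ne']
  · have h : (1 : ℝ) ≤ |(k : ℝ)| := by exact_mod_cast Int.one_le_abs hk
    rw [norm_inv, norm_pow, Complex.norm_intCast]
    exact inv_le_one_of_one_le₀ (one_le_pow₀ h)

lemma norm_inv_pow_le (k : ℤ) {p : ℕ} (hp : 0 < p) : ‖((k : ℂ) ^ p)⁻¹‖ ≤ |(k : ℝ)|⁻¹ := by
  rcases eq_or_ne k 0 with rfl | hk
  · simp [hp.ne']
  · have h : (1 : ℝ) ≤ |(k : ℝ)| := by exact_mod_cast Int.one_le_abs hk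
    rw [norm_inv, norm_pow, Complex.norm_intCast]
    exact inv_anti₀ (by linarith) (le_self_pow₀ h hp.ne')

lemma norm_inv_pow_mul_le (k l : ℤ) {p a : ℕ} (hp : 0 < p) (ha : 0 < a) :
    ‖((k : ℂ) ^ p)⁻¹ * ((l : ℂ) ^ a)⁻¹‖ ≤ hh k + hh l := by
  rw [norm_mul]
  have h1 := norm_inv_pow_le k hp
  have h2 := norm_inv_pow_le l ha
  have e : ∀ k : ℤ, hh k = (|(k : ℝ)|⁻¹) ^ 2 := fun k => by
    rw [hh, inv_pow, sq_abs, one_div]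
  rw [e, e]
  have : ‖((k : ℂ) ^ p)⁻¹‖ * ‖((l : ℂ) ^ a)⁻¹‖ ≤ |(k : ℝ)|⁻¹ * |(l : ℝ)|⁻¹ :=
    mul_le_mul h1 h2 (norm_nonneg _) (by positivity)
  nlinarith [sq_nonneg (|(k : ℝ)|⁻¹ - |(l : ℝ)|⁻¹), sq_nonneg (|(k : ℝ)|⁻¹), sq_nonneg (|(l : ℝ)|⁻¹)]

lemma norm_cpow_inv (n : ℕ) (s : ℂ) : ‖((((n + 1 : ℕ) : ℂ)) ^ s)⁻¹‖ = nn s.re n := by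
  rw [norm_inv, Complex.norm_natCast_cpow_of_pos (Nat.succ_pos n), nn, one_div]

/-- the summand of `T` -/
noncomputable def tS (p : ℕ) (s : ℂ) (q : ℕ) (x y : ℂ) (t : ℤ × ℕ) : ℂ :=
  x ^ t.1 * y ^ (t.2 + 1) * ((t.1 : ℂ) ^ p)⁻¹ * ((((t.2 + 1 : ℕ) : ℂ)) ^ s)⁻¹ *
    (((t.1 + (t.2 : ℤ) + 1 : ℤ) : ℂ) ^ q)⁻¹

lemma T_eq {p q : ℕ} (hp : 0 < p) (hq : 0 < q) (s x y : ℂ) :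
    T p s q x y = ∑' t, tS p s q x y t := by
  unfold T
  congr 1
  ext t
  split_ifs with h
  · rw [tS, div_eq_mul_inv, mul_inv, mul_inv]; ring
  · rw [not_and_or, not_not, not_not] at h
    rcases h with h | h
    · rw [tS, h]; simp [hp.ne']
    · rw [tS, show t.1 + (t.2 : ℤ) + 1 = 0 by omega]; simp [hq.ne']

lemma hasSum_T {p q : ℕ} (hp : 0 < p) (hq : 0 < q) {s x y : ℂ} (hs : 1 < s.re) (hx : ‖x‖ = 1)
    (hy : ‖y‖ = 1) : HasSum (tS p s q x y) (T p s q x y) := by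
  rw [T_eq hp hq]
  refine Summable.hasSum (Summable.of_norm_bounded (summable_bd2 hs) fun t => ?_)
  have e : tS p s q x y t = (x ^ t.1 * y ^ (t.2 + 1)) * ((((t.1 : ℂ) ^ p)⁻¹ *
    (((t.1 + (t.2 : ℤ) + 1 : ℤ) : ℂ) ^ q)⁻¹) * ((((t.2 + 1 : ℕ) : ℂ)) ^ s)⁻¹) := by
    rw [tS]; ring
  rw [e, norm_mul, norm_mul, norm_mul, norm_cpow_inv, norm_zpow, norm_pow, hx, hy, bd2]
  simp only [one_zpow, one_pow, one_mul]
  exact mul_le_mul_of_nonneg_right (norm_inv_pow_mul_le _ _ hp hq) (nn_nonneg _ _)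

/-- the full lattice summand -/
noncomputable def gS (w : ℤ → ℂ) (p q a b c : ℕ) (s : ℂ) (t : (ℤ × ℕ) × ℤ) : ℂ :=
  w (t.2 + 2 * t.1.1 + 3 * (t.1.2 + 1)) *
    (((t.1.1 : ℂ) ^ q)⁻¹ * ((((t.1.2 + 1 : ℕ) : ℂ)) ^ s)⁻¹ *
      (((t.1.1 + (t.1.2 : ℤ) + 1 : ℤ) : ℂ) ^ b)⁻¹) *
    (((t.2 : ℂ) ^ p)⁻¹ * (((t.2 + t.1.1 : ℤ) : ℂ) ^ a)⁻¹ *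
      (((t.2 + (t.1.1 + (t.1.2 : ℤ) + 1) : ℤ) : ℂ) ^ c)⁻¹)

lemma summable_gS {w : ℤ → ℂ} (hw : ∀ k, ‖w k‖ ≤ 1) {p q a b c : ℕ} (hp : 0 < p) (hq : 0 < q)
    (ha : 0 < a) (hb : 0 < b) (hc : 0 < c) {s : ℂ} (hs : 1 < s.re) :
    Summable (gS w p q a b c s) := by
  refine Summable.of_norm_bounded (summable_bd3 hs) fun t => ?_
  have e : gS w p q a b c s t = w (t.2 + 2 * t.1.1 + 3 * (t.1.2 + 1)) *
    ((((t.1.1 : ℂ) ^ q)⁻¹ * (((t.1.1 + (t.1.2 : ℤ) + 1 : ℤ) : ℂ) ^ b)⁻¹) *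
      ((((t.1.2 + 1 : ℕ) : ℂ)) ^ s)⁻¹ *
    (((t.2 : ℂ) ^ p)⁻¹ * (((t.2 + t.1.1 : ℤ) : ℂ) ^ a)⁻¹)) *
      (((t.2 + (t.1.1 + (t.1.2 : ℤ) + 1) : ℤ) : ℂ) ^ c)⁻¹ := by
    rw [gS]; ring
  rw [e, norm_mul, norm_mul, norm_mul, norm_mul _ ((((t.1.2 + 1 : ℕ) : ℂ)) ^ s)⁻¹, norm_cpow_inv]
  have h0 := hw (t.2 + 2 * t.1.1 + 3 * (t.1.2 + 1))
  have h1 := norm_inv_pow_mul_le t.1.1 (t.1.1 + (t.1.2 : ℤ) + 1) hq hb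
  have h2 := norm_inv_pow_mul_le t.2 (t.2 + t.1.1) hp ha
  have h3 := norm_inv_pow_le_one (t.2 + (t.1.1 + (t.1.2 : ℤ) + 1)) hc
  have h4 : ‖((t.1.1 : ℂ) ^ q)⁻¹ * (((t.1.1 + (t.1.2 : ℤ) + 1 : ℤ) : ℂ) ^ b)⁻¹‖ * nn s.re t.1.2 *
      ‖((t.2 : ℂ) ^ p)⁻¹ * (((t.2 + t.1.1 : ℤ) : ℂ) ^ a)⁻¹‖ ≤ bd3 s.re t := by
    rw [bd3, bd2]
    have := nn_nonneg s.re t.1.2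
    have := hh_nonneg t.1.1
    have := hh_nonneg (t.1.1 + (t.1.2 : ℤ) + 1)
    gcongr
  set Y := ‖((t.1.1 : ℂ) ^ q)⁻¹ * (((t.1.1 + (t.1.2 : ℤ) + 1 : ℤ) : ℂ) ^ b)⁻¹‖ * nn s.re t.1.2 *
      ‖((t.2 : ℂ) ^ p)⁻¹ * (((t.2 + t.1.1 : ℤ) : ℂ) ^ a)⁻¹‖ with hY
  have hY0 : 0 ≤ Y := by
    have := nn_nonneg s.re t.1.2
    positivity
  calc _ ≤ 1 * Y * 1 := by gcongr
    _ = Y := by ring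
    _ ≤ _ := h4

lemma tsum_inner {x : ℂ} {Λ : ℕ → ℂ} (hΛ : GoodLam x Λ) {M V : ℤ} (hM : M ≠ 0) (hV : V ≠ 0)
    (hMV : M ≠ V) {p a c : ℕ} (hp : 0 < p) (ha : 0 < a) (hc : 0 < c) :
    ∑' l : ℤ, x ^ l * (((l : ℂ) ^ p)⁻¹ * (((l + M : ℤ) : ℂ) ^ a)⁻¹ * (((l + V : ℤ) : ℂ) ^ c)⁻¹) =
      Phi3 x (PowerSeries.mk Λ) 0 (-M) (-V) p a c := by
  have hs : Summable fun l : ℤ =>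
      x ^ l * (((l : ℂ) ^ p)⁻¹ * (((l + M : ℤ) : ℂ) ^ a)⁻¹ * (((l + V : ℤ) : ℂ) ^ c)⁻¹) := by
    have hsh : Summable fun l => hh l + hh (l + M) :=
      summable_hh.add (summable_hh.comp_injective fun a b h => by simpa using h)
    refine Summable.of_norm_bounded hsh fun l => ?_
    rw [norm_mul, norm_zpow, hΛ.norm_eq, one_zpow, one_mul, norm_mul]
    calc _ ≤ (hh l + hh (l + M)) * 1 :=
          mul_le_mul (norm_inv_pow_mul_le _ _ hp ha) (norm_inv_pow_le_one _ hc) (norm_nonneg _)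
            (add_nonneg (hh_nonneg _) (hh_nonneg _))
      _ = _ := mul_one _
  have hI : Tendsto (fun N : ℕ => Icc (-(N : ℤ)) N) atTop atTop := by
    refine tendsto_atTop_finset_of_monotone ?_ ?_
    · intro a b hab
      exact Finset.Icc_subset_Icc (by omega) (by omega)
    · intro l
      exact ⟨l.natAbs, by simp only [mem_Icc]; omega⟩
  have h1 := hs.hasSum.comp hI
  have h2 := PFClaim_all hΛ (p + a + c - 1) 0 (-M) (-V) (by omega) (by omega) (by omega) p a c (by omega)
  refine tendsto_nhds_unique h1 (h2.congr fun N => ?_)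
  simp only [Function.comp_apply, idx]
  rw [Finset.sum_filter]
  refine Finset.sum_congr rfl fun l _ => ?_
  rw [sub_zero, sub_neg_eq_add, sub_neg_eq_add]
  split_ifs with h
  · rw [div_eq_mul_inv, mul_inv, mul_inv]
  · have : l = 0 ∨ l + M = 0 ∨ l + V = 0 := by omega
    rcases this with h | h | h
    · simp [h, hp.ne']
    · simp [h, ha.ne']
    · simp [h, hc.ne']

lemma GS_coeff (d : ℂ) (a k : ℕ) :
    PowerSeries.coeff k (GS d a) = (-1 : ℂ) ^ k * (Nat.choose (k + a - 1) k : ℂ) * (d⁻¹) ^ (a + k) := by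
  simp [GS]

lemma GS_coeff_neg (d : ℂ) (a k : ℕ) :
    PowerSeries.coeff k (GS (-d) a) = (-1 : ℂ) ^ a * (Nat.choose (k + a - 1) k : ℂ) * (d⁻¹) ^ (a + k) := by
  rw [GS_coeff, inv_neg, neg_pow d⁻¹, pow_add (-1 : ℂ) a k]
  have : ((-1 : ℂ) ^ k) * (-1) ^ k = 1 := by rw [← mul_pow]; simp
  linear_combination (-1 : ℂ) ^ a * (Nat.choose (k + a - 1) k : ℂ) * (d⁻¹) ^ (a + k) * this

lemma neg_one_sq_pow (k : ℕ) : ((-1 : ℂ) ^ k) * (-1) ^ k = 1 := by rw [← mul_pow]; simp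

lemma coeff_mul_range (G H : PowerSeries ℂ) (K : ℕ) : PowerSeries.coeff K (G * H) =
    ∑ ω ∈ range (K + 1), PowerSeries.coeff ω G * PowerSeries.coeff (K - ω) H := by
  rw [PowerSeries.coeff_mul, Finset.Nat.sum_antidiagonal_eq_sum_range_succ
    (fun i j => PowerSeries.coeff i G * PowerSeries.coeff j H)]

/-- Generic right-hand side. -/
noncomputable def JG (Λ : ℕ → ℂ) (x : ℂ) (p q a b c : ℕ) (s : ℂ)
    (τ : ℕ → ℂ → ℕ → ℂ → ℂ → ℂ) : ℂ :=
  (-1 : ℂ) ^ p * ∑ j ∈ range (p + 1), (-1 : ℂ) ^ j * Λ j *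
      ∑ ω ∈ range (p - j + 1),
        (Nat.choose (ω + a - 1) ω : ℂ) * (Nat.choose (p + c - j - ω - 1) (c - 1) : ℂ) *
          τ (q + a + ω) s (p + b + c - j - ω) (x ^ 2) (x ^ 3) +
  (-1 : ℂ) ^ (p + a) * ∑ j ∈ range (c + 1), Λ j *
      ∑ ω ∈ range (c - j + 1),
        (Nat.choose (ω + a - 1) ω : ℂ) * (Nat.choose (p + c - j - ω - 1) (p - 1) : ℂ) *
          τ q (s + a + ω) (p + b + c - j - ω) x (x ^ 2) +
  (-1 : ℂ) ^ p * ∑ j ∈ range (a + 1), Λ j *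
      ∑ ω ∈ range p,
        (Nat.choose (ω + a - j) ω : ℂ) * (Nat.choose (p + c - 2 - ω) (c - 1) : ℂ) *
          τ (q + a - j + ω + 1) s (p + b + c - 1 - ω) x (x ^ 3) +
  (-1 : ℂ) ^ (p + a) * ∑ j ∈ range (a + 1), (-1 : ℂ) ^ j * Λ j *
      ∑ ω ∈ range c,
        (Nat.choose (ω + a - j) ω : ℂ) * (Nat.choose (p + c - 2 - ω) (p - 1) : ℂ) *
          τ q (s + ((a - j : ℕ) : ℂ) + ω + 1) (p + b + c - 1 - ω) x (x ^ 3)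

lemma hasSum_JG (Λ : ℕ → ℂ) {x : ℂ} (hx : ‖x‖ = 1) {p q a b c : ℕ} (hp : 0 < p) (hq : 0 < q)
    (hb : 0 < b) (hc : 0 < c) {s : ℂ} (hs : 1 < s.re) :
    HasSum (fun t => JG Λ x p q a b c s (fun p s q x y => tS p s q x y t)) (JG Λ x p q a b c s T) := by
  unfold JG
  have hx2 : ‖x ^ 2‖ = 1 := by rw [norm_pow, hx, one_pow]
  have hx3 : ‖x ^ 3‖ = 1 := by rw [norm_pow, hx, one_pow]
  refine ((HasSum.add ?_ ?_).add ?_).add ?_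
  all_goals
    refine (hasSum_sum fun j hj => (hasSum_sum fun ω hω => HasSum.mul_left _ ?_).mul_left _).mul_left _
    rw [mem_range] at hj hω
    refine hasSum_T (by omega) (by omega) ?_ (by assumption) (by assumption)
    try simp only [add_re, natCast_re, one_re]
    first
      | exact hs
      | (have h1 : (0 : ℝ) ≤ (ω : ℝ) := Nat.cast_nonneg _
         have h2 : (0 : ℝ) ≤ (a : ℝ) := Nat.cast_nonneg _
         have h3 : (0 : ℝ) ≤ ((a - j : ℕ) : ℝ) := Nat.cast_nonneg _
         linarith)

open Complex Finset Filter Topology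

lemma choose_swap (r c : ℕ) (hc : 0 < c) :
    Nat.choose (r + c - 1) r = Nat.choose (r + c - 1) (c - 1) := by
  refine Nat.choose_symm_of_eq_add ?_
  omega

lemma pole_zero (Λ : ℕ → ℂ) (M V : ℂ) {p a c : ℕ} (hc : 0 < c) :
    PowerSeries.coeff p (PowerSeries.mk Λ * GS M a * GS V c) =
      (-1 : ℂ) ^ p * ∑ j ∈ range (p + 1), (-1 : ℂ) ^ j * Λ j *
        ∑ ω ∈ range (p - j + 1),
          (Nat.choose (ω + a - 1) ω : ℂ) * (Nat.choose (p + c - j - ω - 1) (c - 1) : ℂ) *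
            (M⁻¹ ^ (a + ω) * V⁻¹ ^ (p + c - j - ω)) := by
  rw [mul_assoc, coeff_mk_mul, mul_sum]
  refine sum_congr rfl fun j hj => ?_
  rw [coeff_mul_range, mul_sum, mul_sum, mul_sum]
  refine sum_congr rfl fun ω hω => ?_
  rw [mem_range] at hj hω
  obtain ⟨r, rfl⟩ : ∃ r, p = j + ω + r := ⟨p - j - ω, by omega⟩
  have e1 : j + ω + r - j - ω = r := by omega
  have e2 : j + ω + r + c - j - ω = r + c := by omega
  rw [e1, e2, GS_coeff, GS_coeff, choose_swap r c hc, pow_add (-1 : ℂ), pow_add (-1 : ℂ), add_comm c r]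
  linear_combination (-(Λ j * (-1) ^ ω * (-1) ^ r * (Nat.choose (ω + a - 1) ω : ℂ) *
    (Nat.choose (r + c - 1) (c - 1) : ℂ) * (M⁻¹ ^ (a + ω) * V⁻¹ ^ (r + c)))) * neg_one_sq_pow j

lemma pole_V (Λ : ℕ → ℂ) (V n : ℂ) {p a c : ℕ} (hp : 0 < p) :
    PowerSeries.coeff c (PowerSeries.mk Λ * GS (-V) p * GS (-n) a) =
      (-1 : ℂ) ^ (p + a) * ∑ j ∈ range (c + 1), Λ j *
        ∑ ω ∈ range (c - j + 1),
          (Nat.choose (ω + a - 1) ω : ℂ) * (Nat.choose (p + c - j - ω - 1) (p - 1) : ℂ) *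
            (n⁻¹ ^ (a + ω) * V⁻¹ ^ (p + c - j - ω)) := by
  rw [mul_assoc, coeff_mk_mul, mul_sum, mul_comm (GS (-V) p)]
  refine sum_congr rfl fun j hj => ?_
  rw [coeff_mul_range, mul_sum, mul_sum, mul_sum]
  refine sum_congr rfl fun ω hω => ?_
  rw [mem_range] at hj hω
  obtain ⟨r, rfl⟩ : ∃ r, c = j + ω + r := ⟨c - j - ω, by omega⟩
  have e1 : j + ω + r - j - ω = r := by omega
  have e2 : p + (j + ω + r) - j - ω = r + p := by omega
  rw [e1, e2, GS_coeff_neg, GS_coeff_neg, choose_swap r p hp, pow_add (-1 : ℂ), add_comm p r]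
  ring

lemma pole_M (Λ : ℕ → ℂ) {M V n : ℂ} (hM : M ≠ 0) (hn : n ≠ 0) (hV : V ≠ 0) (h : V = M + n)
    {p a c : ℕ} (hp : 0 < p) (hc : 0 < c) :
    PowerSeries.coeff a (PowerSeries.mk Λ * GS (-M) p * GS n c) =
      (-1 : ℂ) ^ p * ∑ j ∈ range (a + 1), Λ j *
        ∑ ω ∈ range p,
          (Nat.choose (ω + a - j) ω : ℂ) * (Nat.choose (p + c - 2 - ω) (c - 1) : ℂ) *
            (M⁻¹ ^ (a - j + ω + 1) * V⁻¹ ^ (p + c - 1 - ω)) +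
      (-1 : ℂ) ^ (p + a) * ∑ j ∈ range (a + 1), (-1 : ℂ) ^ j * Λ j *
        ∑ ω ∈ range c,
          (Nat.choose (ω + a - j) ω : ℂ) * (Nat.choose (p + c - 2 - ω) (p - 1) : ℂ) *
            (n⁻¹ ^ (a - j + ω + 1) * V⁻¹ ^ (p + c - 1 - ω)) := by
  have hd1 : n - -M = V := by rw [h]; ring
  have hd2 : -M - n = -V := by rw [h]; ring
  rw [mul_assoc, coeff_mk_mul, mul_sum, mul_sum, ← sum_add_distrib]
  refine sum_congr rfl fun j hj => ?_
  rw [GS_pf (neg_ne_zero.mpr hM) hn (by rw [hd1]; exact hV) _ _ _ hp, hd1, hd2, mul_add]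
  rw [mem_range] at hj
  obtain ⟨N, rfl⟩ : ∃ N, a = j + N := ⟨a - j, by omega⟩
  have e0 : j + N - j = N := by omega
  rw [e0]
  congr 1
  · rw [mul_sum, mul_sum, mul_sum]
    refine sum_congr rfl fun ω hω => ?_
    rw [mem_range] at hω
    obtain ⟨r, rfl⟩ : ∃ r, p = ω + 1 + r := ⟨p - (ω + 1), by omega⟩
    have e1 : ω + 1 + r - (ω + 1) = r := by omega
    have e2 : ω + 1 + r + c - 1 - ω = c + r := by omega
    have e3 : ω + (j + N) - j = N + (ω + 1) - 1 := by omega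
    have e4 : ω + 1 + r + c - 2 - ω = r + c - 1 := by omega
    have e5 : Nat.choose (N + (ω + 1) - 1) N = Nat.choose (N + (ω + 1) - 1) ω := by
      simpa using choose_swap N (ω + 1) (by omega)
    rw [e1, e2, e3, e4, GS_coeff_neg, GS_coeff, choose_swap r c hc, e5, pow_add (-1 : ℂ),
      show ω + 1 + N = N + ω + 1 by ring]
    ring
  · rw [mul_sum, mul_sum, mul_sum]
    refine sum_congr rfl fun ω hω => ?_
    rw [mem_range] at hω
    obtain ⟨r, rfl⟩ : ∃ r, c = ω + 1 + r := ⟨c - (ω + 1), by omega⟩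
    have e1 : ω + 1 + r - (ω + 1) = r := by omega
    have e2 : p + (ω + 1 + r) - 1 - ω = p + r := by omega
    have e3 : ω + (j + N) - j = N + (ω + 1) - 1 := by omega
    have e4 : p + (ω + 1 + r) - 2 - ω = r + p - 1 := by omega
    have e5 : Nat.choose (N + (ω + 1) - 1) N = Nat.choose (N + (ω + 1) - 1) ω := by
      simpa using choose_swap N (ω + 1) (by omega)
    rw [e1, e2, e3, e4, GS_coeff_neg, GS_coeff, choose_swap r p hp, e5,
      show ω + 1 + N = N + ω + 1 by ring, pow_add (-1 : ℂ) p, pow_add (-1 : ℂ) j]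
    linear_combination (-(Λ j * (-1) ^ N * (-1) ^ p * (Nat.choose (N + (ω + 1) - 1) ω : ℂ) *
      (Nat.choose (r + p - 1) (p - 1) : ℂ) * (n⁻¹ ^ (N + ω + 1) * V⁻¹ ^ (p + r)))) *
        neg_one_sq_pow j

lemma tS_val (p : ℕ) (s : ℂ) (k q : ℕ) (x y : ℂ) (t : ℤ × ℕ) :
    tS p (s + k) q x y t = x ^ t.1 * y ^ (t.2 + 1) * ((t.1 : ℂ)⁻¹) ^ p *
      ((((t.2 + 1 : ℕ) : ℂ)) ^ s)⁻¹ * ((((t.2 + 1 : ℕ) : ℂ))⁻¹) ^ k *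
      (((t.1 + (t.2 : ℤ) + 1 : ℤ) : ℂ)⁻¹) ^ q := by
  have hn : ((t.2 + 1 : ℕ) : ℂ) ≠ 0 := Nat.cast_ne_zero.mpr (by omega)
  rw [tS, cpow_add _ _ hn, cpow_natCast, inv_pow, inv_pow, inv_pow, mul_inv]
  ring

lemma pointwise (Λ : ℕ → ℂ) {x : ℂ} (hx : x ≠ 0) {p q a b c : ℕ} (hp : 0 < p)
    (hc : 0 < c) (s : ℂ) (t : ℤ × ℕ) (hM : t.1 ≠ 0) (hV : t.1 + (t.2 : ℤ) + 1 ≠ 0) :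
    x ^ (2 * t.1 + 3 * ((t.2 : ℤ) + 1)) *
      (((t.1 : ℂ) ^ q)⁻¹ * ((((t.2 + 1 : ℕ) : ℂ)) ^ s)⁻¹ *
        (((t.1 + (t.2 : ℤ) + 1 : ℤ) : ℂ) ^ b)⁻¹) *
      Phi3 x (PowerSeries.mk Λ) 0 (-t.1) (-(t.1 + (t.2 : ℤ) + 1)) p a c =
    JG Λ x p q a b c s (fun p s q x y => tS p s q x y t) := by
  have hM' : (t.1 : ℂ) ≠ 0 := Int.cast_ne_zero.mpr hM
  have hV' : ((t.1 + (t.2 : ℤ) + 1 : ℤ) : ℂ) ≠ 0 := Int.cast_ne_zero.mpr hV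
  have hn' : ((t.2 + 1 : ℕ) : ℂ) ≠ 0 := Nat.cast_ne_zero.mpr (by omega)
  have hVMn : ((t.1 + (t.2 : ℤ) + 1 : ℤ) : ℂ) = (t.1 : ℂ) + ((t.2 + 1 : ℕ) : ℂ) := by
    push_cast; ring
  have c1 : ((0 - (-t.1) : ℤ) : ℂ) = (t.1 : ℂ) := by push_cast; ring
  have c2 : ((0 - (-(t.1 + (t.2 : ℤ) + 1)) : ℤ) : ℂ) = ((t.1 + (t.2 : ℤ) + 1 : ℤ) : ℂ) := by
    push_cast; ring
  have c3 : ((-t.1 - 0 : ℤ) : ℂ) = -(t.1 : ℂ) := by push_cast; ring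
  have c4 : ((-t.1 - (-(t.1 + (t.2 : ℤ) + 1)) : ℤ) : ℂ) = ((t.2 + 1 : ℕ) : ℂ) := by
    push_cast; ring
  have c5 : ((-(t.1 + (t.2 : ℤ) + 1) - 0 : ℤ) : ℂ) = -((t.1 + (t.2 : ℤ) + 1 : ℤ) : ℂ) := by
    push_cast; ring
  have c6 : ((-(t.1 + (t.2 : ℤ) + 1) - (-t.1) : ℤ) : ℂ) = -((t.2 + 1 : ℕ) : ℂ) := by
    push_cast; ring
  unfold Phi3 polePart
  rw [c1, c2, c3, c4, c5, c6, pole_zero Λ _ _ hc, pole_V Λ _ _ hp,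
    pole_M Λ hM' hn' hV' hVMn hp hc]
  have t0 : ∀ (p q : ℕ) (x y : ℂ), tS p s q x y t = x ^ t.1 * y ^ (t.2 + 1) * ((t.1 : ℂ)⁻¹) ^ p *
      ((((t.2 + 1 : ℕ) : ℂ)) ^ s)⁻¹ * (((t.1 + (t.2 : ℤ) + 1 : ℤ) : ℂ)⁻¹) ^ q := by
    intro p q x y
    rw [tS, inv_pow, inv_pow]
  have t1 : ∀ (p q ω : ℕ) (x y : ℂ), tS p (s + a + ω) q x y t =
      x ^ t.1 * y ^ (t.2 + 1) * ((t.1 : ℂ)⁻¹) ^ p *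
      ((((t.2 + 1 : ℕ) : ℂ)) ^ s)⁻¹ * ((((t.2 + 1 : ℕ) : ℂ))⁻¹) ^ (a + ω) *
      (((t.1 + (t.2 : ℤ) + 1 : ℤ) : ℂ)⁻¹) ^ q := by
    intro p q ω x y
    rw [← tS_val]; push_cast; rw [add_assoc]
  have t2 : ∀ (p q ω j : ℕ) (x y : ℂ), tS p (s + ((a - j : ℕ) : ℂ) + ω + 1) q x y t =
      x ^ t.1 * y ^ (t.2 + 1) * ((t.1 : ℂ)⁻¹) ^ p *
      ((((t.2 + 1 : ℕ) : ℂ)) ^ s)⁻¹ * ((((t.2 + 1 : ℕ) : ℂ))⁻¹) ^ (a - j + ω + 1) *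
      (((t.1 + (t.2 : ℤ) + 1 : ℤ) : ℂ)⁻¹) ^ q := by
    intro p q ω j x y
    rw [← tS_val, Nat.cast_add, Nat.cast_add, Nat.cast_one, ← add_assoc, ← add_assoc]
  simp only [JG, t0, t1, t2, ← inv_pow]
  generalize hMi : (t.1 : ℂ)⁻¹ = Mi
  generalize hVi : (((t.1 + (t.2 : ℤ) + 1 : ℤ) : ℂ))⁻¹ = Vi
  generalize hns : ((((t.2 + 1 : ℕ) : ℂ)) ^ s)⁻¹ = ns
  generalize hni : (((t.2 + 1 : ℕ) : ℂ))⁻¹ = ni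
  have x1 : x ^ (2 * t.1 + 3 * ((t.2 : ℤ) + 1)) = (x ^ 2) ^ t.1 * (x ^ 3) ^ (t.2 + 1) := by
    rw [zpow_add₀ hx, zpow_mul, zpow_mul]; norm_cast
  have x2 : x ^ (2 * t.1 + 3 * ((t.2 : ℤ) + 1)) * x ^ (-t.1) = x ^ t.1 * (x ^ 3) ^ (t.2 + 1) := by
    rw [← zpow_add₀ hx, show 2 * t.1 + 3 * ((t.2 : ℤ) + 1) + -t.1 = t.1 + 3 * ((t.2 : ℤ) + 1) by ring,
      zpow_add₀ hx, zpow_mul]; norm_cast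
  have x3 : x ^ (2 * t.1 + 3 * ((t.2 : ℤ) + 1)) * x ^ (-(t.1 + (t.2 : ℤ) + 1)) =
      x ^ t.1 * (x ^ 2) ^ (t.2 + 1) := by
    rw [← zpow_add₀ hx, show 2 * t.1 + 3 * ((t.2 : ℤ) + 1) + -(t.1 + (t.2 : ℤ) + 1) =
      t.1 + 2 * ((t.2 : ℤ) + 1) by ring, zpow_add₀ hx, zpow_mul]; norm_cast
  rw [zpow_zero, one_mul, mul_add, mul_add]
  have L : ∀ (A B y C : ℂ), A * B * (y * C) = (A * y) * (B * C) := by intros; ring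
  rw [L _ _ (x ^ (-t.1)), x2, L _ _ (x ^ (-(t.1 + (t.2 : ℤ) + 1))), x3, x1, mul_add, mul_add]
  have R : ∀ (A B C D : ℂ), A + (B + C) + D = A + D + B + C := by intros; ring
  rw [R]
  congr 1
  · congr 1
    · congr 1
      · simp only [mul_sum]
        refine sum_congr rfl fun j hj => sum_congr rfl fun ω hω => ?_
        rw [mem_range] at hj hω
        rw [show p + b + c - j - ω = b + (p + c - j - ω) by omega]
        ring
      · simp only [mul_sum]
        refine sum_congr rfl fun j hj => sum_congr rfl fun ω hω => ?_
        rw [mem_range] at hj hω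
        rw [show p + b + c - j - ω = b + (p + c - j - ω) by omega]
        ring
    · simp only [mul_sum]
      refine sum_congr rfl fun j hj => sum_congr rfl fun ω hω => ?_
      rw [mem_range] at hj hω
      rw [show p + b + c - 1 - ω = b + (p + c - 1 - ω) by omega,
        show q + a - j + ω + 1 = q + (a - j + ω + 1) by omega]
      ring
  · simp only [mul_sum]
    refine sum_congr rfl fun j hj => sum_congr rfl fun ω hω => ?_
    rw [mem_range] at hj hω
    rw [show p + b + c - 1 - ω = b + (p + c - 1 - ω) by omega]
    ring

lemma JG_zero (Λ : ℕ → ℂ) (x : ℂ) {p q a b c : ℕ} (hq : 0 < q) (hb : 0 < b) (hc : 0 < c) (s : ℂ)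
    (t : ℤ × ℕ) (h : t.1 = 0 ∨ t.1 + (t.2 : ℤ) + 1 = 0) :
    JG Λ x p q a b c s (fun p s q x y => tS p s q x y t) = 0 := by
  have z : ∀ (p q : ℕ) (s x y : ℂ), 0 < p → 0 < q → tS p s q x y t = 0 := by
    intro p q s x y hp hq
    rcases h with h | h
    · simp [tS, h, hp.ne']
    · rw [tS, h]; simp [hq.ne']
  unfold JG
  have zz : ∀ {N : ℕ} {A : ℂ} {f : ℕ → ℂ} {g : ℕ → ℕ} {u v : ℕ → ℕ → ℂ} {P Q : ℕ → ℕ → ℕ}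
      {S X Y : ℕ → ℕ → ℂ}, (∀ j < N, ∀ ω < g j, 0 < P j ω ∧ 0 < Q j ω) →
      A * ∑ j ∈ range N, f j * ∑ ω ∈ range (g j), u j ω * v j ω *
        tS (P j ω) (S j ω) (Q j ω) (X j ω) (Y j ω) t = 0 := by
    intro N A f g u v P Q S X Y hh
    rw [sum_eq_zero, mul_zero]
    intro j hj
    rw [sum_eq_zero, mul_zero]
    intro ω hω
    rw [mem_range] at hj hω
    rw [z _ _ _ _ _ (hh j hj ω hω).1 (hh j hj ω hω).2, mul_zero]
  rw [zz, zz, zz, zz]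
  · simp
  all_goals
    intro j hj ω hω
    constructor <;> omega

lemma tsum_gS {x : ℂ} {Λ : ℕ → ℂ} (hΛ : GoodLam x Λ) {p q a b c : ℕ} (hp : 0 < p) (hq : 0 < q)
    (ha : 0 < a) (hb : 0 < b) (hc : 0 < c) {s : ℂ} (hs : 1 < s.re) :
    ∑' t, gS (fun k => x ^ k) p q a b c s t = JG Λ x p q a b c s T := by
  have hx : ‖x‖ = 1 := hΛ.norm_eq
  have hx0 : x ≠ 0 := by rintro rfl; simp at hx
  have hsum : Summable (gS (fun k => x ^ k) p q a b c s) :=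
    summable_gS (fun k => by simp [norm_zpow, hx]) hp hq ha hb hc hs
  rw [hsum.tsum_prod, ← (hasSum_JG Λ hx hp hq hb hc hs).tsum_eq]
  refine tsum_congr fun t => ?_
  by_cases h : t.1 = 0 ∨ t.1 + (t.2 : ℤ) + 1 = 0
  · rw [JG_zero Λ x hq hb hc s t h]
    refine (tsum_congr fun l => ?_).trans tsum_zero
    rcases h with h | h
    · simp [gS, h, hq.ne']
    · simp only [gS, h]; simp [hb.ne']
  · push Not at h
    rw [← pointwise Λ hx0 hp hc s t h.1 h.2,
      ← tsum_inner hΛ h.1 h.2 (by omega) hp ha hc, ← tsum_mul_left]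
    refine tsum_congr fun l => ?_
    simp only [gS]
    rw [show l + 2 * t.1 + 3 * ((t.2 : ℤ) + 1) = (2 * t.1 + 3 * ((t.2 : ℤ) + 1)) + l by ring,
      zpow_add₀ hx0]
    ring

open Complex Finset Filter Topology

/-- Weight of the `PU(4)` sum. -/
noncomputable def wPU (k : ℤ) : ℂ := if k % 4 = 2 then 1 else 0

lemma norm_wPU (k : ℤ) : ‖wPU k‖ ≤ 1 := by
  unfold wPU; split_ifs <;> simp

/-- Denominator of the triple zeta sum. -/
noncomputable def zden (s₁ s₂ s₃ s₄ s₅ s₆ : ℂ) (u : ℕ × ℕ × ℕ) : ℂ :=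
  (((u.1 + 1 : ℕ) : ℂ)) ^ s₁ * (((u.2.1 + 1 : ℕ) : ℂ)) ^ s₂ *
        (((u.2.2 + 1 : ℕ) : ℂ)) ^ s₃ * (((u.1 + 1 + (u.2.1 + 1) : ℕ) : ℂ)) ^ s₄ *
        (((u.2.1 + 1 + (u.2.2 + 1) : ℕ) : ℂ)) ^ s₅ *
        (((u.1 + 1 + (u.2.1 + 1) + (u.2.2 + 1) : ℕ) : ℂ)) ^ s₆

/-- Summand of the `PU(4)` sum. -/
noncomputable def zterm (s₁ s₂ s₃ s₄ s₅ s₆ : ℂ) (u : ℕ × ℕ × ℕ) : ℂ :=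
  (if ((u.1 + 1) + 2 * (u.2.1 + 1) + 3 * (u.2.2 + 1)) % 4 = 2 then 1 else 0) /
    zden s₁ s₂ s₃ s₄ s₅ s₆ u

lemma ZPU4_eq (s₁ s₂ s₃ s₄ s₅ s₆ : ℂ) :
    ZPU4 s₁ s₂ s₃ s₄ s₅ s₆ = ∑' u, zterm s₁ s₂ s₃ s₄ s₅ s₆ u := rfl

lemma fac {k σ : ℤ} {m : ℕ} (h : k = σ * m) (hσ : σ = 1 ∨ σ = -1) (e : ℕ) :
    ((k : ℂ) ^ e)⁻¹ = (σ : ℂ) ^ e * ((m : ℂ) ^ (e : ℂ))⁻¹ := by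
  rw [cpow_natCast, h]
  rcases hσ with rfl | rfl
  · simp
  · push_cast
    rw [mul_pow, mul_inv, ← inv_pow]
    norm_num

lemma gS_eval {w : ℤ → ℂ} {p q a b c : ℕ} {s : ℂ} {t : (ℤ × ℕ) × ℤ} {A₁ A₂ A₃ A₄ A₅ A₆ : ℕ}
    {σ₁ σ₂ σ₄ σ₅ σ₆ : ℤ} (h₁ : t.2 = σ₁ * A₁) (h₂ : t.1.1 = σ₂ * A₂) (h₃ : (t.1.2 : ℤ) + 1 = A₃)
    (h₄ : t.2 + t.1.1 = σ₄ * A₄) (h₅ : t.1.1 + (t.1.2 : ℤ) + 1 = σ₅ * A₅)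
    (h₆ : t.2 + (t.1.1 + (t.1.2 : ℤ) + 1) = σ₆ * A₆)
    (k₁ : σ₁ = 1 ∨ σ₁ = -1) (k₂ : σ₂ = 1 ∨ σ₂ = -1) (k₄ : σ₄ = 1 ∨ σ₄ = -1)
    (k₅ : σ₅ = 1 ∨ σ₅ = -1) (k₆ : σ₆ = 1 ∨ σ₆ = -1) :
    gS w p q a b c s t = w (t.2 + 2 * t.1.1 + 3 * (t.1.2 + 1)) *
      ((σ₁ : ℂ) ^ p * (σ₂ : ℂ) ^ q * (σ₄ : ℂ) ^ a * (σ₅ : ℂ) ^ b * (σ₆ : ℂ) ^ c) *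
      ((A₁ : ℂ) ^ (p : ℂ) * (A₂ : ℂ) ^ (q : ℂ) * (A₃ : ℂ) ^ s * (A₄ : ℂ) ^ (a : ℂ) *
        (A₅ : ℂ) ^ (b : ℂ) * (A₆ : ℂ) ^ (c : ℂ))⁻¹ := by
  have h3' : t.1.2 + 1 = A₃ := by exact_mod_cast h₃
  rw [gS, fac h₁ k₁, fac h₂ k₂, fac h₄ k₄, fac h₅ k₅, fac h₆ k₆, h3']
  simp only [mul_inv]
  ring

lemma chamber_fin {k : ℤ} {S E Dn s₁ s₂ s₃ s₄ s₅ s₆ : ℂ} {u : ℕ × ℕ × ℕ}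
    (hk : k % 4 = 2 ↔ ((u.1 + 1) + 2 * (u.2.1 + 1) + 3 * (u.2.2 + 1)) % 4 = 2)
    (hS : S = E) (hD : Dn = zden s₁ s₂ s₃ s₄ s₅ s₆ u) :
    wPU k * S * Dn⁻¹ = E * zterm s₁ s₂ s₃ s₄ s₅ s₆ u := by
  rw [hS, hD, zterm, wPU]
  simp only [hk]
  ring

lemma chamber {f : (ℤ × ℕ) × ℤ → ℂ} {R : ℤ → ℤ → ℤ → Prop} [∀ L M N, Decidable (R L M N)]
    (hsum : Summable f) (Φ : ℕ × ℕ × ℕ → (ℤ × ℕ) × ℤ) (Ψ : (ℤ × ℕ) × ℤ → ℕ × ℕ × ℕ)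
    (hinj : Function.Injective Φ)
    (hR : ∀ u, R (Φ u).2 (Φ u).1.1 (((Φ u).1.2 : ℤ) + 1))
    (hΨ : ∀ t, R t.2 t.1.1 ((t.1.2 : ℤ) + 1) → Φ (Ψ t) = t)
    (ε s₁ s₂ s₃ s₄ s₅ s₆ : ℂ) (h : ∀ u, f (Φ u) = ε * zterm s₁ s₂ s₃ s₄ s₅ s₆ u) :
    HasSum (fun t => if R t.2 t.1.1 ((t.1.2 : ℤ) + 1) then f t else 0)
      (ε * ZPU4 s₁ s₂ s₃ s₄ s₅ s₆) := by
  rw [← hinj.hasSum_iff]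
  · have e : ((fun t : (ℤ × ℕ) × ℤ => if R t.2 t.1.1 ((t.1.2 : ℤ) + 1) then f t else 0) ∘ Φ) = f ∘ Φ := by
      funext u
      simp only [Function.comp, hR u, if_true]
    rw [e, ZPU4_eq, ← tsum_mul_left, ← tsum_congr h]
    exact (hsum.comp_injective hinj).hasSum
  · intro t ht
    rw [if_neg]
    intro hr
    exact ht ⟨Ψ t, hΨ t hr⟩

set_option maxHeartbeats 4000000 in
lemma Scomb_eq {p q a b c : ℕ} (hp : 0 < p) (hq : 0 < q)
    (ha : 0 < a) (hb : 0 < b) (hc : 0 < c) {s : ℂ} (hs : 1 < s.re) :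
    Scomb ZPU4 p q a b c s = ∑' t, gS wPU p q a b c s t := by
  have hsum : Summable (gS wPU p q a b c s) := summable_gS norm_wPU hp hq ha hb hc hs
  have h1 := chamber (R := fun L M N => 0 < L ∧ 0 < M) hsum
    (fun u => ((((u.2.1 + 1 : ℤ)), u.2.2), ((u.1 + 1 : ℤ))))
    (fun t => ((t.2 - 1).toNat, (t.1.1 - 1).toNat, ((t.1.2 + 1 : ℤ) - 1).toNat))
    (by rintro ⟨l, m, n⟩ ⟨l', m', n'⟩ h; simp only [Prod.mk.injEq] at h ⊢; omega)
    (by rintro ⟨l, m, n⟩; dsimp only; push_cast; omega)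
    (by
      rintro ⟨⟨M, N⟩, L⟩ h; dsimp only at h ⊢; ext <;> dsimp only <;> omega)
    (1) p q s a b c (fun u => by
      rw [gS_eval (A₁ := (u.1 + 1)) (A₂ := (u.2.1 + 1)) (A₃ := (u.2.2 + 1)) (A₄ := (u.1 + 1 + (u.2.1 + 1))) (A₅ := (u.2.1 + 1 + (u.2.2 + 1)))
        (A₆ := (u.1 + 1 + (u.2.1 + 1) + (u.2.2 + 1))) (σ₁ := 1) (σ₂ := 1) (σ₄ := 1) (σ₅ := 1) (σ₆ := 1)]
      · exact chamber_fin (by push_cast; omega) (by simp [pow_add]; try ring) (by simp only [zden]; try ring)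
      all_goals first | (norm_num; done) | (push_cast; ring))
  have h2 := chamber (R := fun L M N => L < 0 ∧ 0 < L + M) hsum
    (fun u => ((((u.1 + 1 : ℤ) + (u.2.1 + 1 : ℤ)), u.2.2), -((u.1 + 1 : ℤ))))
    (fun t => ((-t.2 - 1).toNat, (t.2 + t.1.1 - 1).toNat, ((t.1.2 + 1 : ℤ) - 1).toNat))
    (by rintro ⟨l, m, n⟩ ⟨l', m', n'⟩ h; simp only [Prod.mk.injEq] at h ⊢; omega)
    (by rintro ⟨l, m, n⟩; dsimp only; push_cast; omega)
    (by
      rintro ⟨⟨M, N⟩, L⟩ h; dsimp only at h ⊢; ext <;> dsimp only <;> omega)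
    ((-1 : ℂ) ^ (p)) p a s q c b (fun u => by
      rw [gS_eval (A₁ := (u.1 + 1)) (A₂ := (u.1 + 1 + (u.2.1 + 1))) (A₃ := (u.2.2 + 1)) (A₄ := (u.2.1 + 1)) (A₅ := (u.1 + 1 + (u.2.1 + 1) + (u.2.2 + 1)))
        (A₆ := (u.2.1 + 1 + (u.2.2 + 1))) (σ₁ := (-1)) (σ₂ := 1) (σ₄ := 1) (σ₅ := 1) (σ₆ := 1)]
      · exact chamber_fin (by push_cast; omega) (by simp [pow_add]; try ring) (by simp only [zden]; try ring)
      all_goals first | (norm_num; done) | (push_cast; ring))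
  have h3 := chamber (R := fun L M N => 0 < M ∧ L + M < 0 ∧ 0 < L + M + N) hsum
    (fun u => ((((u.1 + 1 : ℤ)), u.2.1 + u.2.2 + 1), -((u.1 + 1 : ℤ) + (u.2.1 + 1 : ℤ))))
    (fun t => ((t.1.1 - 1).toNat, (-t.2 - t.1.1 - 1).toNat, (t.2 + t.1.1 + (t.1.2 + 1 : ℤ) - 1).toNat))
    (by rintro ⟨l, m, n⟩ ⟨l', m', n'⟩ h; simp only [Prod.mk.injEq] at h ⊢; omega)
    (by rintro ⟨l, m, n⟩; dsimp only; push_cast; omega)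
    (by
      rintro ⟨⟨M, N⟩, L⟩ h; dsimp only at h ⊢; ext <;> dsimp only <;> omega)
    ((-1 : ℂ) ^ (p + a)) q a c p s b (fun u => by
      rw [gS_eval (A₁ := (u.1 + 1 + (u.2.1 + 1))) (A₂ := (u.1 + 1)) (A₃ := (u.2.1 + 1 + (u.2.2 + 1))) (A₄ := (u.2.1 + 1)) (A₅ := (u.1 + 1 + (u.2.1 + 1) + (u.2.2 + 1)))
        (A₆ := (u.2.2 + 1)) (σ₁ := (-1)) (σ₂ := 1) (σ₄ := (-1)) (σ₅ := 1) (σ₆ := 1)]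
      · exact chamber_fin (by push_cast; omega) (by simp [pow_add]; try ring) (by simp only [zden]; try ring)
      all_goals first | (norm_num; done) | (push_cast; ring))
  have h4 := chamber (R := fun L M N => 0 < M ∧ L + M + N < 0) hsum
    (fun u => ((((u.1 + 1 : ℤ)), u.2.1), -((u.1 + 1 : ℤ) + (u.2.1 + 1 : ℤ) + (u.2.2 + 1 : ℤ))))
    (fun t => ((t.1.1 - 1).toNat, ((t.1.2 + 1 : ℤ) - 1).toNat, (-(t.2 + t.1.1 + (t.1.2 + 1 : ℤ)) - 1).toNat))
    (by rintro ⟨l, m, n⟩ ⟨l', m', n'⟩ h; simp only [Prod.mk.injEq] at h ⊢; omega)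
    (by rintro ⟨l, m, n⟩; dsimp only; push_cast; omega)
    (by
      rintro ⟨⟨M, N⟩, L⟩ h; dsimp only at h ⊢; ext <;> dsimp only <;> omega)
    ((-1 : ℂ) ^ (p + a + c)) q s c b a p (fun u => by
      rw [gS_eval (A₁ := (u.1 + 1 + (u.2.1 + 1) + (u.2.2 + 1))) (A₂ := (u.1 + 1)) (A₃ := (u.2.1 + 1)) (A₄ := (u.2.1 + 1 + (u.2.2 + 1))) (A₅ := (u.1 + 1 + (u.2.1 + 1)))
        (A₆ := (u.2.2 + 1)) (σ₁ := (-1)) (σ₂ := 1) (σ₄ := (-1)) (σ₅ := 1) (σ₆ := (-1))]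
      · exact chamber_fin (by push_cast; omega) (by simp [pow_add]; try ring) (by simp only [zden]; try ring)
      all_goals first | (norm_num; done) | (push_cast; ring))
  have h5 := chamber (R := fun L M N => M < 0 ∧ 0 < L + M ∧ 0 < M + N) hsum
    (fun u => ((-((u.2.1 + 1 : ℤ)), u.2.1 + u.2.2 + 1), ((u.1 + 1 : ℤ) + (u.2.1 + 1 : ℤ))))
    (fun t => ((t.2 + t.1.1 - 1).toNat, (-t.1.1 - 1).toNat, (t.1.1 + (t.1.2 + 1 : ℤ) - 1).toNat))
    (by rintro ⟨l, m, n⟩ ⟨l', m', n'⟩ h; simp only [Prod.mk.injEq] at h ⊢; omega)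
    (by rintro ⟨l, m, n⟩; dsimp only; push_cast; omega)
    (by
      rintro ⟨⟨M, N⟩, L⟩ h; dsimp only at h ⊢; ext <;> dsimp only <;> omega)
    ((-1 : ℂ) ^ (q)) a q b p s c (fun u => by
      rw [gS_eval (A₁ := (u.1 + 1 + (u.2.1 + 1))) (A₂ := (u.2.1 + 1)) (A₃ := (u.2.1 + 1 + (u.2.2 + 1))) (A₄ := (u.1 + 1)) (A₅ := (u.2.2 + 1))
        (A₆ := (u.1 + 1 + (u.2.1 + 1) + (u.2.2 + 1))) (σ₁ := 1) (σ₂ := (-1)) (σ₄ := 1) (σ₅ := 1) (σ₆ := 1)]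
      · exact chamber_fin (by push_cast; omega) (by simp [pow_add]; try ring) (by simp only [zden]; try ring)
      all_goals first | (norm_num; done) | (push_cast; ring))
  have h6 := chamber (R := fun L M N => M + N < 0 ∧ 0 < L + M) hsum
    (fun u => ((-((u.2.1 + 1 : ℤ) + (u.2.2 + 1 : ℤ)), u.2.1), ((u.1 + 1 : ℤ) + (u.2.1 + 1 : ℤ) + (u.2.2 + 1 : ℤ))))
    (fun t => ((t.2 + t.1.1 - 1).toNat, ((t.1.2 + 1 : ℤ) - 1).toNat, (-(t.1.1 + (t.1.2 + 1 : ℤ)) - 1).toNat))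
    (by rintro ⟨l, m, n⟩ ⟨l', m', n'⟩ h; simp only [Prod.mk.injEq] at h ⊢; omega)
    (by rintro ⟨l, m, n⟩; dsimp only; push_cast; omega)
    (by
      rintro ⟨⟨M, N⟩, L⟩ h; dsimp only at h ⊢; ext <;> dsimp only <;> omega)
    ((-1 : ℂ) ^ (q + b)) a s b c q p (fun u => by
      rw [gS_eval (A₁ := (u.1 + 1 + (u.2.1 + 1) + (u.2.2 + 1))) (A₂ := (u.2.1 + 1 + (u.2.2 + 1))) (A₃ := (u.2.1 + 1)) (A₄ := (u.1 + 1)) (A₅ := (u.2.2 + 1))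
        (A₆ := (u.1 + 1 + (u.2.1 + 1))) (σ₁ := 1) (σ₂ := (-1)) (σ₄ := 1) (σ₅ := (-1)) (σ₆ := 1)]
      · exact chamber_fin (by push_cast; omega) (by simp [pow_add]; try ring) (by simp only [zden]; try ring)
      all_goals first | (norm_num; done) | (push_cast; ring))
  have h7 := chamber (R := fun L M N => 0 < L ∧ L + M < 0 ∧ 0 < M + N) hsum
    (fun u => ((-((u.1 + 1 : ℤ) + (u.2.1 + 1 : ℤ)), u.1 + u.2.1 + u.2.2 + 2), ((u.2.1 + 1 : ℤ))))
    (fun t => ((-(t.2 + t.1.1) - 1).toNat, (t.2 - 1).toNat, (t.1.1 + (t.1.2 + 1 : ℤ) - 1).toNat))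
    (by rintro ⟨l, m, n⟩ ⟨l', m', n'⟩ h; simp only [Prod.mk.injEq] at h ⊢; omega)
    (by rintro ⟨l, m, n⟩; dsimp only; push_cast; omega)
    (by
      rintro ⟨⟨M, N⟩, L⟩ h; dsimp only at h ⊢; ext <;> dsimp only <;> omega)
    ((-1 : ℂ) ^ (q + a)) a p b q c s (fun u => by
      rw [gS_eval (A₁ := (u.2.1 + 1)) (A₂ := (u.1 + 1 + (u.2.1 + 1))) (A₃ := (u.1 + 1 + (u.2.1 + 1) + (u.2.2 + 1))) (A₄ := (u.1 + 1)) (A₅ := (u.2.2 + 1))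
        (A₆ := (u.2.1 + 1 + (u.2.2 + 1))) (σ₁ := 1) (σ₂ := (-1)) (σ₄ := (-1)) (σ₅ := 1) (σ₆ := 1)]
      · exact chamber_fin (by push_cast; omega) (by simp [pow_add]; try ring) (by simp only [zden]; try ring)
      all_goals first | (norm_num; done) | (push_cast; ring))
  have h8 := chamber (R := fun L M N => L + M < 0 ∧ M + N < 0 ∧ 0 < L + M + N) hsum
    (fun u => ((-((u.1 + 1 : ℤ) + (u.2.1 + 1 : ℤ) + (u.2.2 + 1 : ℤ)), u.1 + u.2.1 + 1), ((u.2.1 + 1 : ℤ) + (u.2.2 + 1 : ℤ))))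
    (fun t => ((-(t.2 + t.1.1) - 1).toNat, (t.2 + t.1.1 + (t.1.2 + 1 : ℤ) - 1).toNat, (-(t.1.1 + (t.1.2 + 1 : ℤ)) - 1).toNat))
    (by rintro ⟨l, m, n⟩ ⟨l', m', n'⟩ h; simp only [Prod.mk.injEq] at h ⊢; omega)
    (by rintro ⟨l, m, n⟩; dsimp only; push_cast; omega)
    (by
      rintro ⟨⟨M, N⟩, L⟩ h; dsimp only at h ⊢; ext <;> dsimp only <;> omega)
    ((-1 : ℂ) ^ (q + a + b)) a c b s p q (fun u => by
      rw [gS_eval (A₁ := (u.2.1 + 1 + (u.2.2 + 1))) (A₂ := (u.1 + 1 + (u.2.1 + 1) + (u.2.2 + 1))) (A₃ := (u.1 + 1 + (u.2.1 + 1))) (A₄ := (u.1 + 1)) (A₅ := (u.2.2 + 1))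
        (A₆ := (u.2.1 + 1)) (σ₁ := 1) (σ₂ := (-1)) (σ₄ := (-1)) (σ₅ := (-1)) (σ₆ := 1)]
      · exact chamber_fin (by push_cast; omega) (by simp [pow_add]; try ring) (by simp only [zden]; try ring)
      all_goals first | (norm_num; done) | (push_cast; ring))
  have h9 := chamber (R := fun L M N => 0 < L ∧ L + M + N < 0) hsum
    (fun u => ((-((u.1 + 1 : ℤ) + (u.2.1 + 1 : ℤ) + (u.2.2 + 1 : ℤ)), u.1), ((u.2.2 + 1 : ℤ))))
    (fun t => (((t.1.2 + 1 : ℤ) - 1).toNat, (-(t.2 + t.1.1 + (t.1.2 + 1 : ℤ)) - 1).toNat, (t.2 - 1).toNat))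
    (by rintro ⟨l, m, n⟩ ⟨l', m', n'⟩ h; simp only [Prod.mk.injEq] at h ⊢; omega)
    (by rintro ⟨l, m, n⟩; dsimp only; push_cast; omega)
    (by
      rintro ⟨⟨M, N⟩, L⟩ h; dsimp only at h ⊢; ext <;> dsimp only <;> omega)
    ((-1 : ℂ) ^ (q + a + b + c)) s c p a b q (fun u => by
      rw [gS_eval (A₁ := (u.2.2 + 1)) (A₂ := (u.1 + 1 + (u.2.1 + 1) + (u.2.2 + 1))) (A₃ := (u.1 + 1)) (A₄ := (u.1 + 1 + (u.2.1 + 1))) (A₅ := (u.2.1 + 1 + (u.2.2 + 1)))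
        (A₆ := (u.2.1 + 1)) (σ₁ := 1) (σ₂ := (-1)) (σ₄ := (-1)) (σ₅ := (-1)) (σ₆ := (-1))]
      · exact chamber_fin (by push_cast; omega) (by simp [pow_add]; try ring) (by simp only [zden]; try ring)
      all_goals first | (norm_num; done) | (push_cast; ring))
  have h10 := chamber (R := fun L M N => L < 0 ∧ M < 0 ∧ 0 < L + M + N) hsum
    (fun u => ((-((u.1 + 1 : ℤ)), u.1 + u.2.1 + u.2.2 + 2), -((u.2.1 + 1 : ℤ))))
    (fun t => ((-t.1.1 - 1).toNat, (-t.2 - 1).toNat, (t.2 + t.1.1 + (t.1.2 + 1 : ℤ) - 1).toNat))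
    (by rintro ⟨l, m, n⟩ ⟨l', m', n'⟩ h; simp only [Prod.mk.injEq] at h ⊢; omega)
    (by rintro ⟨l, m, n⟩; dsimp only; push_cast; omega)
    (by
      rintro ⟨⟨M, N⟩, L⟩ h; dsimp only at h ⊢; ext <;> dsimp only <;> omega)
    ((-1 : ℂ) ^ (p + q + a)) q p c a b s (fun u => by
      rw [gS_eval (A₁ := (u.2.1 + 1)) (A₂ := (u.1 + 1)) (A₃ := (u.1 + 1 + (u.2.1 + 1) + (u.2.2 + 1))) (A₄ := (u.1 + 1 + (u.2.1 + 1))) (A₅ := (u.2.1 + 1 + (u.2.2 + 1)))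
        (A₆ := (u.2.2 + 1)) (σ₁ := (-1)) (σ₂ := (-1)) (σ₄ := (-1)) (σ₅ := 1) (σ₆ := 1)]
      · exact chamber_fin (by push_cast; omega) (by simp [pow_add]; try ring) (by simp only [zden]; try ring)
      all_goals first | (norm_num; done) | (push_cast; ring))
  have h11 := chamber (R := fun L M N => M < 0 ∧ 0 < M + N ∧ L + M + N < 0) hsum
    (fun u => ((-((u.1 + 1 : ℤ)), u.1 + u.2.1 + 1), -((u.2.1 + 1 : ℤ) + (u.2.2 + 1 : ℤ))))
    (fun t => ((-t.1.1 - 1).toNat, (t.1.1 + (t.1.2 + 1 : ℤ) - 1).toNat, (-(t.2 + t.1.1 + (t.1.2 + 1 : ℤ)) - 1).toNat))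
    (by rintro ⟨l, m, n⟩ ⟨l', m', n'⟩ h; simp only [Prod.mk.injEq] at h ⊢; omega)
    (by rintro ⟨l, m, n⟩; dsimp only; push_cast; omega)
    (by
      rintro ⟨⟨M, N⟩, L⟩ h; dsimp only at h ⊢; ext <;> dsimp only <;> omega)
    ((-1 : ℂ) ^ (p + q + a + c)) q b c s p a (fun u => by
      rw [gS_eval (A₁ := (u.2.1 + 1 + (u.2.2 + 1))) (A₂ := (u.1 + 1)) (A₃ := (u.1 + 1 + (u.2.1 + 1))) (A₄ := (u.1 + 1 + (u.2.1 + 1) + (u.2.2 + 1))) (A₅ := (u.2.1 + 1))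
        (A₆ := (u.2.2 + 1)) (σ₁ := (-1)) (σ₂ := (-1)) (σ₄ := (-1)) (σ₅ := 1) (σ₆ := (-1))]
      · exact chamber_fin (by push_cast; omega) (by simp [pow_add]; try ring) (by simp only [zden]; try ring)
      all_goals first | (norm_num; done) | (push_cast; ring))
  have h12 := chamber (R := fun L M N => L < 0 ∧ M + N < 0) hsum
    (fun u => ((-((u.1 + 1 : ℤ) + (u.2.1 + 1 : ℤ)), u.1), -((u.2.2 + 1 : ℤ))))
    (fun t => (((t.1.2 + 1 : ℤ) - 1).toNat, (-(t.1.1 + (t.1.2 + 1 : ℤ)) - 1).toNat, (-t.2 - 1).toNat))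
    (by rintro ⟨l, m, n⟩ ⟨l', m', n'⟩ h; simp only [Prod.mk.injEq] at h ⊢; omega)
    (by rintro ⟨l, m, n⟩; dsimp only; push_cast; omega)
    (by
      rintro ⟨⟨M, N⟩, L⟩ h; dsimp only at h ⊢; ext <;> dsimp only <;> omega)
    ((-1 : ℂ) ^ (p + q + a + b + c)) s b p q c a (fun u => by
      rw [gS_eval (A₁ := (u.2.2 + 1)) (A₂ := (u.1 + 1 + (u.2.1 + 1))) (A₃ := (u.1 + 1)) (A₄ := (u.1 + 1 + (u.2.1 + 1) + (u.2.2 + 1))) (A₅ := (u.2.1 + 1))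
        (A₆ := (u.2.1 + 1 + (u.2.2 + 1))) (σ₁ := (-1)) (σ₂ := (-1)) (σ₄ := (-1)) (σ₅ := (-1)) (σ₆ := (-1))]
      · exact chamber_fin (by push_cast; omega) (by simp [pow_add]; try ring) (by simp only [zden]; try ring)
      all_goals first | (norm_num; done) | (push_cast; ring))
  have H := ((((((((((h1.add h2).add h3).add h4).add h5).add h6).add h7).add h8).add h9).add
    h10).add h11).add h12
  rw [one_mul] at H
  rw [Scomb, ← H.tsum_eq]
  refine tsum_congr fun t => ?_
  by_cases hz : gS wPU p q a b c s t = 0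
  · simp [hz]
  · have z1 : t.2 ≠ 0 := fun h0 => hz (by simp [gS, h0, hp.ne'])
    have z2 : t.1.1 ≠ 0 := fun h0 => hz (by simp [gS, h0, hq.ne'])
    have z4 : t.2 + t.1.1 ≠ 0 := fun h0 => hz (by simp only [gS, h0]; simp [ha.ne'])
    have z5 : t.1.1 + ((t.1.2 : ℤ) + 1) ≠ 0 := fun h0 => hz (by
      simp only [gS, add_assoc, h0]; simp [hb.ne'])
    have z6 : t.2 + t.1.1 + ((t.1.2 : ℤ) + 1) ≠ 0 := fun h0 => hz (by
      have h0' : t.2 + (t.1.1 + (t.1.2 : ℤ) + 1) = 0 := by linarith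
      simp only [gS, h0']; simp [hc.ne'])
    have hN : 0 < (t.1.2 : ℤ) + 1 := by positivity
    generalize gS wPU p q a b c s t = g
    generalize (t.1.2 : ℤ) + 1 = N at *
    generalize t.2 = L at *
    generalize t.1.1 = M at *
    have dich : ∀ {k : ℤ}, k ≠ 0 → (0 < k ∧ ¬ k < 0) ∨ (k < 0 ∧ ¬ 0 < k) := by intro k hk; omega
    rcases dich z1 with ⟨a1, b1⟩ | ⟨a1, b1⟩ <;> rcases dich z2 with ⟨a2, b2⟩ | ⟨a2, b2⟩ <;>
    rcases dich z4 with ⟨a4, b4⟩ | ⟨a4, b4⟩ <;> rcases dich z5 with ⟨a5, b5⟩ | ⟨a5, b5⟩ <;>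
    rcases dich z6 with ⟨a6, b6⟩ | ⟨a6, b6⟩ <;>
    first
      | (exfalso; omega)
      | (simp only [a1, b1, a2, b2, a4, b4, a5, b5, a6, b6, and_true, and_false,
          if_true, if_false, add_zero, zero_add])

open Complex Finset Filter Topology

lemma even_sum (f : ℕ → ℂ) (hf : ∀ j, ¬ Even j → f j = 0) (P : ℕ) :
    ∑ j ∈ range (P + 1), f j = ∑ i ∈ range (P / 2 + 1), f (2 * i) := by
  symm
  refine sum_of_injOn (fun i => 2 * i) (fun i _ j _ h => by simpa using h) ?_ ?_ ?_
  · intro i hi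
    simp only [coe_range, Set.mem_Iio] at hi ⊢
    omega
  · intro j hj hj'
    refine hf j fun ⟨r, hr⟩ => hj' ?_
    rw [mem_range] at hj
    exact ⟨r, by simp only [coe_range, Set.mem_Iio]; omega, by dsimp only; omega⟩
  · intro i hi; rfl

lemma J3_eq (p q a b c : ℕ) (s : ℂ) : J3 p q a b c s = JG LamI I p q a b c s T := by
  rw [JG, J3, I_sq, I_pow_three]

lemma J1_eq (p q a b c : ℕ) (s : ℂ) : J1 p q a b c s = JG LamNegI (-I) p q a b c s T := by
  have h2 : (-I) ^ 2 = -1 := by rw [neg_sq, I_sq]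
  have h3 : (-I) ^ 3 = I := by rw [pow_succ, h2]; ring
  rw [JG, J1, h2, h3]

lemma JG_even (x : ℂ) (Λ : ℕ → ℂ) (z : ℂ → ℂ) (hΛ : ∀ j : ℕ, Λ j = if Even j then 2 * z j else 0)
    (p q a b c : ℕ) (s : ℂ) (τ : ℕ → ℂ → ℕ → ℂ → ℂ → ℂ) : JG Λ x p q a b c s τ =
  2 * (-1 : ℂ) ^ p * ∑ j ∈ range (p / 2 + 1), z (2 * j) *
      ∑ ω ∈ range (p - 2 * j + 1),
        (Nat.choose (ω + a - 1) ω : ℂ) * (Nat.choose (p + c - 2 * j - ω - 1) (c - 1) : ℂ) *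
          τ (q + a + ω) s (p + b + c - 2 * j - ω) (x ^ 2) (x ^ 3) +
  2 * (-1 : ℂ) ^ (p + a) * ∑ j ∈ range (c / 2 + 1), z (2 * j) *
      ∑ ω ∈ range (c - 2 * j + 1),
        (Nat.choose (ω + a - 1) ω : ℂ) * (Nat.choose (p + c - 2 * j - ω - 1) (p - 1) : ℂ) *
          τ q (s + a + ω) (p + b + c - 2 * j - ω) x (x ^ 2) +
  2 * (-1 : ℂ) ^ p * ∑ j ∈ range (a / 2 + 1), z (2 * j) *
      ∑ ω ∈ range p,
        (Nat.choose (ω + a - 2 * j) ω : ℂ) * (Nat.choose (p + c - 2 - ω) (c - 1) : ℂ) *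
          τ (q + a - 2 * j + ω + 1) s (p + b + c - 1 - ω) x (x ^ 3) +
  2 * (-1 : ℂ) ^ (p + a) * ∑ j ∈ range (a / 2 + 1), z (2 * j) *
      ∑ ω ∈ range c,
        (Nat.choose (ω + a - 2 * j) ω : ℂ) * (Nat.choose (p + c - 2 - ω) (p - 1) : ℂ) *
          τ q (s + ((a - 2 * j : ℕ) : ℂ) + ω + 1) (p + b + c - 1 - ω) x (x ^ 3) := by
  have ho : ∀ j, ¬ Even j → Λ j = 0 := fun j hj => by rw [hΛ, if_neg hj]
  have he : ∀ j, Λ (2 * j) = 2 * z (2 * j) := fun j => by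
    rw [hΛ, if_pos (even_two_mul j)]; push_cast; rfl
  have hs : ∀ j, (-1 : ℂ) ^ (2 * j) = 1 := fun j => by rw [pow_mul]; simp
  unfold JG
  rw [even_sum _ (fun j hj => by rw [ho j hj]; ring) p, even_sum _ (fun j hj => by rw [ho j hj]; ring) c,
    even_sum _ (fun j hj => by rw [ho j hj]; ring) a, even_sum _ (fun j hj => by rw [ho j hj]; ring) a]
  have hm : ∀ (e : ℂ) (N : ℕ) (G : ℕ → ℂ), e * ∑ j ∈ range N, 2 * z (2 * j) * G j =
      2 * e * ∑ j ∈ range N, z (2 * j) * G j := by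
    intro e N G
    rw [mul_sum, mul_sum]
    exact sum_congr rfl fun j _ => by ring
  simp only [hs, one_mul, he]
  rw [hm, hm, hm, hm]

lemma J0_eq (p q a b c : ℕ) (s : ℂ) : J0 p q a b c s = JG LamOne 1 p q a b c s T := by
  rw [JG_even 1 LamOne riemannZeta (fun j => rfl), J0, one_pow, one_pow]

lemma J2_eq (p q a b c : ℕ) (s : ℂ) : J2 p q a b c s = JG LamNegOne (-1) p q a b c s T := by
  have h2 : (-1 : ℂ) ^ 2 = 1 := by norm_num
  have h3 : (-1 : ℂ) ^ 3 = -1 := by norm_num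
  rw [JG_even (-1) LamNegOne phi (fun j => rfl), J2, h2, h3]

lemma wPU_eq (k : ℤ) :
    wPU k = 1 / 4 * (1 ^ k - (-I) ^ k + (-1) ^ k - I ^ k) := by
  have hI : I ^ (4 : ℤ) = 1 := by
    rw [show (4 : ℤ) = ((4 : ℕ) : ℤ) from rfl, zpow_natCast, I_pow_four]
  have hnI : (-I) ^ (4 : ℤ) = 1 := by
    rw [show (4 : ℤ) = ((4 : ℕ) : ℤ) from rfl, zpow_natCast, neg_pow, I_pow_four]; norm_num
  have hn : (-1 : ℂ) ^ (4 : ℤ) = 1 := by norm_num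
  have hnI0 : -I ≠ 0 := neg_ne_zero.mpr I_ne_zero
  have red : ∀ {x : ℂ}, x ≠ 0 → x ^ (4 : ℤ) = 1 → x ^ k = x ^ (k % 4) := by
    intro x hx h
    conv_lhs => rw [← Int.mul_ediv_add_emod k 4, zpow_add₀ hx, zpow_mul, h, one_zpow, one_mul]
  rw [one_zpow, red hnI0 hnI, red I_ne_zero hI, red (by norm_num) hn, wPU]
  have h0 := Int.emod_nonneg k (show (4 : ℤ) ≠ 0 by norm_num)
  have h1 := Int.emod_lt_of_pos k (show (0 : ℤ) < 4 by norm_num)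
  generalize k % 4 = r at *
  have h2 : (-I) ^ 2 = -1 := by rw [neg_sq, I_sq]
  have h3 : (-I) ^ 3 = I := by rw [pow_succ, h2]; ring
  have z2 : ∀ x : ℂ, x ^ (2 : ℤ) = x ^ 2 := fun x => by norm_cast
  have z3 : ∀ x : ℂ, x ^ (3 : ℤ) = x ^ 3 := fun x => by norm_cast
  interval_cases r
  · norm_num
  · norm_num
  · rw [z2, z2, z2, h2, I_sq]; norm_num
  · rw [z3, z3, z3, h3, I_pow_three]; norm_num; ring

/-- Functional relation for `ζ₃(·,0;PU(4))`
(Theorem 7.4 of Komori–Matsumoto–Tsumura). -/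
theorem functional_relation_PU4 (p q a b c : ℕ) (hp : 0 < p) (hq : 0 < q) (ha : 0 < a)
    (hb : 0 < b) (hc : 0 < c) (s : ℂ) (hs : 1 < s.re) :
    Scomb ZPU4 p q a b c s =
      (1 / 4) * (J0 p q a b c s - J1 p q a b c s + J2 p q a b c s - J3 p q a b c s) := by
  rw [Scomb_eq hp hq ha hb hc hs, J0_eq, J1_eq, J2_eq, J3_eq,
    ← tsum_gS goodLam_one hp hq ha hb hc hs, ← tsum_gS goodLam_neg_one hp hq ha hb hc hs,
    ← tsum_gS goodLam_I hp hq ha hb hc hs, ← tsum_gS goodLam_neg_I hp hq ha hb hc hs]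
  have sm : ∀ x : ℂ, ‖x‖ = 1 → Summable (gS (fun k => x ^ k) p q a b c s) := fun x hx =>
    summable_gS (fun k => by simp [norm_zpow, hx]) hp hq ha hb hc hs
  have s1 := sm 1 (by simp)
  have s2 := sm (-1) (by simp)
  have s3 := sm I (by simp)
  have s4 := sm (-I) (by simp)
  rw [← s1.tsum_sub s4, ← (s1.sub s4).tsum_add s2, ← ((s1.sub s4).add s2).tsum_sub s3,
    ← tsum_mul_left]
  refine tsum_congr fun t => ?_
  simp only [gS, wPU_eq]
  ring
end

section
/- Let p and q be positive integers, let s be a real number with s > 1, let x be a complex number with |x| = 1, and let θ ∈ [−π, π]. Then Σ_{l ≠ 0, m ≥ 1, l+m ≠ 0} (−1)^{l+m} x^m e^{i(l+m)θ} / (l^p m^s (l+m)^q) − 2 Σ_{j=0}^{p} φ(p−j) ε_{p−j} Σ_{ξ=0}^{j} C(q−1+j−ξ, q−1) (−1)^{j−ξ} (Σ_{m=1}^{∞} (−1)^m x^m e^{imθ} / m^{s+q+j−ξ}) (iθ)^ξ/ξ! + 2 Σ_{j=0}^{q} φ(q−j) ε_{q−j} Σ_{ξ=0}^{j} C(p−1+j−ξ,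 p−1) (−1)^{p−1} (Σ_{m=1}^{∞} x^m / m^{s+p+j−ξ}) (iθ)^ξ/ξ! = 0, where C(n,k) denotes the binomial coefficient and the first sum runs over integers l ≠ 0 and integers m ≥ 1 with l + m ≠ 0 (it converges absolutely). -/
open Complex Finset Real

/-- `ε_m = (1 + (-1)^m)/2`. -/
noncomputable def eps (m : ℕ) : ℂ := (1 + (-1 : ℂ) ^ m) / 2

/-- The polynomial part. -/
noncomputable def Spoly (θ : ℝ) (k : ℕ) : ℂ :=
  2 * ∑ ξ ∈ range (k + 1), phi ((k - ξ : ℕ) : ℂ) * eps (k - ξ) *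
    ((Complex.I * θ) ^ ξ / (Nat.factorial ξ : ℂ))

noncomputable def Gsum (S : ℕ → ℂ) (z m : ℂ) (q p : ℕ) : ℂ :=
  ∑ r ∈ range (p + 1), (Nat.multichoose q r : ℂ) * z ^ r * S (p - r) / m ^ (q + r)

noncomputable def Rsum (S : ℕ → ℂ) (w : ℂ) (m : ℕ) (p q : ℕ) : ℂ :=
  w ^ m * Gsum S (-1) m q p + (-1) ^ p * Gsum S 1 m p q

noncomputable def Tterm (w : ℂ) (m : ℕ) (p q : ℕ) (l : ℤ) : ℂ :=
  if l ≠ 0 ∧ l + (m : ℤ) ≠ 0 then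
    w ^ (l + (m : ℤ)) / ((l : ℂ) ^ p * ((l : ℂ) + m) ^ q) else 0

lemma Gsum_rec (S : ℕ → ℂ) (z m : ℂ) (hm : m ≠ 0) (q p : ℕ) :
    m * Gsum S z m (q + 1) (p + 1) = Gsum S z m q (p + 1) + z * Gsum S z m (q + 1) p := by
  unfold Gsum
  rw [sum_range_succ' _ (p + 1), sum_range_succ' _ (p + 1), mul_add, mul_sum, mul_sum]
  refine Eq.trans ?_ (add_right_comm _ _ _)
  rw [← sum_add_distrib]
  congr 1
  · apply sum_congr rfl
    intro r _
    rw [Nat.multichoose_succ_succ, Nat.add_sub_add_right]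
    push_cast
    field_simp
    ring
  · simp only [Nat.multichoose_zero_right]
    field_simp
    ring

lemma Rsum_rec (S : ℕ → ℂ) (w : ℂ) (m : ℕ) (hm : m ≠ 0) (p q : ℕ) :
    Rsum S w m (p + 1) (q + 1) = (Rsum S w m (p + 1) q - Rsum S w m p (q + 1)) / m := by
  have hm' : (m : ℂ) ≠ 0 := by exact_mod_cast hm
  have h1 := Gsum_rec S (-1) m hm' q p
  have h2 := Gsum_rec S 1 m hm' p q
  rw [eq_div_iff hm']
  unfold Rsum
  linear_combination w ^ m * h1 + (-1) ^ (p + 1) * h2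

lemma Gsum_zero (S : ℕ → ℂ) (z m : ℂ) (p : ℕ) : Gsum S z m 0 p = S p := by
  unfold Gsum
  rw [sum_range_succ']
  simp [Nat.multichoose_zero_succ]

lemma Gsum_zero' (S : ℕ → ℂ) (z m : ℂ) (q : ℕ) : Gsum S z m q 0 = S 0 / m ^ q := by
  simp [Gsum]

lemma Tterm_rec (w : ℂ) (m : ℕ) (hm : m ≠ 0) (p q : ℕ) (l : ℤ) :
    Tterm w m (p + 1) (q + 1) l = (Tterm w m (p + 1) q l - Tterm w m p (q + 1) l) / m := by
  have hm' : (m : ℂ) ≠ 0 := by exact_mod_cast hm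
  unfold Tterm
  split_ifs with h
  · have h1 : (l : ℂ) ≠ 0 := by exact_mod_cast h.1
    have h2 : (l : ℂ) + m ≠ 0 := by exact_mod_cast h.2
    field_simp
    ring
  · simp

lemma phi_eps_value (k : ℕ) :
    2 * (phi k * eps k) =
      -(2 * π * I) ^ k / (Nat.factorial k : ℂ) * (bernoulliFun k 2⁻¹ : ℝ) := by
  rcases Nat.even_or_odd' k with ⟨n, rfl | rfl⟩
  · rcases eq_or_ne n 0 with rfl | hn
    · simp [phi, eps, riemannZeta_zero]; norm_num
    · have h1 : ((2 * n : ℕ) : ℂ) ≠ 1 := by norm_cast; omega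
      rw [phi, if_neg h1, bernoulliFun_eval_half, eps, Even.neg_one_pow (even_two_mul n)]
      have := riemannZeta_two_mul_nat hn
      push_cast at this ⊢
      rw [this, Complex.cpow_sub _ _ two_ne_zero, Complex.cpow_one]
      have h2 : (2 : ℂ) ^ (2 * (n : ℂ)) = 2 ^ (2 * n) := by
        rw [← Complex.cpow_natCast]; push_cast; rfl
      rw [h2, mul_pow (2 * (π : ℂ)) I, pow_mul I, I_sq, mul_pow 2 (π : ℂ)]
      obtain ⟨k, rfl⟩ := Nat.exists_eq_succ_of_ne_zero hn
      have h3 : (2 : ℂ) ^ (2 * (k+1)) = 2 * 2 ^ (2 * (k + 1) - 1) := by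
        rw [← pow_succ']; congr 1
      simp only [Nat.succ_eq_add_one] at *
      generalize ((2 : ℂ) ^ (2 * (k+1) - 1)) = u at *
      rw [h3]
      ring
  · rw [bernoulliFun_eval_half_eq_zero]
    simp [eps, pow_succ, pow_mul]

lemma Spoly_hasDerivAt (k : ℕ) (θ : ℝ) :
    HasDerivAt (fun θ : ℝ => Spoly θ (k + 1)) (I * Spoly θ k) θ := by
  unfold Spoly
  have h : ∀ ξ : ℕ, HasDerivAt (fun θ : ℝ => (I * (θ : ℂ)) ^ (ξ + 1) / ((ξ + 1).factorial : ℂ))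
      (I * ((I * (θ : ℂ)) ^ ξ / (ξ.factorial : ℂ))) θ := by
    intro ξ
    have h0 : HasDerivAt (fun θ : ℝ => I * (θ : ℂ)) (I * 1) θ :=
      (Complex.ofRealCLM.hasDerivAt (x := θ)).const_mul I
    have h1 := (h0.pow (ξ + 1)).div_const ((ξ + 1).factorial : ℂ)
    refine h1.congr_deriv ?_
    have : ((ξ : ℂ) + 1) ≠ 0 := by exact_mod_cast Nat.succ_ne_zero ξ
    have h3 : (ξ.factorial : ℂ) ≠ 0 := by exact_mod_cast Nat.factorial_ne_zero ξ
    rw [Nat.factorial_succ]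
    push_cast
    field_simp
  have h2 : HasDerivAt (fun θ : ℝ => 2 * (∑ ξ ∈ range (k + 1), phi ((k - ξ : ℕ) : ℂ) * eps (k - ξ) *
      ((Complex.I * θ) ^ (ξ + 1) / (Nat.factorial (ξ + 1) : ℂ)) + phi ((k + 1 : ℕ) : ℂ) * eps (k + 1)))
      (2 * (∑ ξ ∈ range (k + 1), phi ((k - ξ : ℕ) : ℂ) * eps (k - ξ) *
      (I * ((Complex.I * θ) ^ ξ / (Nat.factorial ξ : ℂ))))) θ := by
    refine HasDerivAt.const_mul _ (HasDerivAt.add_const _ ?_)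
    apply HasDerivAt.fun_sum
    intro ξ _
    exact (h ξ).const_mul _
  refine (h2.congr_deriv ?_).congr_of_eventuallyEq ?_
  · simp only [mul_sum]
    apply sum_congr rfl
    intros; ring
  · refine Filter.Eventually.of_forall fun θ => ?_
    simp only
    rw [sum_range_succ']
    simp

lemma Spoly_eq (k : ℕ) (θ : ℝ) :
    Spoly θ k = -(2 * π * I) ^ k / (Nat.factorial k : ℂ) *
      (bernoulliFun k (θ / (2 * π) + 2⁻¹) : ℝ) := by
  induction k generalizing θ with
  | zero =>
    have := phi_eps_value 0
    simp only [bernoulliFun_zero] at this ⊢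
    rw [← this]
    simp [Spoly]
  | succ k ih =>
    let f : ℝ → ℂ := fun θ => Spoly θ (k + 1) - -(2 * π * I) ^ (k + 1) / (Nat.factorial (k + 1) : ℂ) *
      (bernoulliFun (k + 1) (θ / (2 * π) + 2⁻¹) : ℝ)
    have hd : ∀ θ, HasDerivAt f 0 θ := by
      intro θ
      have h1 := (hasDerivAt_bernoulliFun (k + 1) (θ / (2 * π) + 2⁻¹)).comp θ
        (((hasDerivAt_id' θ).div_const (2 * π)).add_const 2⁻¹)
      have h2 := (h1.ofReal_comp).const_mul (-(2 * π * I) ^ (k + 1) / (Nat.factorial (k + 1) : ℂ))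
      refine ((Spoly_hasDerivAt k θ).sub h2).congr_deriv ?_
      rw [ih, Nat.factorial_succ]
      have : ((k : ℂ) + 1) ≠ 0 := by exact_mod_cast Nat.succ_ne_zero k
      have h3 : (k.factorial : ℂ) ≠ 0 := by exact_mod_cast Nat.factorial_ne_zero k
      have h4 : (π : ℂ) ≠ 0 := by exact_mod_cast Real.pi_ne_zero
      rw [Nat.add_sub_cancel]
      generalize bernoulliFun k _ = b
      push_cast
      field_simp
      ring
    have hc := is_const_of_deriv_eq_zero (fun x => (hd x).differentiableAt) (fun x => (hd x).deriv) θ 0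
    have h0 : f 0 = 0 := by
      simp only [f]
      rw [zero_div, zero_add, ← phi_eps_value (k + 1), Spoly, sum_range_succ']
      simp
    rw [h0] at hc
    exact sub_eq_zero.mp hc

lemma fourier_eq_zpow (θ : ℝ) (n : ℤ) :
    fourier n (((θ / (2 * π) + 2⁻¹ : ℝ)) : UnitAddCircle) = (-Complex.exp (I * θ)) ^ n := by
  rw [fourier_coe_apply]
  have h4 : (π : ℂ) ≠ 0 := by exact_mod_cast Real.pi_ne_zero
  have : -Complex.exp (I * θ) = Complex.exp (π * I + I * θ) := by
    rw [Complex.exp_add, Complex.exp_pi_mul_I]; ring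
  rw [this, ← Complex.exp_int_mul]
  congr 1
  push_cast
  field_simp
  ring

lemma param_mem {θ : ℝ} (hθ : θ ∈ Set.Icc (-π) π) :
    θ / (2 * π) + 2⁻¹ ∈ Set.Icc (0 : ℝ) 1 := by
  have h := Real.pi_pos
  have e : θ / (2 * π) + 2⁻¹ = (θ + π) / (2 * π) := by field_simp
  rw [e]
  constructor
  · apply div_nonneg <;> linarith [hθ.1]
  · rw [div_le_one (by positivity)]; linarith [hθ.2]

lemma hasSum_S {θ : ℝ} (hθ : θ ∈ Set.Icc (-π) π) {k : ℕ} (hk : 2 ≤ k) :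
    HasSum (fun n : ℤ => (-Complex.exp (I * θ)) ^ n / (n : ℂ) ^ k) (Spoly θ k) := by
  rw [Spoly_eq]
  convert hasSum_one_div_pow_mul_fourier_mul_bernoulliFun hk (param_mem hθ) using 2 with n
  rw [fourier_eq_zpow]; ring

lemma summable_T11 (m : ℕ) :
    Summable (fun l : ℤ => if l ≠ 0 ∧ l + (m : ℤ) ≠ 0 then
      (1 : ℂ) / ((l : ℂ) * ((l : ℂ) + m)) else 0) := by
  have h1 : Summable (fun l : ℤ => 1 / (l : ℝ) ^ 2) := Real.summable_one_div_int_pow.mpr (by norm_num)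
  have h2 : Summable (fun l : ℤ => 1 / ((l + (m : ℤ) : ℤ) : ℝ) ^ 2) :=
    (Equiv.addRight (m : ℤ)).summable_iff (f := fun l : ℤ => 1 / (l : ℝ) ^ 2) |>.mpr h1
  refine Summable.of_norm_bounded (h1.add h2) fun l => ?_
  split_ifs with h
  · rw [norm_div, norm_mul, norm_one]
    have e1 : ‖(l : ℂ)‖ = |(l : ℝ)| := by simp
    have e2 : ‖(l : ℂ) + m‖ = |((l + (m : ℤ) : ℤ) : ℝ)| := by
      rw [show (l : ℂ) + m = ((l + (m : ℤ) : ℤ) : ℂ) by push_cast; rfl, Complex.norm_intCast]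
    rw [e1, e2, ← sq_abs (l : ℝ), ← sq_abs ((l + (m : ℤ) : ℤ) : ℝ)]
    have p1 : 0 < |(l : ℝ)| := abs_pos.mpr (by exact_mod_cast h.1)
    have p2 : 0 < |((l + (m : ℤ) : ℤ) : ℝ)| := abs_pos.mpr (by exact_mod_cast h.2)
    generalize |(l : ℝ)| = a at *
    generalize |((l + (m : ℤ) : ℤ) : ℝ)| = b at *
    rw [div_add_div _ _ (by positivity) (by positivity), div_le_div_iff₀ (by positivity) (by positivity)]
    nlinarith [mul_pos p1 p2, sq_nonneg (a - b), mul_nonneg (mul_pos p1 p2).le (sq_nonneg (a - b)), mul_nonneg (mul_pos p1 p2).le (mul_pos p1 p2).le]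
  · simp; positivity

lemma inv_sub_inv_split (m : ℕ) (hm : m ≠ 0) (l : ℤ) :
    (1 : ℂ) / l - 1 / ((l : ℂ) + m) =
      m * (if l ≠ 0 ∧ l + (m : ℤ) ≠ 0 then (1 : ℂ) / ((l : ℂ) * ((l : ℂ) + m)) else 0)
      + ((if l = 0 then -1 / (m : ℂ) else 0) + (if l = -(m : ℤ) then -1 / (m : ℂ) else 0)) := by
  have hm' : (m : ℂ) ≠ 0 := by exact_mod_cast hm
  by_cases h1 : l = 0
  · subst h1
    have : (0 : ℤ) ≠ -(m : ℤ) := by omega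
    rw [if_neg (by simp), if_pos rfl, if_neg this]
    simp; ring
  · by_cases h2 : l = -(m : ℤ)
    · subst h2
      rw [if_neg (by simp), if_neg h1, if_pos rfl]
      push_cast
      simp; ring
    · have h3 : l + (m : ℤ) ≠ 0 := by omega
      rw [if_pos ⟨h1, h3⟩, if_neg h1, if_neg h2]
      have h1' : (l : ℂ) ≠ 0 := by exact_mod_cast h1
      have h2' : (l : ℂ) + m ≠ 0 := by exact_mod_cast h3
      field_simp
      ring

lemma summable_diff (m : ℕ) (hm : m ≠ 0) :
    Summable (fun l : ℤ => (1 : ℂ) / l - 1 / ((l : ℂ) + m)) := by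
  simp_rw [inv_sub_inv_split m hm]
  exact ((summable_T11 m).mul_left _).add
    ((hasSum_ite_eq 0 _).summable.add (hasSum_ite_eq (-(m : ℤ)) _).summable)

lemma fourierCoeff_aux (m : ℕ) (n : ℤ) :
    fourierCoeff (AddCircle.liftIco 1 0 (fun t : ℝ => (fourier (m : ℤ) (t : UnitAddCircle) - 1) *
      (bernoulliFun 1 t : ℂ))) n =
    -1 / (2 * π * I * (n - m : ℤ)) - -1 / (2 * π * I * n) := by
  have hb : ∀ k : ℤ, ∫ t in (0 : ℝ)..1, fourier (-k) (t : UnitAddCircle) * (bernoulliFun 1 t : ℂ)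
      = -1 / (2 * π * I * k) := by
    intro k
    have := bernoulliFourierCoeff_eq one_ne_zero k
    rw [bernoulliFourierCoeff, fourierCoeffOn_eq_integral] at this
    simp only [fourier_coe_apply, smul_eq_mul] at this ⊢
    simpa [-bernoulliFun_one, -fourier_apply] using this
  have hcont : ∀ k : ℤ, Continuous fun t : ℝ => fourier k (t : UnitAddCircle) := by
    intro k
    exact (fourier k).continuous.comp (AddCircle.continuous_mk' 1)
  have hi : ∀ k : ℤ, IntervalIntegrable (fun t : ℝ => fourier (-k) (t : UnitAddCircle) *
      (bernoulliFun 1 t : ℂ)) MeasureTheory.volume 0 1 := by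
    intro k
    apply Continuous.intervalIntegrable
    exact (hcont _).mul (continuous_ofReal.comp (continuous_bernoulliFun 1))
  rw [← hb, ← hb, ← intervalIntegral.integral_sub (hi _) (hi _), fourierCoeff_liftIco_eq,
    fourierCoeffOn_eq_integral]
  simp only [zero_add, sub_zero, div_one, one_smul]
  apply intervalIntegral.integral_congr
  intro t _
  simp only [smul_eq_mul]
  rw [show -(n - (m : ℤ)) = -n + m by ring, fourier_add]
  simp only [fourier_coe_apply]
  push_cast
  simp only [zero_add, sub_zero]
  ring

lemma hasSum_conv {f g : ℤ → ℂ} {a b : ℂ} (h : HasSum f a) (hfg : ∀ l, g l = f l) (hab : b = a) :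
    HasSum g b := by
  rw [hab, show g = f from funext hfg]; exact h

lemma hasSum_diff {θ : ℝ} (hθ : θ ∈ Set.Icc (-π) π) (m : ℕ) (hm : m ≠ 0) :
    HasSum (fun l : ℤ => (-Complex.exp (I * θ)) ^ (l + (m : ℤ)) *
      ((1 : ℂ) / l - 1 / ((l : ℂ) + m)))
      (((-Complex.exp (I * θ)) ^ m - 1) * Spoly θ 1) := by
  have hpi : (2 * π * I : ℂ) ≠ 0 := two_pi_I_ne_zero
  let g0 : ℝ → ℂ := fun t : ℝ => (fourier (m : ℤ) (t : UnitAddCircle) - 1) *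
      (bernoulliFun 1 t : ℂ)
  have hg0 : Continuous g0 := by
    refine Continuous.mul (Continuous.sub ?_ continuous_const)
      (continuous_ofReal.comp (continuous_bernoulliFun 1))
    exact (fourier (m : ℤ)).continuous.comp (AddCircle.continuous_mk' 1)
  have e0 : g0 0 = 0 := by simp [g0, -fourier_apply, fourier_eval_zero]
  have e1 : g0 1 = 0 := by
    have : ((1 : ℝ) : UnitAddCircle) = ((0 : ℝ) : UnitAddCircle) := by
      rw [AddCircle.coe_period]; rfl
    simp only [g0, this]
    simp [-fourier_apply, fourier_eval_zero]
  let g : C(UnitAddCircle, ℂ) := ⟨AddCircle.liftIco 1 0 g0,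
    AddCircle.liftIco_zero_continuous (by rw [e0, e1]) hg0.continuousOn⟩
  have hgc : ∀ n, fourierCoeff g n = -1 / (2 * π * I * (n - m : ℤ)) - -1 / (2 * π * I * n) :=
    fourierCoeff_aux m
  have hgc' : ∀ l : ℤ, fourierCoeff g (l + m) =
      (-1 / (2 * π * I)) * ((1 : ℂ) / l - 1 / ((l : ℂ) + m)) := by
    intro l
    rw [hgc, add_sub_cancel_right]
    push_cast
    rw [← div_div (-1 : ℂ) (2 * π * I), ← div_div (-1 : ℂ) (2 * π * I)]
    generalize (-1 : ℂ) / (2 * π * I) = c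
    ring
  have hs : Summable (fourierCoeff g) := by
    rw [← (Equiv.addRight (m : ℤ)).summable_iff]
    exact ((summable_diff m hm).mul_left (-1 / (2 * π * I))).congr fun l => (hgc' l).symm
  have hgv : ∀ t ∈ Set.Icc (0 : ℝ) 1, g (t : UnitAddCircle) = g0 t := by
    intro t ht
    rcases eq_or_lt_of_le ht.2 with h | h
    · rw [h, e1]
      have : ((1 : ℝ) : UnitAddCircle) = ((0 : ℝ) : UnitAddCircle) := by
        rw [AddCircle.coe_period]; rfl
      rw [this]
      show AddCircle.liftIco 1 0 g0 _ = _
      rw [AddCircle.liftIco_coe_apply (by simp), e0]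
    · show AddCircle.liftIco 1 0 g0 _ = _
      rw [AddCircle.liftIco_coe_apply (by simpa using ⟨ht.1, h⟩)]
  have key := has_pointwise_sum_fourier_series_of_summable hs
    ((θ / (2 * π) + 2⁻¹ : ℝ) : UnitAddCircle)
  rw [hgv _ (param_mem hθ), ← (Equiv.addRight (m : ℤ)).hasSum_iff] at key
  have key2 := key.mul_left (-(2 * π * I))
  refine hasSum_conv key2 (fun l => ?_) ?_
  · simp only [Function.comp, Equiv.coe_addRight, hgc', fourier_eq_zpow, smul_eq_mul]
    field_simp
  · simp only [g0, fourier_eq_zpow, Spoly_eq, zpow_natCast]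
    simp
    ring

lemma exp_ne (θ : ℝ) : -Complex.exp (I * θ) ≠ 0 := neg_ne_zero.mpr (Complex.exp_ne_zero _)

lemma hasSum_T11 {θ : ℝ} (hθ : θ ∈ Set.Icc (-π) π) (m : ℕ) (hm : m ≠ 0) :
    HasSum (Tterm (-Complex.exp (I * θ)) m 1 1) (Rsum (Spoly θ) (-Complex.exp (I * θ)) m 1 1) := by
  have hm' : (m : ℂ) ≠ 0 := by exact_mod_cast hm
  have hw := exp_ne θ
  have h := hasSum_diff hθ m hm
  set w := -Complex.exp (I * θ)
  have h2 := ((h.sub (hasSum_ite_eq (0 : ℤ) (-w ^ m / m))).sub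
    (hasSum_ite_eq (-(m : ℤ)) (-1 / (m : ℂ)))).div_const (m : ℂ)
  refine hasSum_conv h2 (fun l => ?_) ?_
  · rw [inv_sub_inv_split m hm]
    unfold Tterm
    by_cases h1 : l = 0
    · subst h1
      have : (0 : ℤ) ≠ -(m : ℤ) := by omega
      simp [this, hm]; ring
    · by_cases h2 : l = -(m : ℤ)
      · subst h2
        simp [hm]
      · have h3 : l + (m : ℤ) ≠ 0 := by omega
        have h1' : (l : ℂ) ≠ 0 := by exact_mod_cast h1
        have h2' : (l : ℂ) + m ≠ 0 := by exact_mod_cast h3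
        simp only [h1, h2, h3, ne_eq, not_false_eq_true, and_self, if_true, if_false]
        field_simp
        ring
  · have hS0 : Spoly θ 0 = -1 := by rw [Spoly_eq]; simp
    simp [Rsum, Gsum, sum_range_succ, hS0, Nat.multichoose_one_right]
    field_simp
    ring

lemma hasSum_T0q {θ : ℝ} (hθ : θ ∈ Set.Icc (-π) π) (m : ℕ) (hm : m ≠ 0) (q : ℕ) (hq : 2 ≤ q) :
    HasSum (Tterm (-Complex.exp (I * θ)) m 0 q) (Rsum (Spoly θ) (-Complex.exp (I * θ)) m 0 q) := by
  have hw := exp_ne θ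
  have h := hasSum_S hθ hq
  set w := -Complex.exp (I * θ)
  rw [← (Equiv.addRight (m : ℤ)).hasSum_iff] at h
  have h2 := h.sub (hasSum_ite_eq (0 : ℤ) (w ^ m / (m : ℂ) ^ q))
  refine hasSum_conv h2 (fun l => ?_) ?_
  · unfold Tterm
    by_cases h1 : l = 0
    · subst h1; simp
    · by_cases h2 : l + (m : ℤ) = 0
      · have h2' : (l : ℂ) + m = 0 := by exact_mod_cast h2
        simp [h1, h2, h2', show q ≠ 0 by omega]
      · simp [h1, h2]
  · have hS0 : Spoly θ 0 = -1 := by rw [Spoly_eq]; simp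
    rw [Rsum, Gsum_zero, Gsum_zero', hS0]
    ring

lemma hasSum_Tp0 {θ : ℝ} (hθ : θ ∈ Set.Icc (-π) π) (m : ℕ) (hm : m ≠ 0) (p : ℕ) (hp : 2 ≤ p) :
    HasSum (Tterm (-Complex.exp (I * θ)) m p 0) (Rsum (Spoly θ) (-Complex.exp (I * θ)) m p 0) := by
  have hm' : (m : ℂ) ≠ 0 := by exact_mod_cast hm
  have hw := exp_ne θ
  have h := hasSum_S hθ hp
  set w := -Complex.exp (I * θ)
  have h2 := (h.mul_left (w ^ m)).sub (hasSum_ite_eq (-(m : ℤ)) (1 / (-(m : ℂ)) ^ p))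
  refine hasSum_conv h2 (fun l => ?_) ?_
  · unfold Tterm
    by_cases h1 : l = 0
    · subst h1
      have : (0 : ℤ) ≠ -(m : ℤ) := by omega
      simp [hm, show p ≠ 0 by omega]
    · by_cases h2 : l = -(m : ℤ)
      · subst h2
        simp [hm]
        field_simp
        simp
      · have h3 : l + (m : ℤ) ≠ 0 := by omega
        simp [h1, h2, h3, zpow_add₀ hw]
        ring
  · have hS0 : Spoly θ 0 = -1 := by rw [Spoly_eq]; simp
    rw [Rsum, Gsum_zero, Gsum_zero', hS0, neg_pow (m : ℂ)]
    have : ((-1 : ℂ) ^ p) * (-1) ^ p = 1 := by rw [← mul_pow]; simp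
    have h3 : ((-1 : ℂ) ^ p) ≠ 0 := by simp
    field_simp
    linear_combination (-1 : ℂ) * this

lemma hasSum_T_s6 {θ : ℝ} (hθ : θ ∈ Set.Icc (-π) π) (m : ℕ) (hm : m ≠ 0) (n : ℕ) :
    ∀ p q : ℕ, p + q = n → 2 ≤ p + q →
    HasSum (Tterm (-Complex.exp (I * θ)) m p q) (Rsum (Spoly θ) (-Complex.exp (I * θ)) m p q) := by
  induction n with
  | zero => intro p q h1 h2; omega
  | succ n ih =>
    intro p q h1 h2
    rcases p with _ | p
    · exact hasSum_T0q hθ m hm q (by omega)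
    rcases q with _ | q
    · exact hasSum_Tp0 hθ m hm _ (by omega)
    by_cases h3 : p = 0 ∧ q = 0
    · obtain ⟨rfl, rfl⟩ := h3
      exact hasSum_T11 hθ m hm
    · rw [Rsum_rec _ _ _ hm]
      have := ((ih (p + 1) q (by omega) (by omega)).sub (ih p (q + 1) (by omega) (by omega))).div_const
        (m : ℂ)
      exact hasSum_conv this (fun l => Tterm_rec _ m hm p q l) rfl

lemma flip_sum (a c y : ℕ → ℂ) (p : ℕ) :
    ∑ j ∈ range (p + 1), a (p - j) * ∑ ξ ∈ range (j + 1), c (j - ξ) * y ξ =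
      ∑ r ∈ range (p + 1), c r * ∑ ξ ∈ range (p - r + 1), a (p - r - ξ) * y ξ := by
  have h := Finset.sum_range_diag_flip (p + 1) (fun r ξ => a (p - (r + ξ)) * (c r * y ξ))
  calc _ = ∑ j ∈ range (p + 1), ∑ k ∈ range (j + 1),
          a (p - (k + (j - k))) * (c k * y (j - k)) := by
        refine sum_congr rfl fun j _ => ?_
        rw [mul_sum, ← Finset.sum_flip]
        refine sum_congr rfl fun k hk => ?_
        have : k ≤ j := Nat.lt_succ_iff.mp (mem_range.mp hk)
        rw [Nat.sub_sub_self this, Nat.add_sub_cancel' this]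
    _ = _ := h
    _ = _ := by
        refine sum_congr rfl fun r hr => ?_
        have : r ≤ p := Nat.lt_succ_iff.mp (mem_range.mp hr)
        rw [mul_sum, show p + 1 - r = p - r + 1 by omega]
        refine sum_congr rfl fun ξ _ => ?_
        rw [Nat.sub_sub]
        ring

lemma flip_phi (θ : ℝ) (c : ℕ → ℂ) (p : ℕ) :
    2 * ∑ j ∈ range (p + 1), phi ((p - j : ℕ) : ℂ) * eps (p - j) *
        ∑ ξ ∈ range (j + 1), c (j - ξ) * (Complex.I * θ) ^ ξ / (Nat.factorial ξ : ℂ) =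
      ∑ r ∈ range (p + 1), c r * Spoly θ (p - r) := by
  have h := flip_sum (fun n => phi (n : ℂ) * eps n) c
    (fun ξ => (Complex.I * θ) ^ ξ / (Nat.factorial ξ : ℂ)) p
  simp only [← mul_div_assoc] at h
  rw [h, mul_sum]
  refine sum_congr rfl fun r _ => ?_
  simp only [Spoly, mul_div_assoc]
  ring

lemma choose_multichoose (q r : ℕ) (hq : 0 < q) :
    Nat.choose (q - 1 + r) (q - 1) = Nat.multichoose q r := by
  rw [Nat.multichoose_eq, show q + r - 1 = q - 1 + r by omega, Nat.choose_symm_add]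

lemma summable_pow (s : ℝ) (hs : 1 < s) (A : ℕ → ℂ) (hA : ∀ k, ‖A k‖ ≤ 1) (q r : ℕ) :
    Summable (fun k : ℕ => A k / (((k + 1 : ℕ) : ℂ)) ^ ((s : ℂ) + (q : ℂ) + (r : ℂ))) := by
  have h0 : Summable (fun n : ℕ => 1 / (n : ℝ) ^ s) := Real.summable_one_div_nat_rpow.mpr hs
  have h1 : Summable (fun k : ℕ => 1 / ((k + 1 : ℕ) : ℝ) ^ s) := (summable_nat_add_iff 1).mpr h0
  refine Summable.of_norm_bounded h1 fun k => ?_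
  rw [norm_div, Complex.norm_natCast_cpow_of_pos (Nat.succ_pos k)]
  have : ((s : ℂ) + (q : ℂ) + (r : ℂ)).re = s + q + r := by simp
  rw [this]
  gcongr
  · exact hA k
  · push_cast; linarith [(Nat.cast_nonneg k : (0 : ℝ) ≤ k)]
  · have h1 := (Nat.cast_nonneg q : (0 : ℝ) ≤ q)
    have h2 := (Nat.cast_nonneg r : (0 : ℝ) ≤ r)
    linarith

lemma hasSum_Gsum (S : ℕ → ℂ) (z : ℂ) (s : ℝ) (hs : 1 < s) (A : ℕ → ℂ) (hA : ∀ k, ‖A k‖ ≤ 1)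
    (q p : ℕ) :
    HasSum (fun k : ℕ => A k / (((k + 1 : ℕ) : ℂ)) ^ (s : ℂ) * Gsum S z ((k + 1 : ℕ) : ℂ) q p)
      (∑ r ∈ range (p + 1), (Nat.multichoose q r : ℂ) * z ^ r *
        (∑' k : ℕ, A k / (((k + 1 : ℕ) : ℂ)) ^ ((s : ℂ) + (q : ℂ) + (r : ℂ))) * S (p - r)) := by
  have h : ∀ r ∈ range (p + 1), HasSum (fun k : ℕ => (Nat.multichoose q r : ℂ) * z ^ r *
        (A k / (((k + 1 : ℕ) : ℂ)) ^ ((s : ℂ) + (q : ℂ) + (r : ℂ))) * S (p - r))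
      ((Nat.multichoose q r : ℂ) * z ^ r *
        (∑' k : ℕ, A k / (((k + 1 : ℕ) : ℂ)) ^ ((s : ℂ) + (q : ℂ) + (r : ℂ))) * S (p - r)) :=
    fun r _ => ((summable_pow s hs A hA q r).hasSum.mul_left _).mul_right _
  refine (hasSum_sum h).congr_fun ?_
  intro k
  have hk : (((k + 1 : ℕ) : ℂ)) ≠ 0 := by exact_mod_cast Nat.succ_ne_zero k
  rw [Gsum, mul_sum]
  refine sum_congr rfl fun r _ => ?_
  rw [Complex.cpow_add _ _ hk, Complex.cpow_add _ _ hk, Complex.cpow_natCast, Complex.cpow_natCast,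
    pow_add, ← div_div, ← div_div]
  generalize (((k + 1 : ℕ) : ℂ)) ^ (s : ℂ) = u
  field_simp

lemma amgm_pow (a b : ℝ) (p1 : 1 ≤ a) (p2 : 1 ≤ b) (p q : ℕ) (hp : 0 < p) (hq : 0 < q) :
    1 / (a ^ p * b ^ q) ≤ 1 / a ^ 2 + 1 / b ^ 2 := by
  have ha : 0 < a := by linarith
  have hb : 0 < b := by linarith
  have h5 : a ≤ a ^ p := le_self_pow₀ p1 hp.ne'
  have h6 : b ≤ b ^ q := le_self_pow₀ p2 hq.ne'
  have h8 : a * b ≤ a ^ p * b ^ q := mul_le_mul h5 h6 hb.le (by positivity)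
  refine (one_div_le_one_div_of_le (by positivity) h8).trans ?_
  rw [div_add_div _ _ (by positivity) (by positivity),
    div_le_div_iff₀ (by positivity) (by positivity)]
  nlinarith [mul_pos ha hb, sq_nonneg (a - b), mul_nonneg (mul_pos ha hb).le (sq_nonneg (a - b)),
    mul_nonneg (mul_pos ha hb).le (mul_pos ha hb).le]

lemma Tterm_norm (p q : ℕ) (hp : 0 < p) (hq : 0 < q) (w : ℂ) (hw : ‖w‖ = 1) (k : ℕ) (l : ℤ) :
    ‖Tterm w (k + 1) p q l‖ ≤
      1 / (l : ℝ) ^ 2 + 1 / ((l + ((k + 1 : ℕ) : ℤ) : ℤ) : ℝ) ^ 2 := by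
  unfold Tterm
  split_ifs with h
  · rw [norm_div, norm_zpow, hw, one_zpow, norm_mul, norm_pow, norm_pow]
    have e1 : ‖(l : ℂ)‖ = |(l : ℝ)| := by simp
    have e2 : ‖(l : ℂ) + ((k + 1 : ℕ) : ℂ)‖ = |((l + ((k + 1 : ℕ) : ℤ) : ℤ) : ℝ)| := by
      rw [show (l : ℂ) + ((k + 1 : ℕ) : ℂ) = ((l + ((k + 1 : ℕ) : ℤ) : ℤ) : ℂ) by push_cast; rfl,
        Complex.norm_intCast]
    rw [e1, e2]
    rw [← sq_abs (l : ℝ), ← sq_abs ((l + ((k + 1 : ℕ) : ℤ) : ℤ) : ℝ)]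
    have p1 : 1 ≤ |(l : ℝ)| := by exact_mod_cast Int.one_le_abs h.1
    have p2 : 1 ≤ |((l + ((k + 1 : ℕ) : ℤ) : ℤ) : ℝ)| := by exact_mod_cast Int.one_le_abs h.2
    exact amgm_pow _ _ p1 p2 p q hp hq
  · rw [norm_zero]; positivity

lemma summable_double (p q : ℕ) (hp : 0 < p) (hq : 0 < q) (s : ℝ) (hs : 1 < s)
    (x : ℂ) (hx : ‖x‖ = 1) (w : ℂ) (hw : ‖w‖ = 1) :
    Summable (fun lm : ℤ × ℕ =>
      x ^ (lm.2 + 1) / (((lm.2 + 1 : ℕ) : ℂ)) ^ (s : ℂ) * Tterm w (lm.2 + 1) p q lm.1) := by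
  have h1 : Summable (fun l : ℤ => 1 / (l : ℝ) ^ 2) := Real.summable_one_div_int_pow.mpr (by norm_num)
  have h0 : Summable (fun n : ℕ => 1 / (n : ℝ) ^ s) := Real.summable_one_div_nat_rpow.mpr hs
  have h2 : Summable (fun k : ℕ => 1 / ((k + 1 : ℕ) : ℝ) ^ s) := (summable_nat_add_iff 1).mpr h0
  have h3 : Summable (fun lm : ℤ × ℕ => (1 / (lm.1 : ℝ) ^ 2) * (1 / ((lm.2 + 1 : ℕ) : ℝ) ^ s)) :=
    h1.mul_of_nonneg h2 (fun _ => by positivity) (fun _ => by positivity)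
  have hinj : Function.Injective (fun lm : ℤ × ℕ => (lm.1 + ((lm.2 + 1 : ℕ) : ℤ), lm.2)) := by
    rintro ⟨a, b⟩ ⟨c, d⟩ h
    simp only [Prod.mk.injEq] at h ⊢
    omega
  have h4 := h3.comp_injective hinj
  refine Summable.of_norm_bounded (h3.add h4) fun lm => ?_
  obtain ⟨l, k⟩ := lm
  simp only [Function.comp]
  rw [norm_mul, norm_div, norm_pow, hx, one_pow, Complex.norm_natCast_cpow_of_pos (Nat.succ_pos k),
    Complex.ofReal_re, ← add_mul, mul_comm]
  gcongr
  exact Tterm_norm p q hp hq w hw k l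

lemma hasSum_fiber (p q : ℕ) (hp : 0 < p) (hq : 0 < q) (s : ℝ) (hs : 1 < s)
    (x : ℂ) (hx : ‖x‖ = 1) (θ : ℝ) (hθ : θ ∈ Set.Icc (-π) π) :
    HasSum (fun k : ℕ => x ^ (k + 1) / (((k + 1 : ℕ) : ℂ)) ^ (s : ℂ) *
      Rsum (Spoly θ) (-Complex.exp (I * θ)) (k + 1) p q)
      (∑' lm : ℤ × ℕ, x ^ (lm.2 + 1) / (((lm.2 + 1 : ℕ) : ℂ)) ^ (s : ℂ) *
          Tterm (-Complex.exp (I * θ)) (lm.2 + 1) p q lm.1) := by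
  have hw : ‖-Complex.exp (I * θ)‖ = 1 := by
    rw [norm_neg, mul_comm, Complex.norm_exp_ofReal_mul_I]
  have hsum := summable_double p q hp hq s hs x hx _ hw
  have h1 := ((Equiv.prodComm ℕ ℤ).hasSum_iff).mpr hsum.hasSum
  have h2 : ∀ k : ℕ, HasSum (fun l : ℤ => x ^ (k + 1) / (((k + 1 : ℕ) : ℂ)) ^ (s : ℂ) *
      Tterm (-Complex.exp (I * θ)) (k + 1) p q l)
      (x ^ (k + 1) / (((k + 1 : ℕ) : ℂ)) ^ (s : ℂ) *
        Rsum (Spoly θ) (-Complex.exp (I * θ)) (k + 1) p q) := fun k =>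
    (hasSum_T_s6 hθ (k + 1) (Nat.succ_ne_zero k) (p + q) p q rfl (by omega)).mul_left _
  exact h1.prod_fiberwise h2

lemma hasSum_rhs (S : ℕ → ℂ) (w : ℂ) (hw : ‖w‖ = 1) (p q : ℕ) (s : ℝ) (hs : 1 < s)
    (x : ℂ) (hx : ‖x‖ = 1) :
    HasSum (fun k : ℕ => x ^ (k + 1) / (((k + 1 : ℕ) : ℂ)) ^ (s : ℂ) * Rsum S w (k + 1) p q)
      ((∑ r ∈ range (p + 1), (Nat.multichoose q r : ℂ) * (-1) ^ r *
        (∑' k : ℕ, x ^ (k + 1) * w ^ (k + 1) /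
          (((k + 1 : ℕ) : ℂ)) ^ ((s : ℂ) + (q : ℂ) + (r : ℂ))) * S (p - r)) +
       (-1) ^ p * ∑ r ∈ range (q + 1), (Nat.multichoose p r : ℂ) * 1 ^ r *
        (∑' k : ℕ, x ^ (k + 1) /
          (((k + 1 : ℕ) : ℂ)) ^ ((s : ℂ) + (p : ℂ) + (r : ℂ))) * S (q - r)) := by
  have hA1 : ∀ k : ℕ, ‖x ^ (k + 1) * w ^ (k + 1)‖ ≤ 1 := by
    intro k; rw [norm_mul, norm_pow, norm_pow, hx, hw]; simp
  have hA2 : ∀ k : ℕ, ‖x ^ (k + 1)‖ ≤ 1 := by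
    intro k; rw [norm_pow, hx]; simp
  have h1 := hasSum_Gsum S (-1) s hs (fun k => x ^ (k + 1) * w ^ (k + 1)) hA1 q p
  have h2 := (hasSum_Gsum S 1 s hs (fun k => x ^ (k + 1)) hA2 p q).mul_left ((-1 : ℂ) ^ p)
  refine (h1.add h2).congr_fun ?_
  intro k
  rw [Rsum]
  ring

theorem double_polylog_relation (p q : ℕ) (hp : 0 < p) (hq : 0 < q) (s : ℝ) (hs : 1 < s)
    (x : ℂ) (hx : ‖x‖ = 1) (θ : ℝ) (hθ : θ ∈ Set.Icc (-π) π) :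
    (∑' lm : ℤ × ℕ,
        if lm.1 ≠ 0 ∧ lm.1 + ((lm.2 : ℤ) + 1) ≠ 0 then
          (-1 : ℂ) ^ (lm.1 + ((lm.2 : ℤ) + 1)) * x ^ (lm.2 + 1) *
              Complex.exp (Complex.I * ((lm.1 + (lm.2 : ℤ) + 1 : ℤ) : ℂ) * θ) /
            ((lm.1 : ℂ) ^ p * (((lm.2 + 1 : ℕ) : ℂ)) ^ (s : ℂ) *
              (((lm.1 + (lm.2 : ℤ) + 1 : ℤ) : ℂ)) ^ q)
        else 0) -
      2 * ∑ j ∈ range (p + 1), phi ((p - j : ℕ) : ℂ) * eps (p - j) *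
        ∑ ξ ∈ range (j + 1),
          (Nat.choose (q - 1 + (j - ξ)) (q - 1) : ℂ) * (-1 : ℂ) ^ (j - ξ) *
            (∑' m : ℕ, (-1 : ℂ) ^ (m + 1) * x ^ (m + 1) *
                Complex.exp (Complex.I * ((m : ℂ) + 1) * θ) /
              (((m + 1 : ℕ) : ℂ)) ^ ((s : ℂ) + (q : ℂ) + ((j - ξ : ℕ) : ℂ))) *
            (Complex.I * θ) ^ ξ / (Nat.factorial ξ : ℂ) +
      2 * ∑ j ∈ range (q + 1), phi ((q - j : ℕ) : ℂ) * eps (q - j) *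
        ∑ ξ ∈ range (j + 1),
          (Nat.choose (p - 1 + (j - ξ)) (p - 1) : ℂ) * (-1 : ℂ) ^ (p - 1) *
            (∑' m : ℕ, x ^ (m + 1) /
              (((m + 1 : ℕ) : ℂ)) ^ ((s : ℂ) + (p : ℂ) + ((j - ξ : ℕ) : ℂ))) *
            (Complex.I * θ) ^ ξ / (Nat.factorial ξ : ℂ) = 0 := by
  have hw : ‖-Complex.exp (I * θ)‖ = 1 := by
    rw [norm_neg, mul_comm, Complex.norm_exp_ofReal_mul_I]
  have hw0 := exp_ne θ
  -- powers of `w`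
  have hpow : ∀ n : ℤ, (-Complex.exp (I * θ)) ^ n =
      (-1 : ℂ) ^ n * Complex.exp (I * (n : ℂ) * θ) := by
    intro n
    rw [neg_eq_neg_one_mul, mul_zpow, ← Complex.exp_int_mul]
    congr 2; ring
  have hpow' : ∀ m : ℕ, (-1 : ℂ) ^ (m + 1) * x ^ (m + 1) * Complex.exp (I * ((m : ℂ) + 1) * θ) =
      x ^ (m + 1) * (-Complex.exp (I * θ)) ^ (m + 1) := by
    intro m
    have := hpow ((m + 1 : ℕ) : ℤ)
    rw [zpow_natCast, zpow_natCast] at this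
    rw [this]; push_cast; ring
  -- the double sum
  have hF : ∀ lm : ℤ × ℕ, (if lm.1 ≠ 0 ∧ lm.1 + ((lm.2 : ℤ) + 1) ≠ 0 then
          (-1 : ℂ) ^ (lm.1 + ((lm.2 : ℤ) + 1)) * x ^ (lm.2 + 1) *
              Complex.exp (Complex.I * ((lm.1 + (lm.2 : ℤ) + 1 : ℤ) : ℂ) * θ) /
            ((lm.1 : ℂ) ^ p * (((lm.2 + 1 : ℕ) : ℂ)) ^ (s : ℂ) *
              (((lm.1 + (lm.2 : ℤ) + 1 : ℤ) : ℂ)) ^ q)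
        else 0) = x ^ (lm.2 + 1) / (((lm.2 + 1 : ℕ) : ℂ)) ^ (s : ℂ) *
          Tterm (-Complex.exp (I * θ)) (lm.2 + 1) p q lm.1 := by
    rintro ⟨l, k⟩
    unfold Tterm
    simp only [mul_ite, mul_zero, Nat.cast_add, Nat.cast_one]
    refine if_congr Iff.rfl ?_ rfl
    rw [hpow]
    push_cast
    rw [div_mul_div_comm, add_assoc (l : ℂ)]
    congr 1 <;> ring
  have heq := (hasSum_fiber p q hp hq s hs x hx θ hθ).unique
    (hasSum_rhs (Spoly θ) _ hw p q s hs x hx)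
  simp only [hF, hpow']
  rw [heq, flip_phi θ (fun r => (Nat.choose (q - 1 + r) (q - 1) : ℂ) * (-1 : ℂ) ^ r *
            (∑' m : ℕ, x ^ (m + 1) * (-Complex.exp (I * θ)) ^ (m + 1) /
              (((m + 1 : ℕ) : ℂ)) ^ ((s : ℂ) + (q : ℂ) + (r : ℂ)))) p,
    flip_phi θ (fun r => (Nat.choose (p - 1 + r) (p - 1) : ℂ) * (-1 : ℂ) ^ (p - 1) *
            (∑' m : ℕ, x ^ (m + 1) /
              (((m + 1 : ℕ) : ℂ)) ^ ((s : ℂ) + (p : ℂ) + (r : ℂ)))) q]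
  simp only [choose_multichoose _ _ hq, choose_multichoose _ _ hp]
  rw [add_sub_cancel_left, mul_sum, ← sum_add_distrib]
  refine sum_eq_zero fun r _ => ?_
  obtain ⟨p', rfl⟩ := Nat.exists_eq_succ_of_ne_zero hp.ne'
  simp only [Nat.succ_sub_one, pow_succ, one_pow, Nat.succ_eq_add_one]
  ring
end

section
/- Let p and q be positive integers and let s be a real number with s > 1. Then T(p,s,q;1,1) = 2(−1)^p Σ_{k=0}^{⌊p/2⌋} ζ(2k) C(p+q−1−2k, q−1) ζ(s+p+q−2k) + 2(−1)^p Σ_{k=0}^{⌊q/2⌋} ζ(2k) C(p+q−1−2k, p−1) ζ(s+p+q−2k), where C(n,k) denotes the binomial coefficient. -/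
open Complex Finset

noncomputable def bb (m p q : ℕ) (l : ℤ) : ℂ :=
  if l ≠ 0 ∧ l + (m:ℤ) ≠ 0 then ((l:ℂ)^p)⁻¹ * (((l + m : ℤ) : ℂ)^q)⁻¹ else 0

lemma bb_rec (m p q : ℕ) (hm : 0 < m) (l : ℤ) :
    bb m (p+1) (q+1) l = (m:ℂ)⁻¹ * (bb m (p+1) q l - bb m p (q+1) l) := by
  unfold bb
  split_ifs with h
  · have h1 : (l:ℂ) ≠ 0 := by exact_mod_cast h.1
    have h2 : ((l + m : ℤ):ℂ) ≠ 0 := by exact_mod_cast h.2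
    have h3 : (m:ℂ) ≠ 0 := by exact_mod_cast hm.ne'
    have h4 : (m:ℂ) = ((l + m : ℤ):ℂ) - l := by push_cast; ring
    generalize ((l + m : ℤ):ℂ) = y at *
    field_simp
    rw [h4]; ring
  · simp

lemma hasSum_of_eq {ι : Type*} {f g : ι → ℂ} {a b : ℂ} (h : HasSum f a) (hf : ∀ x, g x = f x)
    (hb : b = a) : HasSum g b := by
  have : g = f := funext hf
  rw [this, hb]; exact h

noncomputable def Z (i : ℕ) : ℂ := if Even i then 2 * riemannZeta i else 0

noncomputable def GG (w : ℕ → ℂ) (p q : ℕ) : ℂ :=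
  ∑ i ∈ antidiagonal p, w i.1 * (Nat.multichoose q i.2 : ℂ)

lemma GG_rec (w : ℕ → ℂ) (p q : ℕ) : GG w (p+1) (q+1) = GG w (p+1) q + GG w p (q+1) := by
  unfold GG
  simp only [Finset.Nat.sum_antidiagonal_succ', Nat.multichoose_succ_succ, Nat.multichoose_zero_right]
  push_cast
  simp only [mul_add, sum_add_distrib]
  ring

noncomputable def AA (w : ℕ → ℂ) (p q : ℕ) : ℂ := (-1)^p * (GG w p q + GG w q p)

lemma AA_rec (w : ℕ → ℂ) (p q : ℕ) : AA w (p+1) (q+1) = AA w (p+1) q - AA w p (q+1) := by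
  unfold AA
  rw [GG_rec w p q, GG_rec w q p]; ring

lemma GG_zero_right (w : ℕ → ℂ) (p : ℕ) : GG w p 0 = w p := by
  unfold GG
  cases p with
  | zero => simp
  | succ p => simp [Finset.Nat.sum_antidiagonal_succ', Nat.multichoose_zero_succ]

lemma GG_zero_left (w : ℕ → ℂ) (p : ℕ) : GG w 0 p = w 0 := by
  simp [GG]

lemma hasSum_Z (p : ℕ) (hp : 2 ≤ p) : HasSum (fun l : ℤ => ((l:ℂ)^p)⁻¹) (Z p) := by
  have hs : Summable (fun l : ℤ => ((l:ℂ)^p)⁻¹) := by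
    have := (Real.summable_one_div_int_pow (p := p)).2 (by omega)
    refine Summable.of_norm ?_
    refine (this.abs).congr fun l => ?_
    simp
  unfold Z
  split_ifs with h
  · rw [two_mul_riemannZeta_eq_tsum_int_inv_pow_of_even hp h]
    exact hs.hasSum
  · have := hs.hasSum
    have h2 := (Equiv.neg ℤ).hasSum_iff.2 this
    have h3 : ((fun l : ℤ => ((l:ℂ)^p)⁻¹) ∘ (Equiv.neg ℤ)) = fun l : ℤ => -((l:ℂ)^p)⁻¹ := by
      ext l
      simp [(Nat.not_even_iff_odd.1 h).neg_pow, inv_neg]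
    rw [h3] at h2
    have h4 := h2.unique this.neg
    have h5 : (∑' l : ℤ, ((l:ℂ)^p)⁻¹) = 0 := by
      linear_combination (1/2 : ℂ) * h4
    rwa [h5] at this

lemma summable_sq : Summable (fun l : ℤ => ((l:ℝ)^2)⁻¹) := by
  have := (Real.summable_one_div_int_pow (p := 2)).2 (by omega)
  simpa using this

lemma diff_bound (l : ℤ) : ‖((l:ℂ))⁻¹ - (((l + 1 : ℤ):ℂ))⁻¹‖ ≤ ((l:ℝ)^2)⁻¹ + (((l + 1 : ℤ):ℝ)^2)⁻¹ := by
  rcases eq_or_ne l 0 with rfl | h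
  · simp
  rcases eq_or_ne l (-1) with rfl | h'
  · simp
  have h1 : (l:ℂ) ≠ 0 := by exact_mod_cast h
  have h2 : ((l + 1 : ℤ):ℂ) ≠ 0 := by
    have : l + 1 ≠ 0 := by omega
    exact_mod_cast this
  have e : ((l:ℂ))⁻¹ - (((l + 1 : ℤ):ℂ))⁻¹ = (l:ℂ)⁻¹ * (((l + 1 : ℤ):ℂ))⁻¹ := by
    have h4 : (1:ℂ) = ((l + 1 : ℤ):ℂ) - l := by push_cast; ring
    generalize ((l + 1 : ℤ):ℂ) = y at *
    field_simp
    rw [h4]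
  rw [e, norm_mul, norm_inv, norm_inv, Complex.norm_intCast, Complex.norm_intCast,
    ← sq_abs (l:ℝ), ← sq_abs ((l+1:ℤ):ℝ), ← inv_pow, ← inv_pow]
  nlinarith [sq_nonneg (|(l:ℝ)|⁻¹ - |((l+1:ℤ):ℝ)|⁻¹), sq_nonneg (|(l:ℝ)|⁻¹), sq_nonneg (|((l+1:ℤ):ℝ)|⁻¹)]

noncomputable def dd (l : ℤ) : ℂ := ((l:ℂ))⁻¹ - (((l + 1 : ℤ):ℂ))⁻¹

lemma summable_dd : Summable dd := by
  refine Summable.of_norm_bounded (summable_sq.add ?_) diff_bound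
  exact (Equiv.addRight (1:ℤ)).summable_iff.2 summable_sq

lemma lim_inv : Filter.Tendsto (fun n : ℕ => -((n:ℂ))⁻¹) Filter.atTop (nhds 0) := by
  have := (tendsto_inv_atTop_nhds_zero_nat (𝕜 := ℂ)).neg
  simpa using this

lemma dd_pos : HasSum (fun n : ℕ => dd (n:ℤ)) 0 := by
  have hs1 : Summable (fun n : ℕ => dd (n:ℤ)) := summable_dd.comp_injective Nat.cast_injective
  refine (hs1.hasSum_iff_tendsto_nat).2 ?_
  have : ∀ n : ℕ, ∑ i ∈ range n, dd (i:ℤ) = -((n:ℂ))⁻¹ := by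
    intro n
    have := Finset.sum_range_sub' (fun i : ℕ => ((i:ℂ))⁻¹) n
    simpa [dd] using this
  simp only [this]
  exact lim_inv

lemma dd_neg : HasSum (fun n : ℕ => dd (-((n:ℤ)+1))) 0 := by
  have hs1 : Summable (fun n : ℕ => dd (-((n:ℤ)+1))) :=
    summable_dd.comp_injective (i := fun n : ℕ => (-((n:ℤ)+1))) (fun a b h => by simpa using h)
  refine (hs1.hasSum_iff_tendsto_nat).2 ?_
  have : ∀ n : ℕ, ∑ i ∈ range n, dd (-((i:ℤ)+1)) = -((n:ℂ))⁻¹ := by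
    intro n
    have := Finset.sum_range_sub (fun i : ℕ => -((i:ℂ))⁻¹) n
    simp only [Nat.cast_zero, inv_zero, neg_zero, sub_zero] at this
    rw [← this]
    refine Finset.sum_congr rfl fun i _ => ?_
    have e1 : ((-((i:ℤ)+1) : ℤ):ℂ) = -((i+1 : ℕ):ℂ) := by push_cast; ring
    have e2 : ((-((i:ℤ)+1) + 1 : ℤ):ℂ) = -(i:ℂ) := by push_cast; ring
    unfold dd
    rw [e1, e2, inv_neg, inv_neg]
  simp only [this]
  exact lim_inv

lemma hasSum_diff_one : HasSum dd 0 := by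
  have := HasSum.of_nat_of_neg_add_one dd_pos dd_neg
  rwa [add_zero] at this

lemma hasSum_diff_s7 (m : ℕ) : HasSum (fun l : ℤ => ((l:ℂ))⁻¹ - (((l + m : ℤ):ℂ))⁻¹) 0 := by
  induction m with
  | zero => simp
  | succ m ih =>
    have h := (Equiv.addRight (m:ℤ)).hasSum_iff.2 hasSum_diff_one
    have := ih.add h
    rw [add_zero] at this
    refine hasSum_of_eq this (fun l => ?_) rfl
    simp only [Function.comp_apply, Equiv.coe_addRight, dd]
    push_cast
    ring

lemma bb_p_zero (m p : ℕ) (hp : 0 < p) (l : ℤ) :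
    bb m p 0 l = ((l:ℂ)^p)⁻¹ - if l = -(m:ℤ) then ((-(m:ℂ))^p)⁻¹ else 0 := by
  unfold bb
  by_cases h : l = -(m:ℤ)
  · subst h; simp
  · have h' : l + (m:ℤ) ≠ 0 := by omega
    by_cases h0 : l = 0
    · subst h0; simp [h, hp.ne']
    · simp [h, h', h0]

lemma bb_zero_q (m q : ℕ) (hq : 0 < q) (l : ℤ) :
    bb m 0 q l = (((l + m : ℤ):ℂ)^q)⁻¹ - if l = 0 then ((m:ℂ)^q)⁻¹ else 0 := by
  unfold bb
  by_cases h0 : l = 0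
  · subst h0; simp
  · by_cases h : l + (m:ℤ) = 0
    · simp only [h]; simp [h0, hq.ne']
    · simp [h, h0]

lemma bb_one_one (m : ℕ) (hm : 0 < m) (l : ℤ) :
    bb m 1 1 l = (m:ℂ)⁻¹ * (((l:ℂ))⁻¹ - (((l + m : ℤ):ℂ))⁻¹ + (if l = 0 then (m:ℂ)⁻¹ else 0)
      + (if l = -(m:ℤ) then (m:ℂ)⁻¹ else 0)) := by
  rw [bb_rec m 0 0 hm, bb_p_zero m (0+1) (by omega), bb_zero_q m (0+1) (by omega)]
  simp only [zero_add, pow_one, inv_neg]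
  split_ifs <;> ring

lemma Z_zero : Z 0 = -1 := by
  norm_num [Z, riemannZeta_zero]

lemma Z_one : Z 1 = 0 := by
  simp [Z]

lemma hasSum_bb (m : ℕ) (hm : 0 < m) (n : ℕ) : ∀ p q : ℕ, p + q = n + 2 →
    HasSum (bb m p q) (AA (fun i => Z i * (m:ℂ)^i) p q * ((m:ℂ)^(p+q))⁻¹) := by
  have h3 : (m:ℂ) ≠ 0 := by exact_mod_cast hm.ne'
  have base1 : ∀ p, 2 ≤ p → HasSum (bb m p 0) (AA (fun i => Z i * (m:ℂ)^i) p 0 * ((m:ℂ)^(p+0))⁻¹) := by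
    intro p hp
    have := (hasSum_Z p hp).sub (hasSum_ite_eq (-(m:ℤ)) (((-(m:ℂ))^p)⁻¹))
    refine hasSum_of_eq this (fun l => ?_) ?_
    · exact bb_p_zero m p (by omega) l
    · simp only [AA, GG_zero_left, GG_zero_right, Z_zero]
      have e : (((-1:ℂ))^p)⁻¹ = (-1)^p := by rw [← inv_pow, inv_neg_one]
      rw [neg_pow (m:ℂ), mul_inv, e]
      have : Z p * (-1)^p = Z p := by
        unfold Z; split_ifs with h
        · simp [h.neg_one_pow]
        · simp
      have h4 : (m:ℂ)^p ≠ 0 := pow_ne_zero _ h3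
      simp only [add_zero]
      field_simp
      linear_combination (m:ℂ)^p * this
  have base2 : ∀ q, 2 ≤ q → HasSum (bb m 0 q) (AA (fun i => Z i * (m:ℂ)^i) 0 q * ((m:ℂ)^(0+q))⁻¹) := by
    intro q hq
    have := ((Equiv.addRight (m:ℤ)).hasSum_iff.2 (hasSum_Z q hq)).sub (hasSum_ite_eq (0:ℤ) (((m:ℂ)^q)⁻¹))
    refine hasSum_of_eq this (fun l => ?_) ?_
    · exact bb_zero_q m q (by omega) l
    · simp only [AA, GG_zero_left, GG_zero_right, Z_zero]
      have h4 : (m:ℂ)^q ≠ 0 := pow_ne_zero _ h3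
      simp only [zero_add]
      field_simp
      ring
  have base3 : HasSum (bb m 1 1) (AA (fun i => Z i * (m:ℂ)^i) 1 1 * ((m:ℂ)^(1+1))⁻¹) := by
    have := (((hasSum_diff_s7 m).add (hasSum_ite_eq (0:ℤ) ((m:ℂ)⁻¹))).add
      (hasSum_ite_eq (-(m:ℤ)) ((m:ℂ)⁻¹))).mul_left ((m:ℂ)⁻¹)
    refine hasSum_of_eq this (fun l => ?_) ?_
    · exact bb_one_one m hm l
    · rw [AA_rec _ 0 0]
      simp only [AA, GG_zero_left, GG_zero_right, Z_zero, zero_add, Z_one]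
      field_simp
      ring
  induction n with
  | zero =>
    intro p q h
    obtain ⟨rfl, rfl⟩ | ⟨rfl, rfl⟩ | ⟨rfl, rfl⟩ : (p = 0 ∧ q = 2) ∨ (p = 1 ∧ q = 1) ∨ (p = 2 ∧ q = 0) := by omega
    · exact base2 2 le_rfl
    · exact base3
    · exact base1 2 le_rfl
  | succ n ih =>
    intro p q h
    rcases p with _ | p
    · exact base2 q (by omega)
    rcases q with _ | q
    · exact base1 _ (by omega)
    have := ((ih (p+1) q (by omega)).sub (ih p (q+1) (by omega))).mul_left ((m:ℂ)⁻¹)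
    refine hasSum_of_eq this (fun l => ?_) ?_
    · exact bb_rec m p q hm l
    · rw [AA_rec]
      field_simp
      ring

lemma bb_bound (m p q : ℕ) (hp : 0 < p) (hq : 0 < q) (l : ℤ) :
    ‖bb m p q l‖ ≤ ((l:ℝ)^2)⁻¹ + (((l + m : ℤ):ℝ)^2)⁻¹ := by
  unfold bb
  split_ifs with h
  · have key : ∀ (z : ℤ) (k : ℕ), z ≠ 0 → 0 < k → ‖((z:ℂ)^k)⁻¹‖ ≤ |(z:ℝ)|⁻¹ := by
      intro z k hz hk
      rw [norm_inv, norm_pow, Complex.norm_intCast]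
      have h1 : (1:ℝ) ≤ |(z:ℝ)| := by exact_mod_cast Int.one_le_abs hz
      exact inv_anti₀ (by linarith) (le_self_pow₀ h1 hk.ne')
    rw [norm_mul]
    refine (mul_le_mul (key l p h.1 hp) (key (l+m) q h.2 hq) (norm_nonneg _) (by positivity)).trans ?_
    rw [← sq_abs (l:ℝ), ← sq_abs ((l+m:ℤ):ℝ), ← inv_pow, ← inv_pow]
    nlinarith [sq_nonneg (|(l:ℝ)|⁻¹ - |((l+m:ℤ):ℝ)|⁻¹), sq_nonneg (|(l:ℝ)|⁻¹), sq_nonneg (|((l+m:ℤ):ℝ)|⁻¹)]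
  · simp only [norm_zero]; positivity

lemma summable_rpow (s : ℝ) (hs : 1 < s) : Summable (fun n : ℕ => (((n+1 : ℕ):ℝ)^s)⁻¹) := by
  have := (Real.summable_nat_rpow_inv (p := s)).2 hs
  exact (summable_nat_add_iff (f := fun n : ℕ => ((n:ℝ)^s)⁻¹) 1).2 this

lemma summable_F (p q : ℕ) (hp : 0 < p) (hq : 0 < q) (s : ℝ) (hs : 1 < s) :
    Summable (fun x : ℤ × ℕ => (((x.2+1 : ℕ):ℂ)^(s:ℂ))⁻¹ * bb (x.2+1) p q x.1) := by
  have h1 : Summable (fun x : ℤ × ℕ => ((x.1:ℝ)^2)⁻¹ * (((x.2+1 : ℕ):ℝ)^s)⁻¹) :=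
    summable_sq.mul_of_nonneg (summable_rpow s hs) (fun _ => by positivity) (fun _ => by positivity)
  let e : ℤ × ℕ ≃ ℤ × ℕ :=
    { toFun := fun x => (x.1 + (x.2+1 : ℕ), x.2)
      invFun := fun x => (x.1 - (x.2+1 : ℕ), x.2)
      left_inv := fun x => by simp
      right_inv := fun x => by simp }
  have h2 := e.summable_iff.2 h1
  refine Summable.of_norm_bounded (h1.add h2) fun x => ?_
  have hn : ‖((x.2+1 : ℕ):ℂ)^(s:ℂ)‖ = ((x.2+1 : ℕ):ℝ)^s := by
    rw [Complex.norm_natCast_cpow_of_pos (by omega)]; simp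
  rw [norm_mul, norm_inv, hn]
  have := mul_le_mul_of_nonneg_left (bb_bound (x.2+1) p q hp hq x.1)
    (show 0 ≤ (((x.2+1 : ℕ):ℝ)^s)⁻¹ by positivity)
  refine this.trans (le_of_eq ?_)
  simp only [Function.comp_apply, e, Equiv.coe_fn_mk]
  ring

lemma zeta_hasSum (z : ℂ) (hz : 1 < z.re) :
    HasSum (fun n : ℕ => (((n+1 : ℕ):ℂ)^z)⁻¹) (riemannZeta z) := by
  rw [zeta_eq_tsum_one_div_nat_add_one_cpow hz]
  have h := (summable_nat_add_iff (f := fun n : ℕ => 1 / ((n:ℂ)^z)) 1).2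
    (Complex.summable_one_div_nat_cpow.2 hz)
  have := h.hasSum
  simpa using this

lemma hasSum_GG (p q r : ℕ) (hpr : p < r) (s : ℝ) (hs : 1 < s) :
    HasSum (fun n : ℕ => (((n+1 : ℕ):ℂ)^(s:ℂ))⁻¹ * (GG (fun i => Z i * ((n+1 : ℕ):ℂ)^i) p q
        * (((n+1 : ℕ):ℂ)^r)⁻¹))
      (∑ i ∈ antidiagonal p, Z i.1 * (Nat.multichoose q i.2 : ℂ) * riemannZeta ((s:ℂ) + r - i.1)) := by
  have : ∀ i ∈ antidiagonal p, HasSum (fun n : ℕ => Z i.1 * (Nat.multichoose q i.2 : ℂ) *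
      (((n+1 : ℕ):ℂ)^((s:ℂ) + r - i.1))⁻¹) (Z i.1 * (Nat.multichoose q i.2 : ℂ) * riemannZeta ((s:ℂ) + r - i.1)) := by
    intro i hi
    refine (zeta_hasSum _ ?_).mul_left _
    have : i.1 ≤ p := by have := mem_antidiagonal.1 hi; omega
    have : (i.1:ℝ) ≤ r := by exact_mod_cast (by omega : i.1 ≤ r)
    simp; linarith
  refine hasSum_of_eq (hasSum_sum this) (fun n => ?_) rfl
  have hn : ((n+1 : ℕ):ℂ) ≠ 0 := by exact_mod_cast (by omega : n + 1 ≠ 0)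
  simp only [GG, sum_mul, mul_sum]
  refine Finset.sum_congr rfl fun i _ => ?_
  rw [cpow_sub _ _ hn, cpow_add _ _ hn, cpow_natCast, cpow_natCast, inv_div, div_eq_mul_inv, mul_inv]
  ring

lemma sum_reindex (p q : ℕ) (hq : 0 < q) (s : ℂ) :
    (∑ i ∈ antidiagonal p, Z i.1 * (Nat.multichoose q i.2 : ℂ) * riemannZeta (s + ((p + q : ℕ):ℂ) - i.1))
    = 2 * ∑ k ∈ range (p / 2 + 1), riemannZeta (2 * k) *
          (Nat.choose (p + q - 1 - 2 * k) (q - 1) : ℂ) *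
          riemannZeta (s + p + q - 2 * k) := by
  rw [Finset.Nat.sum_antidiagonal_eq_sum_range_succ
    (fun i j => Z i * (Nat.multichoose q j : ℂ) * riemannZeta (s + ((p + q : ℕ):ℂ) - i)) p, mul_sum]
  symm
  rw [← Finset.sum_filter_of_ne (s := range p.succ) (p := fun i => Even i)]
  · refine Finset.sum_bij (fun k _ => 2 * k) ?_ ?_ ?_ ?_
    · intro k hk; simp at hk ⊢; omega
    · intro a _ b _ h; simpa using h
    · intro b hb
      simp at hb
      obtain ⟨hb, c, rfl⟩ := hb
      exact ⟨c, by simp; omega, by omega⟩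
    · intro k hk
      simp at hk
      have : Nat.multichoose q (p - 2*k) = Nat.choose (p + q - 1 - 2*k) (q-1) := by
        rw [Nat.multichoose_eq, ← Nat.choose_symm_of_eq_add (n := p + q - 1 - 2*k) (a := p - 2*k) (by omega)]
        congr 1; omega
      rw [this]
      simp only [Z, even_two_mul, if_true]
      push_cast
      rw [add_assoc s p q]
      ring
  · intro i _ h
    by_contra h'
    simp [Z, h'] at h

/-- Evaluation of `T(p,s,q;1,1)` in terms of the Riemann zeta function
(Corollary 3.4, first formula, of Komori–Matsumoto–Tsumura). -/
theorem T_eval_one_one (p q : ℕ) (hp : 0 < p) (hq : 0 < q) (s : ℝ) (hs : 1 < s) :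
    T p (s : ℂ) q 1 1 =
      2 * (-1 : ℂ) ^ p * ∑ k ∈ range (p / 2 + 1), riemannZeta (2 * k) *
          (Nat.choose (p + q - 1 - 2 * k) (q - 1) : ℂ) *
          riemannZeta ((s : ℂ) + p + q - 2 * k) +
      2 * (-1 : ℂ) ^ p * ∑ k ∈ range (q / 2 + 1), riemannZeta (2 * k) *
          (Nat.choose (p + q - 1 - 2 * k) (p - 1) : ℂ) *
          riemannZeta ((s : ℂ) + p + q - 2 * k) := by
  have h1 : T p (s:ℂ) q 1 1 = ∑' x : ℤ × ℕ, (((x.2+1 : ℕ):ℂ)^(s:ℂ))⁻¹ * bb (x.2+1) p q x.1 := by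
    unfold T
    refine tsum_congr fun x => ?_
    unfold bb
    have e : x.1 + ((x.2 + 1 : ℕ):ℤ) = x.1 + (x.2:ℤ) + 1 := by push_cast; ring
    rw [e, ← add_assoc]
    split_ifs
    · simp only [one_zpow, one_pow, one_mul, one_div, mul_inv]; ring
    · simp
  have hsum := summable_F p q hp hq s hs
  have hfib : ∀ n : ℕ, HasSum (fun l : ℤ => (((n+1 : ℕ):ℂ)^(s:ℂ))⁻¹ * bb (n+1) p q l)
      ((((n+1 : ℕ):ℂ)^(s:ℂ))⁻¹ * (AA (fun i => Z i * ((n+1 : ℕ):ℂ)^i) p q * (((n+1 : ℕ):ℂ)^(p+q))⁻¹)) :=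
    fun n => (hasSum_bb (n+1) (by omega) (p+q-2) p q (by omega)).mul_left _
  have h2 := ((Equiv.prodComm ℕ ℤ).hasSum_iff.2 hsum.hasSum).prod_fiberwise hfib
  have h3 := ((hasSum_GG p q (p+q) (by omega) s hs).add
    (hasSum_GG q p (p+q) (by omega) s hs)).mul_left ((-1:ℂ)^p)
  have h4 := h2.unique (hasSum_of_eq h3 (fun n => by simp only [AA]; ring) rfl)
  rw [h1, h4, sum_reindex p q hq, add_comm p q, sum_reindex q p hp, add_right_comm (s:ℂ) p q]
  ring
end
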